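/- Let A and B be C*-algebras. If x is an element of the operator space projective tensor product A ⊗̂ B such that R_φ(x) = 0 for every bounded linear functional φ ∈ A*, then x = 0; that is, the family of right slice maps {R_φ : φ ∈ A*} is total on A ⊗̂ B. -/

import Mathlib

open scoped TensorProduct
open Pointwise

universe u

noncomputable section

/-- A C⋆-norm on a complex `*`-algebra.  On a matrix algebra over a C⋆-algebra such a
norm is unique, namely the canonical C⋆-norm. -/
structure IsCStarNorm {M : Type*} [NonUnitalRing M] [StarRing M] [Module ℂ M]
    (N : M → ℝ) : Prop where
  add_le : ∀ x y, N (x + y) ≤ N x + N y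
  smul_eq : ∀ (c : ℂ) (x : M), N (c • x) = ‖c‖ * N x
  eq_zero_of : ∀ x, N x = 0 → x = 0
  mul_le : ∀ x y, N (x * y) ≤ N x * N y
  star_mul_self : ∀ x, N (star x * x) = N x * N x

/-- The operator space projective tensor norm `‖·‖_∧` on the algebraic tensor product
`A ⊗ B`, relative to given families of matrix norms on `A` and `B`:
`‖u‖_∧ = inf { ‖α‖ ‖v‖ ‖w‖ ‖β‖ : u = α (v ⊗ w) β }` where `v ∈ M_p(A)`, `w ∈ M_q(B)`,
`α ∈ M_{1,pq}(ℂ)` and `β ∈ M_{pq,1}(ℂ)` (row and column vectors carrying the Euclidean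
norm, which is their norm as scalar matrices). -/
noncomputable def osProjNorm {A B : Type u}
    [AddCommGroup A] [Module ℂ A] [AddCommGroup B] [Module ℂ B]
    (NA : ∀ p : ℕ, Matrix (Fin p) (Fin p) A → ℝ)
    (NB : ∀ q : ℕ, Matrix (Fin q) (Fin q) B → ℝ) (u : A ⊗[ℂ] B) : ℝ :=
  sInf { r : ℝ | ∃ (p q : ℕ) (α : Fin p × Fin q → ℂ) (v : Matrix (Fin p) (Fin p) A)
      (w : Matrix (Fin q) (Fin q) B) (β : Fin p × Fin q → ℂ),
      u = ∑ ik : Fin p × Fin q, ∑ jl : Fin p × Fin q,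
            (α ik * β jl) • (v ik.1 jl.1 ⊗ₜ[ℂ] w ik.2 jl.2) ∧
      r = Real.sqrt (∑ ik, ‖α ik‖ ^ 2) * NA p v * NB q w *
            Real.sqrt (∑ jl, ‖β jl‖ ^ 2) }

/-- `X` is a completion of the algebraic tensor product `A ⊗ B` with respect to the
norm `ν`, via the (necessarily isometric) dense embedding `ι`, and the multiplication and
involution of `X` are the canonical ones induced from `A` and `B`.  Applied with
`ν = osProjNorm NA NB` (for the canonical matrix C⋆-norms `NA`, `NB`) this characterizes
the Banach `*`-algebra `A ⊗̂ B` (the operator space projective tensor product) up to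
isometric `*`-isomorphism; applied with `ν = bsProjNorm` it characterizes the Banach
space projective tensor product `A ⊗_γ B`. -/
structure IsTensorCompletion {A B : Type u} [NonUnitalRing A] [StarRing A] [Module ℂ A]
    [NonUnitalRing B] [StarRing B] [Module ℂ B] (ν : A ⊗[ℂ] B → ℝ)
    (X : Type u) [NonUnitalNormedRing X] [StarRing X] [NormedSpace ℂ X] [CompleteSpace X]
    (ι : A ⊗[ℂ] B →ₗ[ℂ] X) : Prop where
  norm_eq : ∀ u, ‖ι u‖ = ν u
  dense : DenseRange ι
  mul_tmul : ∀ (a c : A) (b d : B),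
    ι (a ⊗ₜ[ℂ] b) * ι (c ⊗ₜ[ℂ] d) = ι ((a * c) ⊗ₜ[ℂ] (b * d))
  star_tmul : ∀ (a : A) (b : B), star (ι (a ⊗ₜ[ℂ] b)) = ι (star a ⊗ₜ[ℂ] star b)

/-- The product ideal `S ⊗̂ T`: the closure in `X` (a completion of `A ⊗ B`) of the span of
elementary tensors `a ⊗ b` with `a ∈ S`, `b ∈ T`. -/
def tensorIdeal {A B : Type u} [NonUnitalRing A] [StarRing A] [Module ℂ A]
    [NonUnitalRing B] [StarRing B] [Module ℂ B]
    {X : Type u} [NonUnitalNormedRing X] [StarRing X] [NormedSpace ℂ X] [CompleteSpace X]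
    (ι : A ⊗[ℂ] B →ₗ[ℂ] X) (S : Set A) (T : Set B) : Set X :=
  closure (ι '' (Submodule.span ℂ (Set.image2 (fun a b => a ⊗ₜ[ℂ] b) S T)))

/-- A closed prime (two-sided) ideal of a Banach algebra: a proper closed two-sided ideal `K`
such that whenever the product of two closed two-sided ideals is contained in `K`, one of them
is contained in `K`. -/
def IsClosedPrimeIdeal {Y : Type u} [NonUnitalNormedRing Y] (K : TwoSidedIdeal Y) : Prop :=
  IsClosed (K : Set Y) ∧ (K : Set Y) ≠ Set.univ ∧
    ∀ I J : TwoSidedIdeal Y, IsClosed (I : Set Y) → IsClosed (J : Set Y) →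
      (∀ x ∈ I, ∀ y ∈ J, x * y ∈ K) → (I : Set Y) ⊆ (K : Set Y) ∨ (J : Set Y) ⊆ (K : Set Y)

/-- An irreducible continuous `*`-representation of a Banach `*`-algebra `Y` on a complex
Hilbert space. -/
structure IrreducibleRepOn (Y : Type u)
    [NonUnitalNormedRing Y] [StarRing Y] [NormedSpace ℂ Y] where
  H : Type u
  [normH : NormedAddCommGroup H]
  [ipsH : InnerProductSpace ℂ H]
  [csH : CompleteSpace H]
  π : Y →⋆ₙₐ[ℂ] (H →L[ℂ] H)
  continuous : Continuous π
  nonzero : ∃ y, π y ≠ 0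
  irreducible : ∀ S : Submodule ℂ H, IsClosed (S : Set H) →
    (∀ y : Y, ∀ v ∈ S, π y v ∈ S) → S = ⊥ ∨ S = ⊤

/-- A primitive ideal: the kernel of an irreducible `*`-representation. -/
def IsPrimitiveIdeal {Y : Type u} [NonUnitalNormedRing Y] [StarRing Y] [NormedSpace ℂ Y]
    (K : TwoSidedIdeal Y) : Prop :=
  ∃ ρ : IrreducibleRepOn Y, ∀ y, y ∈ K ↔ ρ.π y = 0

/-- A subset `K` of a ring is modular (as an ideal) if there is a relative unit `e`
with `x * e - x ∈ K` and `e * x - x ∈ K` for every `x`. -/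
def IsModularIdealSet {Y : Type u} [NonUnitalRing Y] (K : Set Y) : Prop :=
  ∃ e : Y, ∀ x : Y, x * e - x ∈ K ∧ e * x - x ∈ K

/-- A maximal modular (two-sided) ideal: a modular ideal which is proper and maximal among
proper two-sided ideals. -/
def IsMaximalModularIdeal {Y : Type u} [NonUnitalRing Y] (K : TwoSidedIdeal Y) : Prop :=
  IsModularIdealSet (K : Set Y) ∧ (K : Set Y) ≠ Set.univ ∧
    ∀ L : TwoSidedIdeal Y, (K : Set Y) ⊆ (L : Set Y) →
      (L : Set Y) = (K : Set Y) ∨ (L : Set Y) = Set.univ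

/-- The operator norm of a `p × p` matrix of bounded operators on a Hilbert space `H`,
viewed as an operator on the `ℓ²`-direct sum `H ⊕ ⋯ ⊕ H`. -/
noncomputable def opMatrixNorm {H : Type u} [NormedAddCommGroup H] [InnerProductSpace ℂ H]
    {p : ℕ} (T : Matrix (Fin p) (Fin p) (H →L[ℂ] H)) : ℝ :=
  sSup { r : ℝ | ∃ x : Fin p → H, (∑ i, ‖x i‖ ^ 2) ≤ 1 ∧
      r = Real.sqrt (∑ i, ‖∑ j, (T i j) (x j)‖ ^ 2) }

/-- An operator algebra structure on a Banach algebra `Y`: a bicontinuous algebra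
homomorphism of `Y` into the bounded operators on some Hilbert space. -/
structure OperatorAlgebraEmbedding (Y : Type u) [NonUnitalNormedRing Y] [NormedSpace ℂ Y] where
  H : Type u
  [normH : NormedAddCommGroup H]
  [ipsH : InnerProductSpace ℂ H]
  [csH : CompleteSpace H]
  ρ : Y →ₙₐ[ℂ] (H →L[ℂ] H)
  c : ℝ
  C : ℝ
  c_pos : 0 < c
  lower : ∀ y, c * ‖y‖ ≤ ‖ρ y‖
  upper : ∀ y, ‖ρ y‖ ≤ C * ‖y‖

/-- The matrix norms on `Y` induced by an operator algebra embedding, giving `Y` its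
operator space structure: the norm of `v ∈ M_p(Y)` is the operator norm of the matrix
of operators obtained by applying the embedding entrywise. -/
noncomputable def OperatorAlgebraEmbedding.matrixNorm {Y : Type u}
    [NonUnitalNormedRing Y] [NormedSpace ℂ Y] (e : OperatorAlgebraEmbedding Y)
    (p : ℕ) (v : Matrix (Fin p) (Fin p) Y) : ℝ :=
  letI := e.normH; letI := e.ipsH
  opMatrixNorm (v.map e.ρ)

/-- The Banach space projective tensor norm `‖·‖_γ` on the algebraic tensor product. -/
noncomputable def bsProjNorm {A B : Type u} [NonUnitalNormedRing A] [NormedSpace ℂ A]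
    [NonUnitalNormedRing B] [NormedSpace ℂ B] (u : A ⊗[ℂ] B) : ℝ :=
  sInf { r : ℝ | ∃ (n : ℕ) (a : Fin n → A) (b : Fin n → B),
      u = ∑ i, a i ⊗ₜ[ℂ] b i ∧ r = ∑ i, ‖a i‖ * ‖b i‖ }

/-- A C⋆-algebra `A` is subhomogeneous if there is `n : ℕ` bounding the (finite)
dimensions of all its irreducible `*`-representations. -/
def IsSubhomogeneous (A : Type u) [NonUnitalCStarAlgebra A] : Prop :=
  ∃ n : ℕ, ∀ ρ : IrreducibleRepOn A,
    letI := ρ.normH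
    letI := ρ.ipsH
    FiniteDimensional ℂ ρ.H ∧ Module.finrank ℂ ρ.H ≤ n


set_option linter.unusedSectionVars false
set_option linter.unusedSimpArgs false
set_option linter.unusedVariables false

namespace SliceProof

section unitaries
variable {𝒜 : Type*} [CStarAlgebra 𝒜] [PartialOrder 𝒜] [StarOrderedRing 𝒜]

/-- cosine part of the unitary dilation. -/
def cosP (s : 𝒜) : 𝒜 := cfc (fun t : ℝ => Real.sqrt (1 - t ^ 2)) s

lemma spec_sq_le {s : 𝒜} (h1 : ‖s‖ ≤ 1) {t : ℝ} (ht : t ∈ spectrum ℝ s) : t ^ 2 ≤ 1 := by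
  have := spectrum.norm_le_norm_mul_of_mem ht
  have h2 : ‖t‖ ≤ 1 := by
    rcases subsingleton_or_nontrivial 𝒜 with h | h
    · simp [spectrum.of_subsingleton] at ht
    · simpa using (spectrum.norm_le_norm_of_mem ht).trans h1
  rw [Real.norm_eq_abs] at h2
  exact (sq_le_one_iff_abs_le_one t).2 h2

lemma cosP_sa (s : 𝒜) : IsSelfAdjoint (cosP s) := cfc_predicate _ s

lemma cosP_comm (s : 𝒜) (hs : IsSelfAdjoint s) : cosP s * s = s * cosP s := by
  have h := cfc_commute_cfc (fun t : ℝ => Real.sqrt (1 - t ^ 2)) (fun t => t) s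
  rw [cfc_id' ℝ s] at h
  exact h.eq

lemma cosP_sq (s : 𝒜) (hs : IsSelfAdjoint s) (h1 : ‖s‖ ≤ 1) :
    cosP s * cosP s + s * s = 1 := by
  have e2 : s * s = cfc (fun t : ℝ => t * t) s := by
    rw [cfc_mul (fun t : ℝ => t) (fun t => t) s, cfc_id' ℝ s]
  rw [e2, cosP, ← cfc_mul _ _ s (by fun_prop) (by fun_prop), ← cfc_add .., ← cfc_one ℝ s]
  apply cfc_congr
  intro t ht
  have := spec_sq_le h1 ht
  simp only [Pi.one_apply]
  rw [Real.mul_self_sqrt (by linarith)]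
  ring

lemma cosP_le_one (s : 𝒜) (hs : IsSelfAdjoint s) : cosP s ≤ 1 := by
  apply cfc_le_one
  intro t ht
  rw [Real.sqrt_le_one]
  nlinarith [sq_nonneg t]

lemma one_sub_cosP_le (s : 𝒜) (hs : IsSelfAdjoint s) (h1 : ‖s‖ ≤ 1) :
    1 - cosP s ≤ s * s := by
  have e2 : s * s = cfc (fun t : ℝ => t * t) s := by
    rw [cfc_mul (fun t : ℝ => t) (fun t => t) s, cfc_id' ℝ s]
  rw [e2, cosP, ← cfc_one ℝ s, ← cfc_sub ..]
  refine cfc_mono (f := fun t : ℝ => 1 - Real.sqrt (1 - t ^ 2)) (g := fun t : ℝ => t * t) ?_ (hf := ?_)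
  rotate_left
  · exact (continuousOn_const (c := (1:ℝ))).sub (by fun_prop)
  intro t ht
  have := spec_sq_le h1 ht
  have h3 : 0 ≤ 1 - t^2 := by linarith
  have : 1 - t^2 ≤ Real.sqrt (1 - t^2) := by
    apply Real.le_sqrt_of_sq_le
    nlinarith [sq_nonneg t]
  change 1 - Real.sqrt (1 - t^2) ≤ t * t
  nlinarith

lemma cosP_neg (s : 𝒜) (hs : IsSelfAdjoint s) : cosP (-s) = cosP s := by
  unfold cosP
  have := cfc_comp_neg (fun t : ℝ => Real.sqrt (1 - t ^ 2)) s
  simpa using this.symm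

lemma I_smul_I {M : Type*} [AddCommGroup M] [Module ℂ M] (x : M) :
    Complex.I • Complex.I • x = -x := by
  rw [smul_smul, Complex.I_mul_I, neg_one_smul]

lemma unit_mem (s : 𝒜) (hs : IsSelfAdjoint s) (h1 : ‖s‖ ≤ 1) :
    cosP s + Complex.I • s ∈ unitary 𝒜 := by
  have hc := cosP_sq s hs h1
  have hcomm := cosP_comm s hs
  have hst : star (cosP s + Complex.I • s) = cosP s - Complex.I • s := by
    rw [star_add, star_smul, hs.star_eq, (cosP_sa s).star_eq]
    simp [sub_eq_add_neg]
  rw [Unitary.mem_iff, hst]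
  constructor
  · rw [← hc]
    simp only [sub_mul, mul_add, mul_smul_comm, smul_mul_assoc, smul_add, smul_sub, I_smul_I, hcomm]
    abel
  · rw [← hc]
    simp only [mul_sub, add_mul, mul_smul_comm, smul_mul_assoc, smul_add, smul_sub, I_smul_I, hcomm]
    abel

/-- a real linear functional bounded by one on unitaries is bounded by one on s.a. contractions -/
lemma le_of_unitary (f : 𝒜 →ₗ[ℂ] ℂ) (r : ℝ) (hf : ∀ u ∈ unitary 𝒜, (f u).re ≤ r) (s : 𝒜)
    (hs : IsSelfAdjoint s) (h1 : ‖s‖ ≤ 1) : (f s).re ≤ r := by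
  have hI : (-Complex.I) • (1 : 𝒜) ∈ unitary 𝒜 := by
    rw [Unitary.mem_iff]; simp [smul_smul]
  have hI' : (Complex.I) • (1 : 𝒜) ∈ unitary 𝒜 := by
    rw [Unitary.mem_iff]; simp [smul_smul]
  have a1 := hf _ (mul_mem hI (unit_mem s hs h1))
  have a2 := hf _ (mul_mem hI' (unit_mem (-s) hs.neg (by simpa using h1)))
  rw [cosP_neg s hs] at a2
  simp [smul_smul, Complex.I_mul_I] at a1 a2
  linarith

end unitaries

/-- a bounded bilinear form whose maximum on unitaries is attained at `(1,1)` with value `1`. -/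
structure MaxForm {𝒜 ℬ : Type*} [CStarAlgebra 𝒜] [CStarAlgebra ℬ]
    (V : 𝒜 →ₗ[ℂ] ℬ →ₗ[ℂ] ℂ) : Prop where
  one : V 1 1 = 1
  le : ∀ u ∈ unitary 𝒜, ∀ v ∈ unitary ℬ, (V u v).re ≤ 1
  bd : ∃ K : ℝ, 0 ≤ K ∧ ∀ x y, ‖V x y‖ ≤ K * ‖x‖ * ‖y‖

section maxform
variable {𝒜 : Type*} [CStarAlgebra 𝒜] [PartialOrder 𝒜] [StarOrderedRing 𝒜]
variable {ℬ : Type*} [CStarAlgebra ℬ] [PartialOrder ℬ] [StarOrderedRing ℬ]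
variable {V : 𝒜 →ₗ[ℂ] ℬ →ₗ[ℂ] ℂ}

lemma MaxForm.flip (h : MaxForm V) : MaxForm V.flip where
  one := by simpa using h.one
  le := fun u hu v hv => by simpa using h.le v hv u hu
  bd := by
    obtain ⟨K, hK, h⟩ := h.bd
    exact ⟨K, hK, fun x y => by simpa [mul_assoc, mul_comm, mul_left_comm] using h y x⟩

lemma MaxForm.le_us (h : MaxForm V) {u : 𝒜} (hu : u ∈ unitary 𝒜) {y : ℬ}
    (hy : IsSelfAdjoint y) (hy1 : ‖y‖ ≤ 1) : (V u y).re ≤ 1 :=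
  le_of_unitary (V u) 1 (fun v hv => h.le u hu v hv) y hy hy1

/-- positivity of the marginal -/
lemma MaxForm.pos (h : MaxForm V) {p : 𝒜} (hp : 0 ≤ p) : 0 ≤ (V p 1).re := by
  have key : ∀ p : 𝒜, 0 ≤ p → p ≤ 1 → 0 ≤ (V p 1).re := by
    intro p hp hp1
    have hsa : IsSelfAdjoint (1 - p) := (IsSelfAdjoint.one _).sub hp.isSelfAdjoint
    have hn : ‖1 - p‖ ≤ 1 := by
      rw [CStarAlgebra.norm_le_one_iff_of_nonneg _ (sub_nonneg.2 hp1)]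
      simpa using hp
    have := le_of_unitary (V.flip 1) 1 (fun v hv => h.le v hv 1 (one_mem _)) _ hsa hn
    simp [h.one] at this
    exact this
  rcases eq_or_ne p 0 with h0 | h0
  · simp [h0]
  have hn : 0 < ‖p‖ := norm_pos_iff.2 h0
  have h1 := key (((‖p‖⁻¹ : ℝ)) • p) (smul_nonneg (by positivity) hp) (by
    rw [← CStarAlgebra.norm_le_one_iff_of_nonneg _ (smul_nonneg (by positivity) hp), norm_smul]
    simp [h0])
  have e : ((‖p‖⁻¹ : ℝ)) • p = ((‖p‖⁻¹ : ℝ) : ℂ) • p := (Complex.coe_smul _ _).symm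
  rw [e, map_smul, LinearMap.smul_apply, smul_eq_mul, Complex.re_ofReal_mul] at h1
  exact nonneg_of_mul_nonneg_right h1 (by positivity)

lemma MaxForm.mono (h : MaxForm V) {p q : 𝒜} (hp : p ≤ q) : (V p 1).re ≤ (V q 1).re := by
  have := h.pos (sub_nonneg.2 hp)
  simp at this
  exact this

lemma MaxForm.B3a (h : MaxForm V) {s : 𝒜} {t : ℬ} (hs : IsSelfAdjoint s) (hs1 : ‖s‖ ≤ 1)
    (ht : IsSelfAdjoint t) (ht1 : ‖t‖ ≤ 1) :
    -(V s t).re ≤ (V (1 - cosP s) 1).re + (V 1 (1 - cosP t)).re 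
      - (V (1 - cosP s) (1 - cosP t)).re := by
  have a1 := h.le _ (unit_mem s hs hs1) _ (unit_mem t ht ht1)
  have a2 := h.le _ (unit_mem (-s) hs.neg (by simpa using hs1)) _ 
    (unit_mem (-t) ht.neg (by simpa using ht1))
  rw [cosP_neg s hs, cosP_neg t ht] at a2
  simp [h.one] at a1 a2 ⊢
  linarith

lemma MaxForm.B3 (h : MaxForm V) {s : 𝒜} {t : ℬ} (hs : IsSelfAdjoint s) (hs1 : ‖s‖ ≤ 1)
    (ht : IsSelfAdjoint t) (ht1 : ‖t‖ ≤ 1) :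
    |(V s t).re| ≤ (V (1 - cosP s) 1).re + (V 1 (1 - cosP t)).re 
      - (V (1 - cosP s) (1 - cosP t)).re := by
  have a1 := h.B3a hs hs1 ht ht1
  have a2 := h.B3a hs.neg (by simpa using hs1) ht ht1
  rw [cosP_neg s hs] at a2
  rw [abs_le]
  constructor
  · linarith
  · simp at a1 a2 ⊢; linarith

lemma MaxForm.cos_le (h : MaxForm V) {s : 𝒜} (hs : IsSelfAdjoint s) (hs1 : ‖s‖ ≤ 1) :
    (V (1 - cosP s) 1).re ≤ (V (s * s) 1).re := h.mono (one_sub_cosP_le s hs hs1)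

lemma norm_one_sub_cosP {s : 𝒜} (hs : IsSelfAdjoint s) (hs1 : ‖s‖ ≤ 1) :
    ‖1 - cosP s‖ ≤ ‖s‖ ^ 2 := by
  have h1 := CStarAlgebra.norm_le_norm_of_nonneg_of_le (sub_nonneg.2 (cosP_le_one s hs))
    (one_sub_cosP_le s hs hs1)
  refine h1.trans ?_
  rw [pow_two]; exact norm_mul_le _ _

lemma MaxForm.B4 (h : MaxForm V) {s : 𝒜} {t : ℬ} (hs : IsSelfAdjoint s) (ht : IsSelfAdjoint t) :
    |(V s t).re| ≤ (V (s * s) 1).re + (V 1 (t * t)).re := by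
  obtain ⟨K, hK, hb⟩ := h.bd
  set D := K * ‖s‖ ^ 2 * ‖t‖ ^ 2 with hD
  have hD0 : 0 ≤ D := by positivity
  have key : ∀ r : ℝ, 0 < r → r * ‖s‖ ≤ 1 → r * ‖t‖ ≤ 1 →
      |(V s t).re| ≤ (V (s * s) 1).re + (V 1 (t * t)).re + r ^ 2 * D := by
    intro r hr h1 h2
    have s1 : IsSelfAdjoint ((r:ℂ) • s) := by
      rw [IsSelfAdjoint, star_smul, hs.star_eq]; simp
    have s2 : IsSelfAdjoint ((r:ℂ) • t) := by
      rw [IsSelfAdjoint, star_smul, ht.star_eq]; simp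
    have n1 : ‖(r:ℂ) • s‖ = r * ‖s‖ := by rw [norm_smul]; simp [abs_of_pos hr]
    have n2 : ‖(r:ℂ) • t‖ = r * ‖t‖ := by rw [norm_smul]; simp [abs_of_pos hr]
    have b3 := h.B3 s1 (n1.le.trans h1) s2 (n2.le.trans h2)
    have c1 := h.cos_le s1 (n1.le.trans h1)
    have c2 := h.flip.cos_le s2 (n2.le.trans h2)
    have d1 := norm_one_sub_cosP s1 (n1.le.trans h1)
    have d2 := norm_one_sub_cosP s2 (n2.le.trans h2)
    have b := hb (1 - cosP ((r:ℂ) • s)) (1 - cosP ((r:ℂ) • t))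
    have b' : ‖V (1 - cosP ((r:ℂ) • s)) (1 - cosP ((r:ℂ) • t))‖ ≤ r ^ 4 * D := by
      refine b.trans ?_
      calc _ ≤ K * ‖(r:ℂ) • s‖ ^ 2 * ‖(r:ℂ) • t‖ ^ 2 := by gcongr
        _ = _ := by rw [n1, n2, hD]; ring
    have b'' := (Complex.abs_re_le_norm _).trans b'
    rw [abs_le] at b''
    simp only [LinearMap.flip_apply] at c2
    have e1 : (V ((r:ℂ) • s) ((r:ℂ) • t)).re = r ^ 2 * (V s t).re := by
      simp only [map_smul, LinearMap.smul_apply, smul_eq_mul]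
      rw [← mul_assoc, ← Complex.ofReal_mul, Complex.re_ofReal_mul, pow_two]
    have e2 : (V ((r:ℂ) • s * (r:ℂ) • s) 1).re = r ^ 2 * (V (s * s) 1).re := by
      rw [smul_mul_smul_comm, ← Complex.ofReal_mul]
      simp only [map_smul, LinearMap.smul_apply, smul_eq_mul]
      rw [Complex.re_ofReal_mul, pow_two]
    have e3 : (V 1 ((r:ℂ) • t * (r:ℂ) • t)).re = r ^ 2 * (V 1 (t * t)).re := by
      rw [smul_mul_smul_comm, ← Complex.ofReal_mul]
      simp only [map_smul, LinearMap.smul_apply, smul_eq_mul]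
      rw [Complex.re_ofReal_mul, pow_two]
    rw [e1, abs_mul, abs_of_pos (by positivity : 0 < r ^ 2)] at b3
    rw [e2] at c1
    rw [e3] at c2
    have hr2 : 0 < r ^ 2 := by positivity
    have : r ^ 2 * |(V s t).re| ≤ r ^ 2 * ((V (s * s) 1).re + (V 1 (t * t)).re + r ^ 2 * D) := by
      nlinarith
    exact le_of_mul_le_mul_left this hr2
  have hlim : Filter.Tendsto (fun r : ℝ => (V (s * s) 1).re + (V 1 (t * t)).re + r ^ 2 * D)
      (nhdsWithin 0 (Set.Ioi 0)) (nhds ((V (s * s) 1).re + (V 1 (t * t)).re)) := by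
    have : Continuous (fun r : ℝ => (V (s * s) 1).re + (V 1 (t * t)).re + r ^ 2 * D) := by fun_prop
    have := this.tendsto 0
    simp only [ne_eq, OfNat.ofNat_ne_zero, not_false_eq_true, zero_pow, zero_mul, add_zero] at this
    exact this.mono_left nhdsWithin_le_nhds
  refine ge_of_tendsto hlim ?_
  have hM : (0:ℝ) < 1 / (‖s‖ + ‖t‖ + 1) := by positivity
  filter_upwards [Ioo_mem_nhdsGT hM] with r hr
  have : r * (‖s‖ + ‖t‖ + 1) ≤ 1 := by
    have := hr.2; rw [lt_div_iff₀ (by positivity)] at this; exact this.le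
  have h0 := hr.1
  have i1 : 0 ≤ r * ‖s‖ := by positivity
  have i2 : 0 ≤ r * ‖t‖ := by positivity
  exact key r hr.1 (by nlinarith) (by nlinarith)

/-- imaginary parts of marginals vanish -/
lemma MaxForm.B5 (h : MaxForm V) {s : 𝒜} (hs : IsSelfAdjoint s) : (V s 1).im = 0 := by
  have key : ∀ s : 𝒜, IsSelfAdjoint s → ∀ r : ℝ, 0 < r → r * ‖s‖ ≤ 1 →
      -(V s 1).im ≤ r * (V (s * s) 1).re := by
    intro s hs r hr h1
    have s1 : IsSelfAdjoint ((r:ℂ) • s) := by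
      rw [IsSelfAdjoint, star_smul, hs.star_eq]; simp
    have n1 : ‖(r:ℂ) • s‖ = r * ‖s‖ := by rw [norm_smul]; simp [abs_of_pos hr]
    have b3 := h.le _ (unit_mem _ s1 (n1.le.trans h1)) 1 (one_mem _)
    have c1 := h.cos_le s1 (n1.le.trans h1)
    have e2 : (V ((r:ℂ) • s * (r:ℂ) • s) 1).re = r ^ 2 * (V (s * s) 1).re := by
      rw [smul_mul_smul_comm, ← Complex.ofReal_mul]
      simp only [map_smul, LinearMap.smul_apply, smul_eq_mul]
      rw [Complex.re_ofReal_mul, pow_two]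
    rw [e2] at c1
    simp [h.one] at b3 c1
    have : r * (-(V s 1).im) ≤ r * (r * (V (s * s) 1).re) := by nlinarith
    exact le_of_mul_le_mul_left this hr
  have key2 : ∀ s : 𝒜, IsSelfAdjoint s → -(V s 1).im ≤ 0 := by
    intro s hs
    have hlim : Filter.Tendsto (fun r : ℝ => r * (V (s * s) 1).re)
        (nhdsWithin 0 (Set.Ioi 0)) (nhds 0) := by
      have : Continuous (fun r : ℝ => r * (V (s * s) 1).re) := by fun_prop
      have := this.tendsto 0
      simp only [zero_mul] at this
      exact this.mono_left nhdsWithin_le_nhds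
    refine ge_of_tendsto hlim ?_
    have hM : (0:ℝ) < 1 / (‖s‖ + 1) := by positivity
    filter_upwards [Ioo_mem_nhdsGT hM] with r hr
    have : r * (‖s‖ + 1) ≤ 1 := by
      have := hr.2; rw [lt_div_iff₀ (by positivity)] at this; exact this.le
    have h0 := hr.1
    exact key s hs r hr.1 (by nlinarith)
  have a1 := key2 s hs
  have a2 := key2 (-s) hs.neg
  simp at a1 a2
  linarith

lemma sq_le_self_of {q : 𝒜} (hq : 0 ≤ q) (hq1 : q ≤ 1) : q * q ≤ q := by
  have := CStarAlgebra.pow_antitone hq hq1 (show 1 ≤ 2 by norm_num)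
  simpa [pow_two] using this

lemma MaxForm.B6a (h : MaxForm V) {s : 𝒜} {q : ℬ} (hs : IsSelfAdjoint s) (hs1 : ‖s‖ ≤ 1)
    (hq : 0 ≤ q) (hq1 : q ≤ 1) :
    (V s q).im ≤ 2 * (V (s * s) 1).re + 2 * (V 1 q).re := by
  have hq' : ‖1 - q‖ ≤ 1 := by
    rw [CStarAlgebra.norm_le_one_iff_of_nonneg _ (sub_nonneg.2 hq1)]
    simpa using hq
  have a := h.le_us (unit_mem s hs hs1) ((IsSelfAdjoint.one _).sub hq.isSelfAdjoint) hq'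
  have b5 := h.B5 hs
  have hdsa : IsSelfAdjoint (1 - cosP s) := (IsSelfAdjoint.one _).sub (cosP_sa s)
  have b4 := h.B4 hdsa hq.isSelfAdjoint
  have d0 : 0 ≤ 1 - cosP s := sub_nonneg.2 (cosP_le_one s hs)
  have d1 : 1 - cosP s ≤ 1 := by
    simp only [sub_le_self_iff]
    apply cfc_nonneg
    intro t ht; positivity
  have m1 := h.mono (sq_le_self_of d0 d1)
  have m2 := h.flip.mono (sq_le_self_of hq hq1)
  have m3 := h.cos_le hs hs1
  rw [abs_le] at b4
  have b41 := b4.1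
  simp only [LinearMap.flip_apply] at m2
  have e : V (1 - cosP s) q = V 1 q - V (cosP s) q := by simp
  have e2 : V (1 - cosP s) 1 = 1 - V (cosP s) 1 := by simp [h.one]
  rw [e] at b41
  simp only [Complex.sub_re] at b41
  have e3 : (V (cosP s + Complex.I • s) (1 - q)).re = 
    (V (cosP s) 1).re - (V (cosP s) q).re - (V s 1).im + (V s q).im := by
    simp; ring
  rw [e3] at a
  have e4 : (V (1 - cosP s) 1).re = 1 - (V (cosP s) 1).re := by rw [e2]; simp
  linarith

/-- the key estimate for imaginary parts -/
lemma MaxForm.B7 (h : MaxForm V) {p : 𝒜} {q : ℬ} (hp : 0 ≤ p) (hp1 : p ≤ 1)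
    (hq : 0 ≤ q) (hq1 : q ≤ 1) {r : ℝ} (hr : 0 < r) (hr1 : r ≤ 1) :
    |(V p q).im| ≤ 2 * r * (V p 1).re + 2 * r⁻¹ * (V 1 q).re := by
  have np : ‖p‖ ≤ 1 := by rwa [CStarAlgebra.norm_le_one_iff_of_nonneg _ hp]
  have m2 := h.mono (sq_le_self_of hp hp1)
  have key : ∀ e : ℝ, |e| = 1 → e * (V p q).im ≤ 2 * r * (V p 1).re + 2 * r⁻¹ * (V 1 q).re := by
    intro e he
    have s1 : IsSelfAdjoint (((e * r : ℝ):ℂ) • p) := by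
      rw [IsSelfAdjoint, star_smul, hp.isSelfAdjoint.star_eq]; simp
    have n1 : ‖((e * r : ℝ):ℂ) • p‖ ≤ 1 := by 
      rw [norm_smul, Complex.norm_real, norm_mul, Real.norm_eq_abs, he, Real.norm_eq_abs, abs_of_pos hr]
      nlinarith [norm_nonneg p]
    have b := h.B6a s1 n1 hq hq1
    have e2 : (V (((e * r : ℝ):ℂ) • p * ((e * r : ℝ):ℂ) • p) 1).re = r ^ 2 * (V (p * p) 1).re := by
      rw [smul_mul_smul_comm, ← Complex.ofReal_mul]
      simp only [map_smul, LinearMap.smul_apply, smul_eq_mul]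
      have : e * e = 1 := by rw [← abs_mul_abs_self e, he]; norm_num
      rw [Complex.re_ofReal_mul]
      linear_combination r ^ 2 * (V (p * p) 1).re * this
    rw [e2, map_smul, LinearMap.smul_apply, smul_eq_mul, Complex.im_ofReal_mul] at b
    have : r * (e * (V p q).im) ≤ r * (2 * r * (V p 1).re + 2 * r⁻¹ * (V 1 q).re) := by
      have : r * (2 * r * (V p 1).re + 2 * r⁻¹ * (V 1 q).re) = 2 * (r ^ 2 * (V p 1).re) + 2 * (V 1 q).re := by
        field_simp
      rw [this]
      nlinarith [mul_le_mul_of_nonneg_left m2 (by positivity : 0 ≤ r ^ 2)]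
    exact le_of_mul_le_mul_left this hr
  have k1 := key 1 (by simp)
  have k2 := key (-1) (by simp)
  rw [abs_le]; constructor <;> linarith

lemma MaxForm.B7' (h : MaxForm V) {p : 𝒜} {q : ℬ} (hp : 0 ≤ p) (hp1 : p ≤ 1)
    (hq : 0 ≤ q) (hq1 : q ≤ 1) {r : ℝ} (hr : 0 < r) :
    |(V p q).im| ≤ 2 * r * (V p 1).re + 2 * r⁻¹ * (V 1 q).re := by
  rcases le_total r 1 with h1 | h1
  · exact h.B7 hp hp1 hq hq1 hr h1
  · have := h.flip.B7 hq hq1 hp hp1 (inv_pos.2 hr) (inv_le_one_of_one_le₀ h1)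
    simp only [LinearMap.flip_apply, inv_inv] at this
    linarith

end maxform

section rand

/-- Rademacher sums -/
def rad {n : ℕ} {M : Type*} [AddCommGroup M] (h : Fin n → M) (ω : Fin n → Bool) : M :=
  ∑ i, if ω i then h i else - h i

lemma rad_cons {n : ℕ} {M : Type*} [AddCommGroup M] (h : Fin (n+1) → M) (b : Bool)
    (ω : Fin n → Bool) :
    rad h (Fin.cons b ω) = (if b then h 0 else - h 0) + rad (fun i => h i.succ) ω := by
  simp [rad, Fin.sum_univ_succ]

lemma sum_cons {n : ℕ} {M : Type*} [AddCommGroup M] (f : (Fin (n+1) → Bool) → M) :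
    ∑ ω, f ω = ∑ ω : Fin n → Bool, (f (Fin.cons true ω) + f (Fin.cons false ω)) := by
  rw [← (Fin.consEquiv (fun _ => Bool)).sum_comp, Fintype.sum_prod_type]
  simp [Finset.sum_add_distrib, Fin.consEquiv]

lemma rad_bilin {M N P : Type*} [AddCommGroup M] [AddCommGroup N] [AddCommGroup P]
    (Φ : M → N → P) (hl : ∀ x y z, Φ (x + y) z = Φ x z + Φ y z)
    (hr : ∀ x y z, Φ x (y + z) = Φ x y + Φ x z) :
    ∀ (n : ℕ) (h : Fin n → M) (k : Fin n → N),
    ∑ ω, Φ (rad h ω) (rad k ω) = (2 ^ n : ℕ) • ∑ i, Φ (h i) (k i) := by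
  have nl : ∀ x z, Φ (-x) z = - Φ x z := fun x z =>
    map_neg (AddMonoidHom.mk' (fun x => Φ x z) (fun x y => hl x y z)) x
  have nr : ∀ x z, Φ x (-z) = - Φ x z := fun x z =>
    map_neg (AddMonoidHom.mk' (fun z => Φ x z) (fun y z => hr x y z)) z
  have z0 : ∀ z, Φ 0 z = 0 := fun z =>
    map_zero (AddMonoidHom.mk' (fun x => Φ x z) (fun x y => hl x y z))
  intro n
  induction n with
  | zero => intro h k; simp [rad, z0]
  | succ n ih =>
    intro h k
    rw [sum_cons, Fin.sum_univ_succ, smul_add]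
    have := ih (fun i => h i.succ) (fun i => k i.succ)
    rw [pow_succ, mul_smul, mul_smul, two_smul ℕ (∑ i : Fin n, _), smul_add, ← this]
    have e : ∀ ω : Fin n → Bool, Φ (rad h (Fin.cons true ω)) (rad k (Fin.cons true ω)) +
       Φ (rad h (Fin.cons false ω)) (rad k (Fin.cons false ω)) =
       (2:ℕ) • Φ (h 0) (k 0) + (Φ (rad (fun i => h i.succ) ω) (rad (fun i => k i.succ) ω)
        + Φ (rad (fun i => h i.succ) ω) (rad (fun i => k i.succ) ω)) := by
      intro ω
      simp only [rad_cons, hl, hr, nl, nr, if_true, Bool.false_eq_true, if_false]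
      abel
    simp only [e, Finset.sum_add_distrib]
    simp

lemma rad_sa {n : ℕ} {M : Type*} [AddCommGroup M] [StarAddMonoid M] (h : Fin n → M)
    (hs : ∀ i, IsSelfAdjoint (h i)) (ω) : IsSelfAdjoint (rad h ω) := by
  unfold rad
  apply isSelfAdjoint_sum
  intro i _
  split_ifs
  · exact hs i
  · exact (hs i).neg

variable {𝒜 : Type*} [CStarAlgebra 𝒜] [PartialOrder 𝒜] [StarOrderedRing 𝒜]

lemma four_le {g h : 𝒜} (hg : IsSelfAdjoint g) (hh : IsSelfAdjoint h) :
    (h + g) ^ 4 + (-h + g) ^ 4 ≤ (2:ℕ) • (g ^ 4 + (h ^ 4 + g * g * (h * h) + h * h * (g * g) +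
      (2:ℕ) • (g * (h * h) * g) + (2:ℕ) • (h * (g * g) * h))) := by
  rw [← sub_nonneg]
  have : (2:ℕ) • (g ^ 4 + (h ^ 4 + g * g * (h * h) + h * h * (g * g) +
      (2:ℕ) • (g * (h * h) * g) + (2:ℕ) • (h * (g * g) * h))) - ((h + g) ^ 4 + (-h + g) ^ 4) =
      (2:ℕ) • (star (g * h - h * g) * (g * h - h * g)) := by
    simp only [star_sub, star_mul, hg.star_eq, hh.star_eq]
    simp only [two_smul]
    noncomm_ring
  rw [this]
  exact nsmul_nonneg (star_mul_self_nonneg _) 2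

lemma rad_four : ∀ (n : ℕ) (h : Fin n → 𝒜) (hs : ∀ i, IsSelfAdjoint (h i)),
    ∑ ω, (rad h ω) ^ 4 ≤ (2 ^ n : ℕ) • ((∑ i, h i * h i) * (∑ i, h i * h i) +
      (2:ℕ) • ∑ j, h j * (∑ i, h i * h i) * h j) := by
  intro n
  induction n with
  | zero => intro h hs; simp [rad]
  | succ n ih =>
    intro h hs
    set k : Fin n → 𝒜 := fun i => h i.succ with hk
    have hks : ∀ i, IsSelfAdjoint (k i) := fun i => hs _
    set x := h 0 with hx
    have I := ih k hks
    set P := ∑ i, k i * k i with hP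
    have b1 := rad_bilin (fun a b : 𝒜 => a * b) (by intros; noncomm_ring) 
      (by intros; noncomm_ring) n k k
    have b2 := rad_bilin (fun a b : 𝒜 => a * (x * x) * b) (by intros; noncomm_ring) 
      (by intros; noncomm_ring) n k k
    have step : ∑ ω, (rad h ω) ^ 4 ≤ ∑ ω : Fin n → Bool, 
      (2:ℕ) • ((rad k ω) ^ 4 + (x ^ 4 + (rad k ω) * (rad k ω) * (x * x) + x * x * ((rad k ω) * (rad k ω)) +
      (2:ℕ) • ((rad k ω) * (x * x) * (rad k ω)) + (2:ℕ) • (x * ((rad k ω) * (rad k ω)) * x))) := by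
      rw [sum_cons]
      apply Finset.sum_le_sum
      intro ω _
      have := four_le (rad_sa k hks ω) (hs 0)
      simpa [rad_cons] using this
    refine step.trans ?_
    rw [← Finset.smul_sum]
    simp only [Finset.sum_add_distrib, ← Finset.smul_sum, ← Finset.sum_mul, ← Finset.mul_sum, b1, b2,
      ← hP]
    simp only [Finset.sum_const, Finset.card_univ, Fintype.card_fun, Fintype.card_bool, Fintype.card_fin]
    rw [Fin.sum_univ_succ, Fin.sum_univ_succ]
    change _ ≤ (2 ^ (n+1) : ℕ) • ((x * x + P) * (x * x + P) + (2:ℕ) • (x * (x * x + P) * x + 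
      ∑ i, k i * (x * x + P) * k i))
    have e1 : ∑ i, k i * (x * x + P) * k i = ∑ i, k i * (x * x) * k i + ∑ i, k i * P * k i := by
      rw [← Finset.sum_add_distrib]; congr 1; ext i; noncomm_ring
    rw [e1, show (2 ^ (n+1) : ℕ) = 2 * 2 ^ n by ring, mul_smul 2 (2 ^ n)]
    set Q1 := ∑ i, k i * (x * x) * k i
    set Q2 := ∑ i, k i * P * k i
    have hx4 : 0 ≤ x ^ 4 := by
      have : x ^ 4 = star (x * x) * (x * x) := by
        rw [star_mul, (hs 0).star_eq]; noncomm_ring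
      rw [this]; exact star_mul_self_nonneg _
    refine nsmul_le_nsmul_right ?_ 2
    have : (2 ^ n : ℕ) • ((x * x + P) * (x * x + P) + (2:ℕ) • (x * (x * x + P) * x + (Q1 + Q2))) = 
      (2 ^ n : ℕ) • (P * P + (2:ℕ) • Q2) + ((2 ^ n : ℕ) • x ^ 4 + ((2^n : ℕ) • P) * (x * x) + (x * x) * ((2^n : ℕ) • P)
        + (2:ℕ) • (2^n : ℕ) • Q1 + (2:ℕ) • (x * ((2^n : ℕ) • P) * x)) + (2 ^ n : ℕ) • (2:ℕ) • x ^ 4 := by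
      simp only [smul_mul_assoc, mul_smul_comm, smul_comm (2:ℕ) (2^n : ℕ), ← smul_add]
      congr 1
      simp only [two_smul]
      noncomm_ring
    rw [this]
    refine le_add_of_le_of_nonneg (add_le_add I ?_) (nsmul_nonneg (nsmul_nonneg hx4 _) _)
    rfl
    
end rand


section dyadic

/-- truncation -/
def mk (k : ℕ) (x : ℝ) : ℝ := min (max x 0) (2 ^ k)

/-- dyadic layers -/
def gk : ℕ → ℝ → ℝ
  | 0, x => mk 0 x
  | k+1, x => (mk (k+1) x - mk k x) / 2 ^ (k+1)

lemma mk_cont (k : ℕ) : Continuous (mk k) := by unfold mk; fun_prop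

lemma gk_cont (k : ℕ) : Continuous (gk k) := by
  cases k with
  | zero => exact mk_cont 0
  | succ k => 
    have h1 := mk_cont k
    have h2 := mk_cont (k+1)
    change Continuous (fun x => (mk (k+1) x - mk k x) / 2 ^ (k+1))
    fun_prop

lemma mk_nonneg (k x) : 0 ≤ mk k x := by unfold mk; positivity

lemma mk_mono (k x) : mk k x ≤ mk (k+1) x := by
  unfold mk
  apply min_le_min_left
  exact pow_le_pow_right₀ (by norm_num) (by omega)

lemma gk_nonneg (k x) : 0 ≤ gk k x := by
  cases k with
  | zero => exact mk_nonneg 0 x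
  | succ k => 
    have := mk_mono k x
    exact div_nonneg (by linarith) (by positivity)

lemma gk_le_one (k x) : gk k x ≤ 1 := by
  cases k with
  | zero => change mk 0 x ≤ 1; unfold mk; simp
  | succ k => 
    change (mk (k+1) x - mk k x) / 2 ^ (k+1) ≤ 1
    have : mk (k+1) x ≤ 2 ^ (k+1) := min_le_right _ _
    have := mk_nonneg k x
    rw [div_le_one (by positivity)]
    linarith

lemma gk_le (k x) : gk k x ≤ 16 * (1/16) ^ k * (1 + x ^ 4) := by
  have hx4 : 0 ≤ x ^ 4 := by positivity
  cases k with
  | zero => 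
    have := gk_le_one 0 x
    simp; linarith
  | succ k => 
    by_cases hx : x ≤ 2 ^ k
    · have : gk (k+1) x = 0 := by
        change (mk (k+1) x - mk k x) / 2 ^ (k+1) = 0
        have h1 : mk k x = max x 0 := min_eq_left (by simp [hx])
        have h2 : mk (k+1) x = max x 0 := min_eq_left (by
          have : (2:ℝ) ^ k ≤ 2 ^ (k+1) := pow_le_pow_right₀ (by norm_num) (by omega)
          simp; linarith)
        rw [h1, h2]; simp
      rw [this]; positivity
    · have := gk_le_one (k+1) x
      refine this.trans ?_
      push Not at hx
      have h4 : ((2:ℝ) ^ k) ^ 4 ≤ x ^ 4 := pow_le_pow_left₀ (by positivity) hx.le 4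
      have e : ((2:ℝ) ^ k) ^ 4 = 16 ^ k := by rw [← pow_mul, mul_comm, pow_mul]; norm_num
      rw [e] at h4
      have e2 : (16:ℝ) * (1/16) ^ (k+1) * (16 ^ k) = 1 := by
        rw [pow_succ, one_div, inv_pow]; field_simp
      calc (1:ℝ) = 16 * (1/16) ^ (k+1) * (16 ^ k) := e2.symm
        _ ≤ 16 * (1/16) ^ (k+1) * (1 + x ^ 4) := by gcongr; linarith

lemma gk_sum (L : ℕ) (x) : ∑ k ∈ Finset.range (L+1), 2 ^ k * gk k x = mk L x := by
  induction L with
  | zero => simp [gk]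
  | succ L ih => 
    rw [Finset.sum_range_succ, ih]
    change mk L x + 2 ^ (L+1) * ((mk (L+1) x - mk L x) / 2 ^ (L+1)) = _
    field_simp; ring

lemma gk_sum_sub (L : ℕ) (x : ℝ) (hx : |x| ≤ 2 ^ L) : 
    ∑ k ∈ Finset.range (L+1), 2 ^ k * (gk k x - gk k (-x)) = x := by
  simp only [mul_sub, Finset.sum_sub_distrib, gk_sum]
  rw [abs_le] at hx
  have : (0:ℝ) < 2 ^ L := by positivity
  unfold mk
  rw [min_eq_left (by simp; linarith), min_eq_left (by simp; linarith)]
  rcases le_total x 0 with h | h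
  · rw [max_eq_right h, max_eq_left (by linarith)]; ring
  · rw [max_eq_left h, max_eq_right (by linarith)]; ring

variable {𝒜 : Type*} [CStarAlgebra 𝒜] [PartialOrder 𝒜] [StarOrderedRing 𝒜]

/-- dyadic layer of a self-adjoint element -/
def GK (k : ℕ) (x : 𝒜) : 𝒜 := cfc (gk k) x

lemma GK_nonneg (k : ℕ) (x : 𝒜) : 0 ≤ GK k x := cfc_nonneg (fun t _ => gk_nonneg k t)

lemma GK_le_one (k : ℕ) (x : 𝒜) : GK k x ≤ 1 := by
  apply cfc_le_one
  intro t _; exact gk_le_one k t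

lemma GK_le (k : ℕ) (x : 𝒜) (hx : IsSelfAdjoint x) : 
    GK k x ≤ (16 * (1/16) ^ k : ℝ) • (1 + x ^ 4) := by
  have e : (16 * (1/16) ^ k : ℝ) • (1 + x ^ 4) = cfc (fun t : ℝ => (16 * (1/16) ^ k : ℝ) * (1 + t ^ 4)) x := by
    rw [cfc_const_mul .., cfc_add .., cfc_pow .., cfc_id' ℝ x, cfc_const_one ℝ x]
  rw [e]
  refine cfc_mono ?_ (hf := (gk_cont k).continuousOn)
  intro t _; exact gk_le k t

lemma GK_sum (L : ℕ) (x : 𝒜) (hx : IsSelfAdjoint x) (hL : ‖x‖ ≤ 2 ^ L) :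
    ∑ k ∈ Finset.range (L+1), (2 ^ k : ℝ) • (GK k x - GK k (-x)) = x := by
  have hc := gk_cont
  have e : ∀ k, (2 ^ k : ℝ) • (GK k x - GK k (-x)) = 
      cfc (fun t => (2 ^ k : ℝ) * (gk k t - gk k (-t))) x := by
    intro k
    have h1 : ContinuousOn (gk k) (spectrum ℝ x) := (hc k).continuousOn
    have h2 : ContinuousOn (fun t => gk k (-t)) (spectrum ℝ x) := by
      have := hc k
      exact (this.comp continuous_neg).continuousOn
    rw [cfc_const_mul (2 ^ k : ℝ) (fun t => gk k t - gk k (-t)) x (h1.sub h2), 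
      cfc_sub (gk k) (fun t => gk k (-t)) x h1 h2]
    congr 2
    unfold GK
    exact (cfc_comp_neg (gk k) x (hf := (hc k).continuousOn)).symm
  simp only [e]
  rw [← cfc_sum (fun k t => (2 ^ k : ℝ) * (gk k t - gk k (-t))) x _ (fun k _ => by
    have := hc k
    have h2 : Continuous (fun t => gk k (-t)) := this.comp continuous_neg
    exact (continuous_const.mul (this.sub h2)).continuousOn)]
  conv_rhs => rw [← cfc_id' ℝ x]
  apply cfc_congr
  intro t ht
  simp only [Finset.sum_apply]
  apply gk_sum_sub
  rcases subsingleton_or_nontrivial 𝒜 with h | h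
  · simp [spectrum.of_subsingleton] at ht
  · simpa using (spectrum.norm_le_norm_of_mem ht).trans hL

end dyadic

section imag
variable {𝒜 : Type*} [CStarAlgebra 𝒜] [PartialOrder 𝒜] [StarOrderedRing 𝒜]
variable {ℬ : Type*} [CStarAlgebra ℬ] [PartialOrder ℬ] [StarOrderedRing ℬ]
variable {V : 𝒜 →ₗ[ℂ] ℬ →ₗ[ℂ] ℂ}

lemma re_smul (V : 𝒜 →ₗ[ℂ] ℬ →ₗ[ℂ] ℂ) (r : ℝ) (x : 𝒜) (y : ℬ) : V (r • x) y = r * V x y := by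
  rw [← Complex.coe_smul, map_smul, LinearMap.smul_apply, smul_eq_mul]

lemma re_smul' (V : 𝒜 →ₗ[ℂ] ℬ →ₗ[ℂ] ℂ) (r : ℝ) (x : 𝒜) (y : ℬ) : V x (r • y) = r * V x y := by
  rw [← Complex.coe_smul, map_smul, smul_eq_mul]

lemma MaxForm.GK_le (h : MaxForm V) (k : ℕ) {x : 𝒜} (hx : IsSelfAdjoint x) :
    (V (GK k x) 1).re ≤ 16 * (1/16) ^ k * (1 + (V (x ^ 4) 1).re) := by
  have := h.mono (SliceProof.GK_le k x hx)
  rw [re_smul, Complex.re_ofReal_mul] at this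
  simpa [h.one] using this

lemma MaxForm.imGK (h : MaxForm V) (a b : ℕ) {x : 𝒜} {y : ℬ} (hx : IsSelfAdjoint x) (hy : IsSelfAdjoint y) :
    |(V (GK a x) (GK b y)).im| ≤ 
      32 * (1/4) ^ a * (1/4) ^ b * (2 + (V (x ^ 4) 1).re + (V 1 (y ^ 4)).re) := by
  have h7 := h.B7' (GK_nonneg a x) (GK_le_one a x) (GK_nonneg b y) (GK_le_one b y) 
    (r := 4 ^ a * (1/4) ^ b) (by positivity)
  have h1 := h.GK_le a hx
  have h2 := h.flip.GK_le b hy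
  simp only [LinearMap.flip_apply] at h2
  refine h7.trans ?_
  have e1 : (4:ℝ) ^ a * (1/16) ^ a = (1/4) ^ a := by rw [← mul_pow]; norm_num
  have e2 : (4:ℝ) ^ b * (1/16) ^ b = (1/4) ^ b := by rw [← mul_pow]; norm_num
  have e3 : ((4:ℝ) ^ a * (1/4) ^ b)⁻¹ = (1/4) ^ a * 4 ^ b := by
    rw [mul_inv, ← inv_pow, ← inv_pow]; norm_num
  rw [e3]
  have i1 := mul_le_mul_of_nonneg_left h1 (by positivity : (0:ℝ) ≤ 2 * (4 ^ a * (1/4) ^ b))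
  have i2 := mul_le_mul_of_nonneg_left h2 (by positivity : (0:ℝ) ≤ 2 * ((1/4) ^ a * 4 ^ b))
  refine (add_le_add i1 i2).trans (le_of_eq ?_)
  have r1 : 2 * (4 ^ a * (1/4:ℝ) ^ b) * (16 * (1/16) ^ a * (1 + (V (x ^ 4) 1).re)) =
    32 * (4 ^ a * (1/16) ^ a) * (1/4) ^ b * (1 + (V (x ^ 4) 1).re) := by ring
  have r2 : 2 * ((1/4:ℝ) ^ a * 4 ^ b) * (16 * (1/16) ^ b * (1 + (V 1 (y ^ 4)).re)) =
    32 * (4 ^ b * (1/16) ^ b) * (1/4) ^ a * (1 + (V 1 (y ^ 4)).re) := by ring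
  rw [r1, r2, e1, e2]; ring

lemma sum_half (L : ℕ) : ∑ k ∈ Finset.range (L+1), (1/2:ℝ) ^ k ≤ 2 := by
  have := geom_sum_eq (by norm_num : (1/2:ℝ) ≠ 1) (L+1)
  rw [this]
  have : (0:ℝ) < (1/2) ^ (L+1) := by positivity
  rw [div_le_iff_of_neg (by norm_num)]
  linarith

lemma pow4_nonneg {x : 𝒜} (hx : IsSelfAdjoint x) : 0 ≤ x ^ 4 := by
  have : x ^ 4 = star (x * x) * (x * x) := by
    rw [star_mul, hx.star_eq]; noncomm_ring
  rw [this]; exact star_mul_self_nonneg _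

lemma MaxForm.im_le (h : MaxForm V) {x : 𝒜} {y : ℬ} (hx : IsSelfAdjoint x) (hy : IsSelfAdjoint y) :
    |(V x y).im| ≤ 512 * (2 + (V (x ^ 4) 1).re + (V 1 (y ^ 4)).re) := by
  obtain ⟨L, hL⟩ : ∃ L : ℕ, ‖x‖ + ‖y‖ ≤ 2 ^ L := by
    obtain ⟨L, hL⟩ := pow_unbounded_of_one_lt (‖x‖ + ‖y‖) (by norm_num : (1:ℝ) < 2)
    exact ⟨L, hL.le⟩
  set T := 2 + (V (x ^ 4) 1).re + (V 1 (y ^ 4)).re with hT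
  have hT0 : 0 ≤ T := by
    have h1 := h.pos (pow4_nonneg hx)
    have h2 := h.flip.pos (pow4_nonneg hy)
    simp only [LinearMap.flip_apply] at h2
    linarith
  have ex := GK_sum L x hx (by linarith [norm_nonneg y])
  have ey := GK_sum L y hy (by linarith [norm_nonneg x])
  have e : (V x y).im = ∑ a ∈ Finset.range (L+1), ∑ b ∈ Finset.range (L+1), 
      2 ^ a * (2 ^ b * (V (GK a x - GK a (-x)) (GK b y - GK b (-y))).im) := by
    conv_lhs => rw [← ex, ← ey]
    rw [map_sum V, LinearMap.sum_apply, Complex.im_sum]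
    refine Finset.sum_congr rfl fun a _ => ?_
    rw [map_sum, Complex.im_sum]
    refine Finset.sum_congr rfl fun b _ => ?_
    rw [re_smul, re_smul', Complex.im_ofReal_mul, Complex.im_ofReal_mul]
  rw [e]
  have bnd : ∀ a b : ℕ, |2 ^ a * (2 ^ b * (V (GK a x - GK a (-x)) (GK b y - GK b (-y))).im)| ≤
      (1/2) ^ a * ((1/2) ^ b * (128 * T)) := by
    intro a b
    have h1 := h.imGK a b hx hy
    have h2 := h.imGK a b hx.neg hy
    have h3 := h.imGK a b hx hy.neg
    have h4 := h.imGK a b hx.neg hy.neg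
    rw [Even.neg_pow (by decide)] at h2 
    rw [Even.neg_pow (by decide)] at h3
    rw [Even.neg_pow (by decide), Even.neg_pow (by decide)] at h4
    rw [← hT] at h1 h2 h3 h4
    have : |(V (GK a x - GK a (-x)) (GK b y - GK b (-y))).im| ≤ 128 * (1/4) ^ a * (1/4) ^ b * T := by
      have : (V (GK a x - GK a (-x)) (GK b y - GK b (-y))).im = (V (GK a x) (GK b y)).im
        - (V (GK a (-x)) (GK b y)).im - (V (GK a x) (GK b (-y))).im + (V (GK a (-x)) (GK b (-y))).im := by
        simp; ring
      rw [this]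
      rw [abs_le] at *
      constructor <;> linarith [h1.1, h1.2, h2.1, h2.2, h3.1, h3.2, h4.1, h4.2]
    rw [abs_mul, abs_mul, abs_of_pos (by positivity : (0:ℝ) < 2 ^ a), abs_of_pos (by positivity : (0:ℝ) < 2 ^ b)]
    calc _ ≤ (2:ℝ) ^ a * (2 ^ b * (128 * (1/4) ^ a * (1/4) ^ b * T)) := by gcongr
      _ = (2 * (1/4)) ^ a * ((2 * (1/4)) ^ b * (128 * T)) := by rw [mul_pow, mul_pow]; ring
      _ = _ := by norm_num
  calc _ ≤ ∑ a ∈ Finset.range (L+1), ∑ b ∈ Finset.range (L+1), (1/2:ℝ) ^ a * ((1/2) ^ b * (128 * T)) := by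
        refine (Finset.abs_sum_le_sum_abs _ _).trans (Finset.sum_le_sum fun a _ => ?_)
        exact (Finset.abs_sum_le_sum_abs _ _).trans (Finset.sum_le_sum fun b _ => bnd a b)
    _ = (∑ a ∈ Finset.range (L+1), (1/2:ℝ) ^ a) * ((∑ a ∈ Finset.range (L+1), (1/2:ℝ) ^ a) * (128 * T)) := by
        rw [Finset.sum_mul]
        refine Finset.sum_congr rfl fun a _ => ?_
        rw [Finset.sum_mul, Finset.mul_sum]
    _ ≤ 2 * (2 * (128 * T)) := by
        have := sum_half L
        gcongr
    _ = _ := by ring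

/-- `E H⁴ ≤ 3` in a marginal -/
lemma MaxForm.four (h : MaxForm V) {n : ℕ} (x : Fin n → 𝒜) (hx : ∀ i, IsSelfAdjoint (x i))
    (hP : ‖∑ i, x i * x i‖ ≤ 1) : ∑ ω, (V (rad x ω ^ 4) 1).re ≤ 2 ^ n * 3 := by
  have h4 := h.mono (rad_four n x hx)
  set P := ∑ i, x i * x i with hPd
  have xx : ∀ i, 0 ≤ x i * x i := fun i => by
    have := star_mul_self_nonneg (x i); rwa [(hx i).star_eq] at this
  have P0 : 0 ≤ P := Finset.sum_nonneg fun i _ => xx i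
  have P1 : P ≤ 1 := (CStarAlgebra.norm_le_one_iff_of_nonneg _ P0).1 hP
  have Q : ∑ j, x j * P * x j ≤ P := by
    refine Finset.sum_le_sum fun j _ => ?_
    have := (hx j).conjugate_le_conjugate P1
    simpa using this
  have fin : P * P + (2:ℕ) • ∑ j, x j * P * x j ≤ (3:ℝ) • 1 := by
    have h1 := (sq_le_self_of P0 P1).trans P1
    have h2 : (2:ℕ) • ∑ j, x j * P * x j ≤ (2:ℕ) • 1 := nsmul_le_nsmul_right (Q.trans P1) 2
    refine (add_le_add h1 h2).trans (le_of_eq ?_)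
    rw [show (3:ℝ) = 1 + 1 + 1 by norm_num, add_smul, add_smul, one_smul, two_smul, add_assoc]
  have m := h.mono fin
  rw [re_smul, h.one] at m
  have e1 : ∑ ω, (V (rad x ω ^ 4) 1).re = (V (∑ ω, rad x ω ^ 4) 1).re := by
    simp only [map_sum, LinearMap.sum_apply, Complex.re_sum]
  rw [e1]
  refine h4.trans ?_
  rw [← Nat.cast_smul_eq_nsmul ℝ, re_smul, Complex.re_ofReal_mul]
  push_cast
  refine mul_le_mul_of_nonneg_left ?_ (by positivity)
  refine m.trans (le_of_eq ?_)
  rw [Complex.re_ofReal_mul]; simp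

lemma phi_le_one (h : MaxForm V) {P : 𝒜} (P0 : 0 ≤ P) (hP : ‖P‖ ≤ 1) : (V P 1).re ≤ 1 := by
  have P1 : P ≤ 1 := (CStarAlgebra.norm_le_one_iff_of_nonneg _ P0).1 hP
  have := h.mono P1
  simpa [h.one] using this

theorem MaxForm.sa_bound (h : MaxForm V) {n : ℕ} (x : Fin n → 𝒜) (hx : ∀ i, IsSelfAdjoint (x i))
    (hP : ‖∑ i, x i * x i‖ ≤ 1) (y : Fin n → ℬ) (hy : ∀ i, IsSelfAdjoint (y i))
    (hQ : ‖∑ i, y i * y i‖ ≤ 1) : ‖∑ i, V (x i) (y i)‖ ≤ 5000 := by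
  have him : |(∑ i, V (x i) (y i)).im| ≤ 4096 := by
    have e := rad_bilin (fun a b => (V a b).im) (by intros; simp) (by intros; simp) n x y
    have f1 := h.four x hx hP
    have f2 := h.flip.four y hy hQ
    simp only [LinearMap.flip_apply] at f2
    have : |∑ ω, (V (rad x ω) (rad y ω)).im| ≤ 
        ∑ ω, 512 * (2 + (V (rad x ω ^ 4) 1).re + (V 1 (rad y ω ^ 4)).re) :=
      (Finset.abs_sum_le_sum_abs _ _).trans (Finset.sum_le_sum fun ω _ => 
        h.im_le (rad_sa x hx ω) (rad_sa y hy ω))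
    rw [e, ← Finset.mul_sum, Finset.sum_add_distrib, Finset.sum_add_distrib] at this
    simp only [Finset.sum_const, Finset.card_univ, Fintype.card_fun, Fintype.card_bool, 
      Fintype.card_fin, nsmul_eq_mul, abs_mul] at this
    push_cast at this
    rw [Complex.im_sum]
    rw [abs_of_pos (by positivity : (0:ℝ) < 2 ^ n)] at this
    have p : (0:ℝ) < 2 ^ n := by positivity
    have : (2:ℝ) ^ n * |∑ i, (V (x i) (y i)).im| ≤ 2 ^ n * 4096 := by linarith
    exact le_of_mul_le_mul_left this p
  have hre : |(∑ i, V (x i) (y i)).re| ≤ 2 := by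
    rw [Complex.re_sum]
    have : |∑ i, (V (x i) (y i)).re| ≤ ∑ i, ((V (x i * x i) 1).re + (V 1 (y i * y i)).re) :=
      (Finset.abs_sum_le_sum_abs _ _).trans (Finset.sum_le_sum fun i _ => h.B4 (hx i) (hy i))
    refine this.trans ?_
    have xx : 0 ≤ ∑ i, x i * x i := Finset.sum_nonneg fun i _ => by
      have := star_mul_self_nonneg (x i); rwa [(hx i).star_eq] at this
    have yy : 0 ≤ ∑ i, y i * y i := Finset.sum_nonneg fun i _ => by
      have := star_mul_self_nonneg (y i); rwa [(hy i).star_eq] at this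
    have p1 := phi_le_one h xx hP
    have p2 := phi_le_one h.flip yy hQ
    simp only [map_sum, LinearMap.sum_apply, Complex.re_sum, LinearMap.flip_apply] at p1 p2
    rw [Finset.sum_add_distrib]; linarith
  refine (Complex.norm_le_abs_re_add_abs_im _).trans ?_
  linarith

end imag



section full
variable {𝒜 : Type*} [CStarAlgebra 𝒜] [PartialOrder 𝒜] [StarOrderedRing 𝒜]
variable {ℬ : Type*} [CStarAlgebra ℬ] [PartialOrder ℬ] [StarOrderedRing ℬ]
variable {V : 𝒜 →ₗ[ℂ] ℬ →ₗ[ℂ] ℂ}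

open ComplexStarModule

lemma re_im_parts {n : ℕ} (a : Fin n → 𝒜) (h1 : ‖∑ i, a i * star (a i)‖ ≤ 1)
    (h2 : ‖∑ i, star (a i) * a i‖ ≤ 1) : 
    ‖∑ i, (ℜ (a i) : 𝒜) * ℜ (a i)‖ ≤ 1 ∧ ‖∑ i, (ℑ (a i) : 𝒜) * ℑ (a i)‖ ≤ 1 := by
  have nn : ∀ x : 𝒜, IsSelfAdjoint x → 0 ≤ x * x := fun x hx => by
    have := star_mul_self_nonneg x; rwa [hx.star_eq] at this
  have R0 : 0 ≤ ∑ i, (ℜ (a i) : 𝒜) * ℜ (a i) := Finset.sum_nonneg fun i _ => nn _ (ℜ (a i)).2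
  have I0 : 0 ≤ ∑ i, (ℑ (a i) : 𝒜) * ℑ (a i) := Finset.sum_nonneg fun i _ => nn _ (ℑ (a i)).2
  have e : (2:ℕ) • (∑ i, (ℜ (a i) : 𝒜) * ℜ (a i) + ∑ i, (ℑ (a i) : 𝒜) * ℑ (a i)) = 
      ∑ i, star (a i) * a i + ∑ i, a i * star (a i) := by
    rw [← Finset.sum_add_distrib, ← Finset.sum_add_distrib, Finset.smul_sum]
    refine Finset.sum_congr rfl fun i _ => (star_mul_self_add_self_mul_star (a i)).symm
  have n : ‖∑ i, (ℜ (a i) : 𝒜) * ℜ (a i) + ∑ i, (ℑ (a i) : 𝒜) * ℑ (a i)‖ ≤ 1 := by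
    have : ‖(2:ℕ) • (∑ i, (ℜ (a i) : 𝒜) * ℜ (a i) + ∑ i, (ℑ (a i) : 𝒜) * ℑ (a i))‖ ≤ 1 + 1 := by
      rw [e]; exact (norm_add_le _ _).trans (add_le_add h2 h1)
    rw [← Nat.cast_smul_eq_nsmul ℝ, norm_smul] at this
    norm_num at this
    linarith
  exact ⟨(CStarAlgebra.norm_le_norm_of_nonneg_of_le R0 (le_add_of_nonneg_right I0)).trans n,
    (CStarAlgebra.norm_le_norm_of_nonneg_of_le I0 (le_add_of_nonneg_left R0)).trans n⟩

theorem MaxForm.bound (h : MaxForm V) {n : ℕ} (a : Fin n → 𝒜) (b : Fin n → ℬ)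
    (h1 : ‖∑ i, a i * star (a i)‖ ≤ 1) (h2 : ‖∑ i, star (a i) * a i‖ ≤ 1)
    (h3 : ‖∑ i, b i * star (b i)‖ ≤ 1) (h4 : ‖∑ i, star (b i) * b i‖ ≤ 1) :
    ‖∑ i, V (a i) (b i)‖ ≤ 20000 := by
  obtain ⟨ar, ai⟩ := re_im_parts a h1 h2
  obtain ⟨br, bi⟩ := re_im_parts b h3 h4
  have e : ∑ i, V (a i) (b i) = ∑ i, V (ℜ (a i)) (ℜ (b i)) - ∑ i, V (ℑ (a i)) (ℑ (b i)) +
     Complex.I * (∑ i, V (ℜ (a i)) (ℑ (b i)) + ∑ i, V (ℑ (a i)) (ℜ (b i))) := by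
    rw [← Finset.sum_add_distrib, ← Finset.sum_sub_distrib, Finset.mul_sum, ← Finset.sum_add_distrib]
    refine Finset.sum_congr rfl fun i _ => ?_
    conv_lhs => rw [← realPart_add_I_smul_imaginaryPart (a i), ← realPart_add_I_smul_imaginaryPart (b i)]
    simp only [map_add, map_smul, LinearMap.add_apply, LinearMap.smul_apply, smul_eq_mul]
    linear_combination (V (ℑ (a i)) (ℑ (b i))) * Complex.I_mul_I
  have s1 := h.sa_bound (fun i => (ℜ (a i) : 𝒜)) (fun i => (ℜ (a i)).2) ar (fun i => (ℜ (b i) : ℬ)) 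
    (fun i => (ℜ (b i)).2) br
  have s2 := h.sa_bound (fun i => (ℑ (a i) : 𝒜)) (fun i => (ℑ (a i)).2) ai (fun i => (ℑ (b i) : ℬ)) 
    (fun i => (ℑ (b i)).2) bi
  have s3 := h.sa_bound (fun i => (ℜ (a i) : 𝒜)) (fun i => (ℜ (a i)).2) ar (fun i => (ℑ (b i) : ℬ)) 
    (fun i => (ℑ (b i)).2) bi
  have s4 := h.sa_bound (fun i => (ℑ (a i) : 𝒜)) (fun i => (ℑ (a i)).2) ai (fun i => (ℜ (b i) : ℬ)) 
    (fun i => (ℜ (b i)).2) br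
  rw [e]
  refine (norm_add_le _ _).trans ?_
  have t1 := norm_sub_le (∑ i, V (ℜ (a i)) (ℜ (b i))) (∑ i, V (ℑ (a i)) (ℑ (b i)))
  have t2 := norm_add_le (∑ i, V (ℜ (a i)) (ℑ (b i))) (∑ i, V (ℑ (a i)) (ℜ (b i)))
  rw [norm_mul, Complex.norm_I, one_mul]
  linarith
end full


section ultra
open BoundedContinuousFunction Filter Topology

lemma norm_unitary_le {𝒜 : Type*} [CStarAlgebra 𝒜] {u : 𝒜} (hu : u ∈ unitary 𝒜) : ‖u‖ ≤ 1 := by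
  rcases subsingleton_or_nontrivial 𝒜 with h | h
  · rw [Subsingleton.elim u 0]; simp
  · exact (CStarRing.norm_of_mem_unitary hu).le

lemma exists_lim (f : ℕ → ℂ) (C : ℝ) (hf : ∀ n, ‖f n‖ ≤ C) :
    Tendsto f (hyperfilter ℕ) (𝓝 (limUnder (hyperfilter ℕ : Filter ℕ) f)) := by
  apply tendsto_nhds_limUnder
  have hc : IsCompact (Metric.closedBall (0:ℂ) C) := isCompact_closedBall 0 C
  obtain ⟨z, _, hz⟩ := hc.ultrafilter_le_nhds ((hyperfilter ℕ).map f) (by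
    rw [le_principal_iff]
    exact Filter.mem_map.2 (Filter.univ_mem' fun n => by simpa using hf n))
  exact ⟨z, hz⟩

/-- bounded sequence from a family with a norm bound -/
def bseq {𝒜 : Type*} [CStarAlgebra 𝒜] (f : ℕ → 𝒜) (C : ℝ) (hf : ∀ n, ‖f n‖ ≤ C) : ℕ →ᵇ 𝒜 :=
  BoundedContinuousFunction.ofNormedAddCommGroupDiscrete f C hf

variable {𝒜 : Type*} [CStarAlgebra 𝒜] {ℬ : Type*} [CStarAlgebra ℬ]

theorem groth_one (V : 𝒜 →ₗ[ℂ] ℬ →ₗ[ℂ] ℂ) (M : ℝ) (hM : 0 ≤ M)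
    (hV : ∀ x y, ‖V x y‖ ≤ M * ‖x‖ * ‖y‖) {n : ℕ} (a : Fin n → 𝒜) (b : Fin n → ℬ)
    (h1 : ‖∑ i, a i * star (a i)‖ ≤ 1) (h2 : ‖∑ i, star (a i) * a i‖ ≤ 1)
    (h3 : ‖∑ i, b i * star (b i)‖ ≤ 1) (h4 : ‖∑ i, star (b i) * b i‖ ≤ 1) :
    ‖∑ i, V (a i) (b i)‖ ≤ 20000 * M := by
  set T : Set ℝ := {r | ∃ u ∈ unitary 𝒜, ∃ v ∈ unitary ℬ, r = ‖V u v‖} with hT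
  have hbd : ∀ u ∈ unitary 𝒜, ∀ v ∈ unitary ℬ, ‖V u v‖ ≤ M := by
    intro u hu v hv
    refine (hV u v).trans ?_
    have := norm_unitary_le hu
    have := norm_unitary_le hv
    calc M * ‖u‖ * ‖v‖ ≤ M * 1 * 1 := by gcongr
      _ = M := by ring
  have hTb : BddAbove T := ⟨M, by rintro r ⟨u, hu, v, hv, rfl⟩; exact hbd u hu v hv⟩
  have hTn : T.Nonempty := ⟨_, 1, one_mem _, 1, one_mem _, rfl⟩
  set S := sSup T with hS
  have hSM : S ≤ M := csSup_le hTn (by rintro r ⟨u, hu, v, hv, rfl⟩; exact hbd u hu v hv)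
  have hle : ∀ u ∈ unitary 𝒜, ∀ v ∈ unitary ℬ, ‖V u v‖ ≤ S := fun u hu v hv =>
    le_csSup hTb ⟨u, hu, v, hv, rfl⟩
  have hS0 : 0 ≤ S := (norm_nonneg _).trans (hle 1 (one_mem _) 1 (one_mem _))
  rcases hS0.eq_or_lt with h0 | hSpos
  · have : V = 0 := by
      refine LinearMap.ext_on (s := (unitary 𝒜 : Set 𝒜)) (CStarAlgebra.span_unitary 𝒜) fun u hu => ?_
      refine LinearMap.ext_on (s := (unitary ℬ : Set ℬ)) (CStarAlgebra.span_unitary ℬ) fun v hv => ?_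
      have := hle u hu v hv
      rw [← h0] at this
      simpa using this
    rw [this]; simp; positivity
  have hex : ∀ m : ℕ, ∃ u ∈ unitary 𝒜, ∃ v ∈ unitary ℬ, V u v = ((‖V u v‖ : ℝ) : ℂ) ∧ 
      S - 1 / ((m:ℝ) + 1) < ‖V u v‖ := by
    intro m
    obtain ⟨r, ⟨u, hu, v, hv, rfl⟩, hr⟩ := exists_lt_of_lt_csSup hTn 
      (show S - 1 / ((m:ℝ)+1) < sSup T by rw [← hS]; have : (0:ℝ) < 1 / ((m:ℝ)+1) := by positivity
                                          linarith)
    obtain ⟨θ, hθ, hθ2⟩ : ∃ θ : ℂ, ‖θ‖ = 1 ∧ θ * V u v = ‖V u v‖ := by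
      by_cases hz : V u v = 0
      · exact ⟨1, by simp, by simp [hz]⟩
      · refine ⟨(‖V u v‖ : ℂ) / V u v, ?_, by field_simp⟩
        rw [norm_div, Complex.norm_real, norm_norm, div_self (by simpa using hz)]
    have hθu : θ • u ∈ unitary 𝒜 := by
      have hh : star θ * θ = 1 := by
        have := Complex.conj_mul' θ
        rw [hθ] at this; simpa using this
      have hu' := Unitary.mem_iff.1 hu
      rw [Unitary.mem_iff, star_smul, smul_mul_smul_comm, smul_mul_smul_comm, hu'.1, hu'.2, 
        mul_comm θ, hh]
      simp
    have e : ‖V (θ • u) v‖ = ‖V u v‖ := by simp [hθ]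
    refine ⟨θ • u, hθu, v, hv, ?_, by rw [e]; exact hr⟩
    rw [e]; simpa using hθ2
  choose u hu v hv hre hlow using hex
  set f : (ℕ →ᵇ 𝒜) → (ℕ →ᵇ ℬ) → ℕ → ℂ := fun x y m => (S⁻¹ : ℂ) * V (u m * x m) (v m * y m) with hf
  have fb : ∀ x y m, ‖f x y m‖ ≤ S⁻¹ * M * ‖x‖ * ‖y‖ := by
    intro x y m
    simp only [hf, norm_mul, norm_inv, Complex.norm_real, Real.norm_eq_abs, abs_of_pos hSpos]
    have n1 : ‖u m * x m‖ ≤ ‖x‖ := by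
      refine (norm_mul_le _ _).trans ?_
      have := norm_unitary_le (hu m)
      have := x.norm_coe_le_norm m
      calc _ ≤ 1 * ‖x‖ := by gcongr
        _ = _ := one_mul _
    have n2 : ‖v m * y m‖ ≤ ‖y‖ := by
      refine (norm_mul_le _ _).trans ?_
      have := norm_unitary_le (hv m)
      have := y.norm_coe_le_norm m
      calc _ ≤ 1 * ‖y‖ := by gcongr
        _ = _ := one_mul _
    calc S⁻¹ * ‖V (u m * x m) (v m * y m)‖ ≤ S⁻¹ * (M * ‖u m * x m‖ * ‖v m * y m‖) := by
          gcongr; exact hV _ _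
      _ ≤ S⁻¹ * (M * ‖x‖ * ‖y‖) := by gcongr
      _ = _ := by ring
  have ft : ∀ x y, Tendsto (f x y) (hyperfilter ℕ) (𝓝 (limUnder (hyperfilter ℕ : Filter ℕ) (f x y))) :=
    fun x y => exists_lim _ _ (fb x y)
  let W : (ℕ →ᵇ 𝒜) →ₗ[ℂ] (ℕ →ᵇ ℬ) →ₗ[ℂ] ℂ := LinearMap.mk₂ ℂ 
    (fun x y => limUnder (hyperfilter ℕ : Filter ℕ) (f x y))
    (fun x x' y => tendsto_nhds_unique (ft _ _) (by
      refine ((ft x y).add (ft x' y)).congr fun m => ?_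
      simp [hf, mul_add]))
    (fun c x y => tendsto_nhds_unique (ft _ _) (by
      refine ((ft x y).const_smul c).congr fun m => ?_
      simp [hf]; ring))
    (fun x y y' => tendsto_nhds_unique (ft _ _) (by
      refine ((ft x y).add (ft x y')).congr fun m => ?_
      simp [hf, mul_add]))
    (fun c x y => tendsto_nhds_unique (ft _ _) (by
      refine ((ft x y).const_smul c).congr fun m => ?_
      simp [hf]; ring))
  have hW : ∀ x y, Tendsto (f x y) (hyperfilter ℕ) (𝓝 (W x y)) := ft
  have hmax : MaxForm W := by
    refine ⟨tendsto_nhds_unique (hW 1 1) ?_, ?_, S⁻¹ * M, by positivity, ?_⟩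
    · have hlim : Tendsto (fun m => ‖V (u m) (v m)‖) atTop (𝓝 S) := by
        have l1 : Tendsto (fun m : ℕ => S - 1 / ((m:ℝ) + 1)) atTop (𝓝 (S - 0)) := 
          tendsto_const_nhds.sub tendsto_one_div_add_atTop_nhds_zero_nat
        rw [sub_zero] at l1
        exact tendsto_of_tendsto_of_tendsto_of_le_of_le l1 tendsto_const_nhds
          (fun m => (hlow m).le) (fun m => hle _ (hu m) _ (hv m))
      have h5 : Tendsto (fun m => (S⁻¹ : ℂ) * ((‖V (u m) (v m)‖ : ℝ) : ℂ)) atTop (𝓝 ((S⁻¹ : ℂ) * (S:ℂ))) :=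
        tendsto_const_nhds.mul ((Complex.continuous_ofReal.tendsto S).comp hlim)
      rw [inv_mul_cancel₀ (by exact_mod_cast hSpos.ne')] at h5
      refine (h5.mono_left Nat.hyperfilter_le_atTop).congr fun m => ?_
      simp [hf, ← hre m]
    · intro x hx y hy
      refine le_of_tendsto ((Complex.continuous_re.tendsto _).comp (hW x y)) (Eventually.of_forall fun m => ?_)
      have hxm : x m ∈ unitary 𝒜 := by
        rw [Unitary.mem_iff] at hx ⊢
        exact ⟨by simpa using DFunLike.congr_fun hx.1 m, by simpa using DFunLike.congr_fun hx.2 m⟩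
      have hym : y m ∈ unitary ℬ := by
        rw [Unitary.mem_iff] at hy ⊢
        exact ⟨by simpa using DFunLike.congr_fun hy.1 m, by simpa using DFunLike.congr_fun hy.2 m⟩
      refine (Complex.re_le_norm _).trans ?_
      simp only [hf, norm_mul, norm_inv, Complex.norm_real, Real.norm_eq_abs, abs_of_pos hSpos]
      rw [inv_mul_le_one₀ hSpos]
      exact hle _ (mul_mem (hu m) hxm) _ (mul_mem (hv m) hym)
    · intro x y
      exact le_of_tendsto (hW x y).norm (Eventually.of_forall fun m => fb x y m)
  let a' : Fin n → (ℕ →ᵇ 𝒜) := fun i => bseq (fun m => star (u m) * a i) ‖a i‖ (fun m => by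
    refine (norm_mul_le _ _).trans ?_
    have := norm_unitary_le (hu m)
    rw [norm_star]
    calc _ ≤ 1 * ‖a i‖ := by gcongr
      _ = _ := one_mul _)
  let b' : Fin n → (ℕ →ᵇ ℬ) := fun i => bseq (fun m => star (v m) * b i) ‖b i‖ (fun m => by
    refine (norm_mul_le _ _).trans ?_
    have := norm_unitary_le (hv m)
    rw [norm_star]
    calc _ ≤ 1 * ‖b i‖ := by gcongr
      _ = _ := one_mul _)
  have ea : ∀ i m, a' i m = star (u m) * a i := fun i m => rfl
  have eb : ∀ i m, b' i m = star (v m) * b i := fun i m => rfl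
  have uu : ∀ m, u m * star (u m) = 1 := fun m => (Unitary.mem_iff.1 (hu m)).2
  have vv : ∀ m, v m * star (v m) = 1 := fun m => (Unitary.mem_iff.1 (hv m)).2
  have eW : ∀ i, W (a' i) (b' i) = (S⁻¹ : ℂ) * V (a i) (b i) := by
    intro i
    refine tendsto_nhds_unique (hW _ _) (tendsto_const_nhds.congr fun m => ?_)
    simp only [hf, ea, eb]
    rw [← mul_assoc, ← mul_assoc, uu, vv, one_mul, one_mul]
  letI : PartialOrder (ℕ →ᵇ 𝒜) := CStarAlgebra.spectralOrder _
  letI : StarOrderedRing (ℕ →ᵇ 𝒜) := CStarAlgebra.spectralOrderedRing _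
  letI : PartialOrder (ℕ →ᵇ ℬ) := CStarAlgebra.spectralOrder _
  letI : StarOrderedRing (ℕ →ᵇ ℬ) := CStarAlgebra.spectralOrderedRing _
  have fin := hmax.bound a' b' 
    (by
      refine (BoundedContinuousFunction.norm_le zero_le_one).2 fun m => ?_
      have : (∑ i, a' i * star (a' i)) m = star (u m) * (∑ i, a i * star (a i)) * u m := by
        rw [BoundedContinuousFunction.coe_sum, Finset.sum_apply, Finset.mul_sum, Finset.sum_mul]
        refine Finset.sum_congr rfl fun i _ => ?_
        simp [ea, mul_assoc]
      rw [this]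
      have n1 := norm_unitary_le (hu m)
      calc _ ≤ ‖star (u m)‖ * ‖∑ i, a i * star (a i)‖ * ‖u m‖ := 
            (norm_mul_le _ _).trans (by gcongr; exact norm_mul_le _ _)
        _ ≤ 1 * 1 * 1 := by rw [norm_star]; gcongr
        _ = 1 := by norm_num)
    (by
      refine (BoundedContinuousFunction.norm_le zero_le_one).2 fun m => ?_
      have : (∑ i, star (a' i) * a' i) m = ∑ i, star (a i) * a i := by
        rw [BoundedContinuousFunction.coe_sum, Finset.sum_apply]
        refine Finset.sum_congr rfl fun i _ => ?_
        simp only [BoundedContinuousFunction.coe_mul, Pi.mul_apply, BoundedContinuousFunction.star_apply, ea,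
          star_mul, star_star]
        rw [mul_assoc, ← mul_assoc (u m), uu, one_mul]
      rw [this]; exact h2)
    (by
      refine (BoundedContinuousFunction.norm_le zero_le_one).2 fun m => ?_
      have : (∑ i, b' i * star (b' i)) m = star (v m) * (∑ i, b i * star (b i)) * v m := by
        rw [BoundedContinuousFunction.coe_sum, Finset.sum_apply, Finset.mul_sum, Finset.sum_mul]
        refine Finset.sum_congr rfl fun i _ => ?_
        simp [eb, mul_assoc]
      rw [this]
      have n1 := norm_unitary_le (hv m)
      calc _ ≤ ‖star (v m)‖ * ‖∑ i, b i * star (b i)‖ * ‖v m‖ := 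
            (norm_mul_le _ _).trans (by gcongr; exact norm_mul_le _ _)
        _ ≤ 1 * 1 * 1 := by rw [norm_star]; gcongr
        _ = 1 := by norm_num)
    (by
      refine (BoundedContinuousFunction.norm_le zero_le_one).2 fun m => ?_
      have : (∑ i, star (b' i) * b' i) m = ∑ i, star (b i) * b i := by
        rw [BoundedContinuousFunction.coe_sum, Finset.sum_apply]
        refine Finset.sum_congr rfl fun i _ => ?_
        simp only [BoundedContinuousFunction.coe_mul, Pi.mul_apply, BoundedContinuousFunction.star_apply, eb,
          star_mul, star_star]
        rw [mul_assoc, ← mul_assoc (v m), vv, one_mul]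
      rw [this]; exact h4)
  simp only [eW, ← Finset.mul_sum, norm_mul, norm_inv, Complex.norm_real, Real.norm_eq_abs, abs_of_pos hSpos] at fin
  rw [inv_mul_le_iff₀ hSpos] at fin
  linarith

theorem groth_key1 {𝒞 : Type*} [CStarAlgebra 𝒞] {ι κ : Type*} [Fintype ι] [Fintype κ] (e : κ ≃ ι) (t : ℝ)
    (ht0 : 0 < t) (r : ℝ) (hr : 0 < r) (htt : t * t = r⁻¹)
    (c d : ι → 𝒞) (h : ‖∑ i, c i * d i‖ ≤ r) :
    ‖∑ i, ((t:ℂ) • c (e i)) * ((t:ℂ) • d (e i))‖ ≤ 1 := by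
  rw [e.sum_comp (fun i => ((t:ℂ) • c i) * ((t:ℂ) • d i))]
  simp only [smul_mul_smul_comm, ← Finset.smul_sum, norm_smul, ← Complex.ofReal_mul, htt]
  rw [Complex.norm_real, Real.norm_eq_abs, abs_of_pos (by positivity), inv_mul_le_iff₀ hr]
  linarith

theorem groth_key2 {𝒞 : Type*} [CStarAlgebra 𝒞] (t : ℝ) (x : 𝒞) : star ((t:ℂ) • x) = (t:ℂ) • star x := by
  rw [star_smul]; simp

/-- bounded noncommutative Grothendieck inequality, general index and normalisation -/
theorem groth (V : 𝒜 →ₗ[ℂ] ℬ →ₗ[ℂ] ℂ) (M : ℝ) (hM : 0 ≤ M)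
    (hV : ∀ x y, ‖V x y‖ ≤ M * ‖x‖ * ‖y‖) {ι : Type*} [Fintype ι] (a : ι → 𝒜) (b : ι → ℬ)
    (r : ℝ) (hr : 0 < r)
    (h1 : ‖∑ i, a i * star (a i)‖ ≤ r) (h2 : ‖∑ i, star (a i) * a i‖ ≤ r)
    (h3 : ‖∑ i, b i * star (b i)‖ ≤ r) (h4 : ‖∑ i, star (b i) * b i‖ ≤ r) :
    ‖∑ i, V (a i) (b i)‖ ≤ 20000 * M * r := by
  let e := (Fintype.equivFin ι).symm
  set t : ℝ := (Real.sqrt r)⁻¹ with ht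
  have ht0 : 0 < t := by positivity
  have htt : t * t = r⁻¹ := by rw [ht, ← mul_inv, Real.mul_self_sqrt hr.le]
  have key := fun c d h => groth_key1 (𝒞 := 𝒜) e t ht0 r hr htt c d h
  have key2 := fun c d h => groth_key1 (𝒞 := ℬ) e t ht0 r hr htt c d h
  have st := fun x => groth_key2 (𝒞 := 𝒜) t x
  have st2 := fun x => groth_key2 (𝒞 := ℬ) t x
  have := groth_one V M hM hV (fun i => (t:ℂ) • a (e i)) (fun i => (t:ℂ) • b (e i))
    (by simp only [st]; exact key a (fun i => star (a i)) h1)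
    (by simp only [st]; exact key (fun i => star (a i)) a h2)
    (by simp only [st2]; exact key2 b (fun i => star (b i)) h3)
    (by simp only [st2]; exact key2 (fun i => star (b i)) b h4)
  simp only [map_smul, LinearMap.smul_apply, smul_smul, ← Finset.smul_sum, ← Complex.ofReal_mul, htt, norm_smul] at this
  rw [e.sum_comp (fun i => V (a i) (b i)), Complex.norm_real, Real.norm_eq_abs, abs_of_pos (by positivity), 
    inv_mul_le_iff₀ hr] at this
  linarith
end ultra


section uniq
variable {𝒞 : Type*} [NonUnitalCStarAlgebra 𝒞] {N : 𝒞 → ℝ}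

lemma cn_zero (h : IsCStarNorm N) : N 0 = 0 := by
  have := h.smul_eq 0 0
  simpa using this

lemma cn_nonneg (h : IsCStarNorm N) (x : 𝒞) : 0 ≤ N x := by
  have h1 := h.smul_eq (-1) x
  have h2 := h.add_le x ((-1 : ℂ) • x)
  simp at h1
  rw [neg_one_smul, add_neg_cancel, cn_zero h, h1] at h2
  linarith

lemma cn_eq_of (h : IsCStarNorm N) {x y : 𝒞} (hxy : star x * x = star y * y) : N x = N y := by
  have h1 := h.star_mul_self x
  rw [hxy, h.star_mul_self y] at h1
  nlinarith [cn_nonneg h x, cn_nonneg h y]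

lemma unit_trick (a b c : 𝒞) (ha : star a = a) (hc : star c = c) (hac : a * c = c * a)
    (hq : c * c = c + c - a * a) (ε : ℂ) (hε : star ε = -ε) (hε2 : ε * ε = -1) :
    star (a * b + ε • (b - c * b)) * (a * b + ε • (b - c * b)) = star b * b := by
  have e1 : star b * c * (c * b) = star b * (c * c) * b := by noncomm_ring
  have e2 : star b * a * (c * b) = star b * (a * c) * b := by noncomm_ring
  have : star (a * b + ε • (b - c * b)) = star b * a + (-ε) • (star b - star b * c) := by
    rw [star_add, star_smul, star_sub, star_mul, star_mul, ha, hc, hε]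
  rw [this]
  have e3 : (star b * a + (-ε) • (star b - star b * c)) * (a * b + ε • (b - c * b)) = 
     star b * (a * a) * b + (-(ε * ε)) • (star b * b - (star b * c * b + star b * c * b) + star b * (c * c) * b)
      + ε • (star b * (c * a) * b - star b * (a * c) * b) := by
    simp only [add_mul, mul_add, smul_mul_assoc, mul_smul_comm, sub_mul, mul_sub, mul_assoc]
    module
  rw [e3, hac, sub_self, smul_zero, hε2, neg_neg, one_smul, hq, mul_sub, sub_mul, mul_add, add_mul]
  abel

lemma cn_mul_le (h : IsCStarNorm N) (a b : 𝒞) (ha : IsSelfAdjoint a) (ha1 : ‖a‖ ≤ 1) : N (a * b) ≤ N b := by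
  let f : ℝ → ℝ := fun t => 1 - Real.sqrt (1 - t^2)
  have hf : Continuous f := by fun_prop
  have hf0 : f 0 = 0 := by simp [f]
  let c := cfcₙ f a
  have hc : star c = c := (cfcₙ_predicate f a : IsSelfAdjoint _).star_eq
  have hac : a * c = c * a := by
    have : c * a = cfcₙ f a * cfcₙ (fun t : ℝ => t) a := by rw [cfcₙ_id' ℝ a]
    have h2 : a * c = cfcₙ (fun t : ℝ => t) a * cfcₙ f a := by rw [cfcₙ_id' ℝ a]
    rw [this, h2, ← cfcₙ_mul .., ← cfcₙ_mul ..]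
    congr 1; ext t; ring
  have hq : c * c = c + c - a * a := by
    have h2 : a * a = cfcₙ (fun t : ℝ => t) a * cfcₙ (fun t : ℝ => t) a := by rw [cfcₙ_id' ℝ a]
    rw [h2]
    change cfcₙ f a * cfcₙ f a = cfcₙ f a + cfcₙ f a - _
    rw [← cfcₙ_mul .., ← cfcₙ_mul .., ← cfcₙ_add .., ← cfcₙ_sub ..]
    apply cfcₙ_congr
    intro t ht
    have ht1 : |t| ≤ 1 := by
      have := NonUnitalIsometricContinuousFunctionalCalculus.norm_quasispectrum_le a ht ha
      exact this.trans ha1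
    have h3 : 0 ≤ 1 - t^2 := by nlinarith [abs_le.1 ht1]
    have := Real.sq_sqrt h3
    simp only [f]
    nlinarith
  have e1 := cn_eq_of h (unit_trick a b c ha.star_eq hc hac hq Complex.I (by simp) (by simp))
  have e2 := cn_eq_of h (unit_trick a b c ha.star_eq hc hac hq (-Complex.I) (by simp) (by simp))
  have h3 := h.add_le (a * b + Complex.I • (b - c * b)) (a * b + (-Complex.I) • (b - c * b))
  have h4 : a * b + Complex.I • (b - c * b) + (a * b + (-Complex.I) • (b - c * b)) = (2:ℂ) • (a * b) := by
    rw [neg_smul, two_smul]; abel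
  rw [h4, h.smul_eq, e1, e2] at h3
  simp at h3
  linarith

lemma cn_le_sa (h : IsCStarNorm N) (a : 𝒞) (ha : IsSelfAdjoint a) (ha1 : ‖a‖ ≤ 1) : N a ≤ 1 := by
  have h1 := cn_mul_le h a a ha ha1
  have h2 := h.star_mul_self a
  rw [ha.star_eq] at h2
  nlinarith [cn_nonneg h a]

lemma cn_le (h : IsCStarNorm N) (x : 𝒞) : N x ≤ ‖x‖ := by
  rcases eq_or_ne x 0 with rfl | hx
  · simp [cn_zero h]
  have hn : 0 < ‖x‖ := norm_pos_iff.2 hx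
  have h1 := cn_le_sa h (((‖x‖⁻¹ * ‖x‖⁻¹ : ℝ) : ℂ) • (star x * x)) (by
    rw [IsSelfAdjoint, star_smul, star_mul, star_star]; simp) (by
    rw [norm_smul, CStarRing.norm_star_mul_self, Complex.norm_real, norm_mul, norm_inv, norm_norm]
    apply le_of_eq; field_simp)
  rw [h.smul_eq, h.star_mul_self, Complex.norm_real, norm_mul, norm_inv, norm_norm] at h1
  have h2 : (N x / ‖x‖)^2 ≤ 1 := by
    calc _ = ‖x‖⁻¹ * ‖x‖⁻¹ * (N x * N x) := by field_simp
      _ ≤ _ := h1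
  have h3 : N x / ‖x‖ ≤ 1 := by nlinarith
  rwa [div_le_one hn] at h3

lemma le_cn (h : IsCStarNorm N) (x : 𝒞) : ‖x‖ ≤ N x := by
  by_contra! hlt
  set a := star x * x with ha
  have hsa : IsSelfAdjoint a := by rw [IsSelfAdjoint, ha, star_mul, star_star]
  have hN : N a = N x * N x := h.star_mul_self x
  have hn : ‖a‖ = ‖x‖ * ‖x‖ := CStarRing.norm_star_mul_self
  have h0 := cn_nonneg h x
  have hlt' : N a < ‖a‖ := by rw [hN, hn]; nlinarith
  obtain ⟨ρ, h1, h2⟩ := exists_between hlt'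
  have hρ : 0 < ρ := (cn_nonneg h a).trans_lt h1
  let cl : ℝ → ℝ := fun t => max (-ρ) (min t ρ)
  let g : ℝ → ℝ := fun t => t - cl t
  let f : ℝ → ℝ := fun t => t / (max ρ |t|)^2
  have hcl : Continuous cl := by fun_prop
  have hg : Continuous g := by fun_prop
  have hf : Continuous f := by
    apply Continuous.div (by fun_prop) (by fun_prop)
    intro t; have : 0 < max ρ |t| := lt_max_of_lt_left hρ
    positivity
  have cl0 : cl 0 = 0 := by simp [cl, hρ.le]
  have g0 : g 0 = 0 := by simp [g, cl0]
  have f0 : f 0 = 0 := by simp [f]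
  have hb : cfcₙ g a ≠ 0 := by
    intro hb
    have : a = cfcₙ cl a := by
      have h5 : cfcₙ g a = cfcₙ (fun t : ℝ => t) a - cfcₙ cl a := by
        rw [← cfcₙ_sub (fun t : ℝ => t) cl a continuousOn_id rfl hcl.continuousOn cl0]
      rw [hb, cfcₙ_id' ℝ a] at h5
      exact (sub_eq_zero.1 h5.symm)
    have h6 : ‖cfcₙ cl a‖ ≤ ρ := by
      refine norm_cfcₙ_le fun t _ => ?_
      rw [Real.norm_eq_abs, abs_le]
      exact ⟨le_max_left _ _, max_le (by linarith) (min_le_right _ _)⟩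
    rw [← this] at h6
    linarith
  have hc : ‖cfcₙ f a‖ ≤ 1 / ρ := by
    refine norm_cfcₙ_le fun t _ => ?_
    have m0 : 0 < max ρ |t| := lt_max_of_lt_left hρ
    rw [Real.norm_eq_abs, abs_div, abs_of_pos (pow_pos m0 2), div_le_div_iff₀ (by positivity) hρ, one_mul, sq]
    exact mul_le_mul (le_max_right _ _) (le_max_left _ _) hρ.le m0.le
  have key : cfcₙ f a * (a * cfcₙ g a) = cfcₙ g a := by
    have e : a * cfcₙ g a = cfcₙ (fun t : ℝ => t) a * cfcₙ g a := by rw [cfcₙ_id' ℝ a]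
    rw [e, ← cfcₙ_mul (fun t : ℝ => t) g a continuousOn_id rfl hg.continuousOn g0, 
      ← cfcₙ_mul f (fun t => t * g t) a hf.continuousOn f0 (continuous_id.mul hg).continuousOn (by simp)]
    congr 1; ext t
    by_cases ht : |t| ≤ ρ
    · have : g t = 0 := by
        simp only [g, cl]
        rw [min_eq_left (abs_le.1 ht).2, max_eq_right (abs_le.1 ht).1, sub_self]
      simp [this]
    · push Not at ht
      have t0 : t ≠ 0 := by rintro rfl; simp at ht; linarith
      simp only [f]
      rw [max_eq_right ht.le, sq_abs]
      field_simp
  have h7 := (h.mul_le (cfcₙ f a) (a * cfcₙ g a))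
  rw [key] at h7
  have h8 := h.mul_le a (cfcₙ g a)
  have h9 := (cn_le h (cfcₙ f a)).trans hc
  have b0 : 0 < N (cfcₙ g a) := lt_of_le_of_ne (cn_nonneg h _) fun e => hb (h.eq_zero_of _ e.symm)
  have h10 : N (cfcₙ g a) ≤ 1 / ρ * (N a * N (cfcₙ g a)) := 
    h7.trans (mul_le_mul h9 h8 (cn_nonneg h _) (by positivity))
  have h11 : 1 / ρ * (N a * N (cfcₙ g a)) < N (cfcₙ g a) := by
    rw [one_div, inv_mul_lt_iff₀ hρ]
    exact mul_lt_mul_of_pos_right h1 b0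
  linarith

theorem cn_unique (h : IsCStarNorm N) (x : 𝒞) : N x = ‖x‖ := le_antisymm (cn_le h x) (le_cn h x)
end uniq


section f1
lemma gcn_zero {M : Type*} [NonUnitalRing M] [StarRing M] [Module ℂ M] {N : M → ℝ} (h : IsCStarNorm N) : N 0 = 0 := by
  have := h.smul_eq 0 0
  simpa using this

lemma gcn_nonneg {M : Type*} [NonUnitalRing M] [StarRing M] [Module ℂ M] {N : M → ℝ} (h : IsCStarNorm N) (x : M) :
    0 ≤ N x := by
  have h1 := h.smul_eq (-1) x
  have h2 := h.add_le x ((-1 : ℂ) • x)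
  simp at h1
  rw [neg_one_smul, add_neg_cancel, gcn_zero h, h1] at h2
  linarith

lemma gcn_star_le {M : Type*} [NonUnitalRing M] [StarRing M] [Module ℂ M] {N : M → ℝ} (h : IsCStarNorm N) (x : M) :
    N x ≤ N (star x) := by
  have h1 := h.star_mul_self x
  have h2 := h.mul_le (star x) x
  rcases (gcn_nonneg h x).eq_or_lt with h0 | h0
  · rw [← h0]; exact gcn_nonneg h _
  · rw [h1] at h2
    exact le_of_mul_le_mul_right h2 h0

lemma gcn_star {M : Type*} [NonUnitalRing M] [StarRing M] [Module ℂ M] {N : M → ℝ} (h : IsCStarNorm N) (x : M) :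
    N (star x) = N x := by
  refine le_antisymm ?_ (gcn_star_le h x)
  have := gcn_star_le h (star x)
  rwa [star_star] at this

variable {A : Type*} [NonUnitalCStarAlgebra A]

lemma corner_norm {n : ℕ} {N : Matrix (Fin (n+1)) (Fin (n+1)) A → ℝ} (h : IsCStarNorm N) (a : A) :
    N (Matrix.single 0 0 a) = ‖a‖ := by
  refine cn_unique (N := fun a => N (Matrix.single 0 0 a)) ⟨?_, ?_, ?_, ?_, ?_⟩ a
  · intro x y; simp only [Matrix.single_add]; exact h.add_le _ _
  · intro c x; simp only [← Matrix.smul_single]; exact h.smul_eq _ _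
  · intro x hx
    have := h.eq_zero_of _ hx
    simpa using congrFun (congrFun this 0) 0
  · intro x y
    have := h.mul_le (Matrix.single 0 0 x) (Matrix.single 0 0 y)
    rwa [Matrix.single_mul_single_same] at this
  · intro x
    have := h.star_mul_self (Matrix.single 0 0 x)
    rwa [Matrix.star_eq_conjTranspose, Matrix.conjTranspose_single, Matrix.single_mul_single_same] at this

lemma norm_cube {s : A} (hs : star s = s) : ‖s‖ ^ 3 ≤ ‖s * s * s‖ := by
  have h2 : ‖s * s‖ = ‖s‖ * ‖s‖ := by
    have := CStarRing.norm_star_mul_self (x := s); rwa [hs] at this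
  have h4 : ‖(s * s) * (s * s)‖ = ‖s * s‖ * ‖s * s‖ := by
    have := CStarRing.norm_star_mul_self (x := s * s); rwa [star_mul, hs] at this
  have h5 : (s * s) * (s * s) = s * s * s * s := by noncomm_ring
  rw [h5, h2] at h4
  have h6 := norm_mul_le (s * s * s) s
  rw [h4] at h6
  rcases (norm_nonneg s).eq_or_lt with h0 | h0
  · rw [← h0]; simp
  · refine le_of_mul_le_mul_right ?_ h0
    calc _ = _ := by ring
      _ ≤ _ := h6

theorem col_bound {p : ℕ} {N : Matrix (Fin p) (Fin p) A → ℝ} (h : IsCStarNorm N)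
    (v : Matrix (Fin p) (Fin p) A) (β : Fin p → ℂ) :
    ‖∑ i, star (∑ j, β j • v i j) * (∑ j, β j • v i j)‖ ≤ N v ^ 2 * ∑ j, ‖β j‖ ^ 2 := by
  rcases p with _ | n
  · simp
  set a : Fin (n+1) → A := fun i => ∑ j, β j • v i j with ha
  set s := ∑ i, star (a i) * a i with hs
  have hss : star s = s := by simp [hs, star_sum]
  change ‖s‖ ≤ _
  let ξ : Matrix (Fin (n+1)) (Fin (n+1)) A := Matrix.of fun j k => if k = 0 then β j • s else 0
  have hT : ∀ i k, (v * ξ) i k = if k = 0 then a i * s else 0 := by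
    intro i k
    rw [Matrix.mul_apply]
    by_cases hk : k = 0
    · simp only [ξ, Matrix.of_apply, hk, if_true, ha, Finset.sum_mul, mul_smul_comm, smul_mul_assoc]
    · simp [ξ, hk]
  have h1 : star (v * ξ) * (v * ξ) = Matrix.single 0 0 (s * s * s) := by
    ext k l
    rw [Matrix.mul_apply]
    simp only [Matrix.star_apply, hT, Matrix.single_apply]
    by_cases hk : k = 0
    · by_cases hl : l = 0
      · simp only [hk, hl, if_true, star_mul, hss, and_self]
        have : s * s * s = s * (∑ i, star (a i) * a i) * s := by rw [← hs]
        clear_value s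
        rw [this, Finset.mul_sum, Finset.sum_mul]
        refine Finset.sum_congr rfl fun i _ => ?_
        simp only [mul_assoc]
      · simp [hl, Ne.symm hl]
    · simp [hk, Ne.symm hk]
  have h2 : star ξ * ξ = Matrix.single 0 0 (((∑ j, ‖β j‖ ^ 2 : ℝ) : ℂ) • (s * s)) := by
    ext k l
    rw [Matrix.mul_apply]
    simp only [Matrix.star_apply, ξ, Matrix.of_apply, Matrix.single_apply]
    by_cases hk : k = 0
    · by_cases hl : l = 0
      · simp only [hk, hl, if_true, star_smul, hss, and_self, smul_mul_smul_comm]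
        rw [← Finset.sum_smul]
        congr 1
        push_cast
        refine Finset.sum_congr rfl fun i _ => ?_
        rw [← Complex.conj_mul']; rfl
      · simp [hl, Ne.symm hl]
    · simp [hk, Ne.symm hk]
  have n1 := h.star_mul_self (v * ξ)
  rw [h1, corner_norm h] at n1
  have n2 := h.star_mul_self ξ
  have b0 : 0 ≤ ∑ j, ‖β j‖ ^ 2 := Finset.sum_nonneg fun _ _ => by positivity
  rw [h2, corner_norm h, norm_smul, Complex.norm_real, Real.norm_eq_abs, abs_of_nonneg b0] at n2
  have n3 := h.mul_le v ξ
  have n4 : ‖s‖ ^ 3 ≤ N v ^ 2 * ((∑ j, ‖β j‖ ^ 2) * ‖s * s‖) := by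
    rw [n2]
    calc _ ≤ _ := norm_cube hss
      _ = _ := n1
      _ ≤ (N v * N ξ) * (N v * N ξ) := mul_le_mul n3 n3 (gcn_nonneg h _) (mul_nonneg (gcn_nonneg h _) (gcn_nonneg h _))
      _ = _ := by ring
  have n5 : ‖s * s‖ ≤ ‖s‖ * ‖s‖ := norm_mul_le _ _
  rcases (norm_nonneg s).eq_or_lt with h0 | h0
  · rw [← h0]; positivity
  · have : ‖s‖ * (‖s‖ * ‖s‖) ≤ (N v ^ 2 * ∑ j, ‖β j‖ ^ 2) * (‖s‖ * ‖s‖) := by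
      calc _ = ‖s‖ ^ 3 := by ring
        _ ≤ _ := n4
        _ ≤ N v ^ 2 * ((∑ j, ‖β j‖ ^ 2) * (‖s‖ * ‖s‖)) := by gcongr
        _ = _ := by ring
    exact le_of_mul_le_mul_right this (by positivity)

theorem row_bound {p : ℕ} {N : Matrix (Fin p) (Fin p) A → ℝ} (h : IsCStarNorm N)
    (v : Matrix (Fin p) (Fin p) A) (β : Fin p → ℂ) :
    ‖∑ j, (∑ i, β i • v i j) * star (∑ i, β i • v i j)‖ ≤ N v ^ 2 * ∑ j, ‖β j‖ ^ 2 := by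
  have := col_bound h (star v) (fun i => star (β i))
  rw [gcn_star h] at this
  simp only [norm_star] at this
  refine le_trans (le_of_eq ?_) this
  congr 1
  refine Finset.sum_congr rfl fun j _ => ?_
  simp only [star_sum, star_smul, Matrix.star_apply, star_star]
end f1

section rep
variable {A B : Type u} [NonUnitalCStarAlgebra A] [NonUnitalCStarAlgebra B]

def HRep (z : A ⊗[ℂ] B) (r : ℝ) : Prop := ∃ (n : ℕ) (a : Fin n → A) (b : Fin n → B),
  z = ∑ i, a i ⊗ₜ[ℂ] b i ∧ ‖∑ i, a i * star (a i)‖ ≤ r ∧ ‖∑ i, star (b i) * b i‖ ≤ r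

def HTRep (z : A ⊗[ℂ] B) (r : ℝ) : Prop := ∃ (n : ℕ) (a : Fin n → A) (b : Fin n → B),
  z = ∑ i, a i ⊗ₜ[ℂ] b i ∧ ‖∑ i, star (a i) * a i‖ ≤ r ∧ ‖∑ i, b i * star (b i)‖ ≤ r

lemma balance (P Q r : ℝ) (hr : 0 < r) (hP : 0 ≤ P) (hQ : 0 ≤ Q) (h : P * Q ≤ r) :
    ∃ t : ℝ, 0 < t ∧ t ^ 2 * P ^ 2 ≤ r ∧ (t⁻¹) ^ 2 * Q ^ 2 ≤ r := by
  rcases hP.eq_or_lt with h0 | h0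
  · refine ⟨Real.sqrt (Q^2 / r + 1), by positivity, ?_, ?_⟩
    · rw [← h0]; simp [hr.le]
    · rw [inv_pow, Real.sq_sqrt (by positivity), inv_mul_le_iff₀ (by positivity), add_mul, div_mul_cancel₀ _ hr.ne']
      linarith
  · refine ⟨Real.sqrt r / P, by positivity, ?_, ?_⟩
    · rw [div_pow, Real.sq_sqrt hr.le, div_mul_cancel₀ _ (by positivity)]
    · rw [inv_div, div_pow, Real.sq_sqrt hr.le, div_mul_eq_mul_div, div_le_iff₀ hr]
      nlinarith [mul_nonneg hP hQ]

lemma smul_sum_bd {A : Type*} [NonUnitalCStarAlgebra A] {κ : Type*} [Fintype κ] (a : κ → A) (t : ℝ) :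
    ‖∑ i, ((t:ℂ) • a i) * star ((t:ℂ) • a i)‖ = t ^ 2 * ‖∑ i, a i * star (a i)‖ := by
  simp only [star_smul, smul_mul_smul_comm, ← Finset.smul_sum, norm_smul]
  simp [sq]

lemma smul_sum_bd' {A : Type*} [NonUnitalCStarAlgebra A] {κ : Type*} [Fintype κ] (a : κ → A) (t : ℝ) :
    ‖∑ i, star ((t:ℂ) • a i) * ((t:ℂ) • a i)‖ = t ^ 2 * ‖∑ i, star (a i) * a i‖ := by
  simp only [star_smul, smul_mul_smul_comm, ← Finset.smul_sum, norm_smul]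
  simp [sq]

lemma tmul_scale (a : A) (b : B) (t : ℝ) (ht : 0 < t) :
    ((t:ℂ) • a) ⊗ₜ[ℂ] (((t⁻¹ : ℝ):ℂ) • b) = a ⊗ₜ[ℂ] b := by
  rw [TensorProduct.smul_tmul, smul_smul, ← Complex.ofReal_mul, mul_inv_cancel₀ ht.ne']
  simp

lemma HRep.of {κ : Type*} [Fintype κ] (a : κ → A) (b : κ → B) (P Q r : ℝ) (hr : 0 < r) (hP : 0 ≤ P) (hQ : 0 ≤ Q)
    (h : P * Q ≤ r)
    (h1 : ‖∑ i, a i * star (a i)‖ ≤ P ^ 2) (h2 : ‖∑ i, star (b i) * b i‖ ≤ Q ^ 2) :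
    HRep (∑ i, a i ⊗ₜ[ℂ] b i) r := by
  obtain ⟨t, ht, h3, h4⟩ := balance P Q r hr hP hQ h
  let e := (Fintype.equivFin κ).symm
  refine ⟨Fintype.card κ, fun i => (t:ℂ) • a (e i), fun i => ((t⁻¹ : ℝ):ℂ) • b (e i), ?_, ?_, ?_⟩
  · simp only [tmul_scale _ _ t ht]
    rw [e.sum_comp (fun i => a i ⊗ₜ[ℂ] b i)]
  · rw [e.sum_comp (fun i => ((t:ℂ) • a i) * star ((t:ℂ) • a i)), smul_sum_bd]
    exact le_trans (by gcongr) h3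
  · rw [e.sum_comp (fun i => star (((t⁻¹ : ℝ):ℂ) • b i) * (((t⁻¹ : ℝ):ℂ) • b i)), smul_sum_bd']
    exact le_trans (by gcongr) h4

lemma HTRep.of {κ : Type*} [Fintype κ] (a : κ → A) (b : κ → B) (P Q r : ℝ) (hr : 0 < r) (hP : 0 ≤ P) (hQ : 0 ≤ Q)
    (h : P * Q ≤ r)
    (h1 : ‖∑ i, star (a i) * a i‖ ≤ P ^ 2) (h2 : ‖∑ i, b i * star (b i)‖ ≤ Q ^ 2) :
    HTRep (∑ i, a i ⊗ₜ[ℂ] b i) r := by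
  obtain ⟨t, ht, h3, h4⟩ := balance P Q r hr hP hQ h
  let e := (Fintype.equivFin κ).symm
  refine ⟨Fintype.card κ, fun i => (t:ℂ) • a (e i), fun i => ((t⁻¹ : ℝ):ℂ) • b (e i), ?_, ?_, ?_⟩
  · simp only [tmul_scale _ _ t ht]
    rw [e.sum_comp (fun i => a i ⊗ₜ[ℂ] b i)]
  · rw [e.sum_comp (fun i => star ((t:ℂ) • a i) * ((t:ℂ) • a i)), smul_sum_bd']
    exact le_trans (by gcongr) h3
  · rw [e.sum_comp (fun i => (((t⁻¹ : ℝ):ℂ) • b i) * star (((t⁻¹ : ℝ):ℂ) • b i)), smul_sum_bd]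
    exact le_trans (by gcongr) h4

variable {NA : ∀ p : ℕ, Matrix (Fin p) (Fin p) A → ℝ} {NB : ∀ q : ℕ, Matrix (Fin q) (Fin q) B → ℝ}

lemma nonempty_rep (z : A ⊗[ℂ] B) : ∃ (p q : ℕ) (α : Fin p × Fin q → ℂ) (v : Matrix (Fin p) (Fin p) A)
      (w : Matrix (Fin q) (Fin q) B) (β : Fin p × Fin q → ℂ),
      z = ∑ ik : Fin p × Fin q, ∑ jl : Fin p × Fin q,
            (α ik * β jl) • (v ik.1 jl.1 ⊗ₜ[ℂ] w ik.2 jl.2) := by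
  obtain ⟨n, a, b, h⟩ : ∃ (n : ℕ) (a : Fin n → A) (b : Fin n → B), z = ∑ i, a i ⊗ₜ[ℂ] b i := by
    obtain ⟨S, hS⟩ := TensorProduct.exists_finset z
    let e := S.equivFin.symm
    refine ⟨S.card, fun i => (e i).1.1, fun i => (e i).1.2, ?_⟩
    rw [e.sum_comp (fun i : S => i.1.1 ⊗ₜ[ℂ] i.1.2), hS, ← Finset.sum_coe_sort]
  refine ⟨n, n, fun x => if x.1 = x.2 then 1 else 0, Matrix.diagonal a, Matrix.diagonal b,
    fun x => if x.1 = x.2 then 1 else 0, ?_⟩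
  rw [h]
  simp only [Fintype.sum_prod_type, Matrix.diagonal_apply]
  refine Finset.sum_congr rfl fun i _ => ?_
  rw [Finset.sum_eq_single i, Finset.sum_eq_single i, Finset.sum_eq_single i]
  · simp
  all_goals simp +contextual [eq_comm]

lemma osProj_reps (hNA : ∀ p, IsCStarNorm (NA p)) (hNB : ∀ q, IsCStarNorm (NB q)) (z : A ⊗[ℂ] B) (r : ℝ)
    (hr : 0 < r) (hz : osProjNorm NA NB z < r) : HRep z r ∧ HTRep z r := by
  have hne : { r : ℝ | ∃ (p q : ℕ) (α : Fin p × Fin q → ℂ) (v : Matrix (Fin p) (Fin p) A)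
      (w : Matrix (Fin q) (Fin q) B) (β : Fin p × Fin q → ℂ),
      z = ∑ ik : Fin p × Fin q, ∑ jl : Fin p × Fin q,
            (α ik * β jl) • (v ik.1 jl.1 ⊗ₜ[ℂ] w ik.2 jl.2) ∧
      r = Real.sqrt (∑ ik, ‖α ik‖ ^ 2) * NA p v * NB q w *
            Real.sqrt (∑ jl, ‖β jl‖ ^ 2) }.Nonempty := by
    obtain ⟨p, q, α, v, w, β, h⟩ := nonempty_rep z
    exact ⟨_, p, q, α, v, w, β, h, rfl⟩
  obtain ⟨_, ⟨p, q, α, v, w, β, h, rfl⟩, hlt⟩ := exists_lt_of_csInf_lt hne hz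
  have v0 := gcn_nonneg (hNA p) v
  have w0 := gcn_nonneg (hNB q) w
  have sα : ∀ n : ℝ, (n * Real.sqrt (∑ ik, ‖α ik‖ ^ 2)) ^ 2 = n ^ 2 * ∑ ik, ‖α ik‖ ^ 2 := by
    intro n; rw [mul_pow, Real.sq_sqrt (Finset.sum_nonneg fun _ _ => by positivity)]
  have sβ : ∀ n : ℝ, (n * Real.sqrt (∑ ik, ‖β ik‖ ^ 2)) ^ 2 = n ^ 2 * ∑ ik, ‖β ik‖ ^ 2 := by
    intro n; rw [mul_pow, Real.sq_sqrt (Finset.sum_nonneg fun _ _ => by positivity)]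
  constructor
  · have := HRep.of (κ := Fin q × Fin p) (fun x => ∑ i, α (i, x.1) • v i x.2) (fun x => ∑ l, β (x.2, l) • w x.1 l)
      (NA p v * Real.sqrt (∑ ik, ‖α ik‖ ^ 2)) (NB q w * Real.sqrt (∑ ik, ‖β ik‖ ^ 2)) r hr (by positivity) (by positivity)
      (le_trans (le_of_eq (by ring)) hlt.le) 
      (by
        rw [sα, Fintype.sum_prod_type]
        refine (norm_sum_le _ _).trans ?_
        refine (Finset.sum_le_sum fun k _ => row_bound (hNA p) v (fun i => α (i,k))).trans ?_
        rw [← Finset.mul_sum, Finset.sum_comm, Fintype.sum_prod_type])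
      (by
        rw [sβ, Fintype.sum_prod_type, Finset.sum_comm]
        refine (norm_sum_le _ _).trans ?_
        refine (Finset.sum_le_sum fun j _ => col_bound (hNB q) w (fun l => β (j,l))).trans ?_
        rw [← Finset.mul_sum, Fintype.sum_prod_type])
    convert this using 1
    rw [h]
    simp only [Fintype.sum_prod_type, TensorProduct.sum_tmul, TensorProduct.tmul_sum, TensorProduct.smul_tmul_smul]
    rw [Finset.sum_comm]
    refine Finset.sum_congr rfl fun k _ => ?_
    rw [Finset.sum_comm]
    refine Finset.sum_congr rfl fun j _ => ?_
    try rw [Finset.sum_comm]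
  · have := HTRep.of (κ := Fin p × Fin q) (fun x => ∑ j, β (j, x.2) • v x.1 j) (fun x => ∑ k, α (x.1, k) • w k x.2)
      (NA p v * Real.sqrt (∑ ik, ‖β ik‖ ^ 2)) (NB q w * Real.sqrt (∑ ik, ‖α ik‖ ^ 2)) r hr (by positivity) (by positivity)
      (le_trans (le_of_eq (by ring)) hlt.le) 
      (by
        rw [sβ, Fintype.sum_prod_type, Finset.sum_comm]
        refine (norm_sum_le _ _).trans ?_
        refine (Finset.sum_le_sum fun j _ => col_bound (hNA p) v (fun l => β (l, j))).trans ?_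
        rw [← Finset.mul_sum, Finset.sum_comm, Fintype.sum_prod_type])
      (by
        rw [sα, Fintype.sum_prod_type]
        refine (norm_sum_le _ _).trans ?_
        refine (Finset.sum_le_sum fun k _ => row_bound (hNB q) w (fun i => α (k, i))).trans ?_
        rw [← Finset.mul_sum, Fintype.sum_prod_type])
    convert this using 1
    rw [h]
    simp only [Fintype.sum_prod_type, TensorProduct.sum_tmul, TensorProduct.tmul_sum, TensorProduct.smul_tmul_smul]
    refine Finset.sum_congr rfl fun i _ => ?_
    simp only [mul_comm (α _)]
    conv_rhs => rw [Finset.sum_comm]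
    refine Finset.sum_congr rfl fun k _ => ?_
    rw [Finset.sum_comm]
end rep


section emb
open Finset

lemma cnt_ge (L m : ℕ) : (L:ℝ) + 1 - m ≤ ∑ l ∈ range (L+1), ∑ l' ∈ range (L+1), if l' = l + m then (1:ℝ) else 0 := by
  simp only [Finset.sum_ite_eq']
  have h : ∑ l ∈ range (L+1-m), (1:ℝ) ≤ ∑ l ∈ range (L+1), if l + m ∈ range (L+1) then (1:ℝ) else 0 := by
    have h1 : ∑ l ∈ range (L+1-m), (1:ℝ) = ∑ l ∈ range (L+1-m), if l + m ∈ range (L+1) then (1:ℝ) else 0 := by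
      refine sum_congr rfl fun l hl => ?_
      rw [mem_range] at hl
      rw [if_pos (mem_range.2 (by omega))]
    rw [h1]
    refine sum_le_sum_of_subset_of_nonneg (range_subset_range.2 (by omega)) fun _ _ _ => ?_
    split_ifs <;> norm_num
  refine le_trans ?_ h
  simp only [sum_const, card_range, nsmul_eq_mul, mul_one]
  have : L + 1 ≤ (L + 1 - m) + m := by omega
  have h2 : ((L + 1 : ℕ) : ℝ) ≤ (((L + 1 - m) + m : ℕ) : ℝ) := by exact_mod_cast this
  push_cast at h2
  linarith

lemma cnt_ge' (L : ℕ) (k : ℤ) : (L:ℝ) + 1 - k.natAbs ≤ 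
    ∑ l : Fin (L+1), ∑ l' : Fin (L+1), if ((l':ℕ):ℤ) = (l:ℕ) + k then (1:ℝ) else 0 := by
  rcases Int.natAbs_eq k with h | h
  · refine (cnt_ge L k.natAbs).trans (le_of_eq ?_)
    rw [Finset.sum_range]
    refine sum_congr rfl fun l _ => ?_
    rw [Finset.sum_range]
    refine sum_congr rfl fun l' _ => ?_
    congr 1; apply propext; omega
  · refine (cnt_ge L k.natAbs).trans (le_of_eq ?_)
    conv_rhs => rw [Finset.sum_comm]
    rw [Finset.sum_range]
    refine sum_congr rfl fun l _ => ?_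
    rw [Finset.sum_range]
    refine sum_congr rfl fun l' _ => ?_
    congr 1; apply propext; omega

lemma emb_aux {κ : Type*} [Fintype κ] (s : κ → ℝ) (hs : ∀ i, 0 < s i) :
    ∃ (L : ℕ) (k : κ → ℤ), (∀ i, (2:ℝ) ^ k i ≤ s i) ∧ (∀ i, s i < (2:ℝ) ^ (k i + 1)) ∧ 
      ∀ i, ((L:ℝ) + 1) / 2 ≤ (L:ℝ) + 1 - (k i).natAbs := by
  choose k hk using fun i => exists_mem_Ico_zpow (hs i) (one_lt_two : (1:ℝ) < 2)
  refine ⟨2 * ∑ i, (k i).natAbs, k, fun i => (hk i).1, fun i => (hk i).2, fun i => ?_⟩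
  have : (k i).natAbs ≤ ∑ i, (k i).natAbs := single_le_sum (f := fun i => (k i).natAbs) (fun _ _ => Nat.zero_le _) (mem_univ i)
  have h2 : (((k i).natAbs : ℕ) : ℝ) ≤ ((∑ i, (k i).natAbs : ℕ) : ℝ) := by exact_mod_cast this
  rw [Nat.cast_mul]
  push_cast at h2 ⊢
  linarith

lemma emb {κ : Type*} [Fintype κ] (s : κ → ℝ) (hs : ∀ i, 0 < s i) :
    ∃ (p : ℕ) (ψ : Fin p → ℝ) (G : κ → Fin p → Fin p → ℝ), (∑ a, ψ a ^ 2 ≤ 1) ∧ (∀ i a b, 0 ≤ G i a b) ∧ 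
      (∀ i a, ∑ b, G i a b ≤ s i) ∧ (∀ i b, ∑ a, G i a b ≤ (s i)⁻¹) ∧
      ∀ i, ∑ a, ∑ b, G i a b * (ψ a * ψ b) = 1 / 4 := by
  suffices h : ∃ (P : Type) (_ : Fintype P) (ψ : P → ℝ) (G : κ → P → P → ℝ), (∑ a, ψ a ^ 2 ≤ 1) ∧ (∀ i a b, 0 ≤ G i a b) ∧ 
      (∀ i a, ∑ b, G i a b ≤ s i) ∧ (∀ i b, ∑ a, G i a b ≤ (s i)⁻¹) ∧
      ∀ i, ∑ a, ∑ b, G i a b * (ψ a * ψ b) = 1 / 4 by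
    obtain ⟨P, _, ψ, G, h1, h2, h3, h4, h5⟩ := h
    let e := (Fintype.equivFin P).symm
    refine ⟨Fintype.card P, fun a => ψ (e a), fun i a b => G i (e a) (e b), ?_, fun i a b => h2 _ _ _, ?_, ?_, ?_⟩
    · rwa [e.sum_comp (fun a => ψ a ^ 2)]
    · intro i a; rw [e.sum_comp (fun b => G i (e a) b)]; exact h3 _ _
    · intro i b; rw [e.sum_comp (fun a => G i a (e b))]; exact h4 _ _
    · intro i
      rw [← h5 i, ← e.sum_comp]
      refine sum_congr rfl fun a _ => ?_
      rw [← e.sum_comp]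
  obtain ⟨L, k, hk1, hk2, hk3⟩ := emb_aux s hs
  set cnt : κ → ℝ := fun i => ∑ l : Fin (L+1), ∑ l' : Fin (L+1), if ((l':ℕ):ℤ) = (l:ℕ) + k i then (1:ℝ) else 0 with hcnt
  have hc : ∀ i, ((L:ℝ) + 1) / 2 ≤ cnt i := fun i => (hk3 i).trans (cnt_ge' L (k i))
  have hL : (0:ℝ) < (L:ℝ) + 1 := by positivity
  have hc0 : ∀ i, 0 < cnt i := fun i => lt_of_lt_of_le (by positivity) (hc i)
  set c : κ → ℝ := fun i => (L + 1) / (4 * cnt i) with hcd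
  have c0 : ∀ i, 0 ≤ c i := fun i => by have := hc0 i; positivity
  have c1 : ∀ i, c i ≤ 1 / 2 := fun i => by
    have := hc0 i; have := hc i
    simp only [hcd]
    rw [div_le_div_iff₀ (by positivity) (by norm_num)]
    linarith
  have sumP : ∀ f : Fin (L+1) → ℝ, ∑ x : (Σ l : Fin (L+1), Fin (4 ^ (l:ℕ))), f x.1 = ∑ l : Fin (L+1), 4 ^ (l:ℕ) * f l := by
    intro f
    rw [Fintype.sum_sigma]
    simp
  have keyr : ∀ i (l l' : Fin (L+1)), ((l':ℕ):ℤ) = (l:ℕ) + k i → (4:ℝ) ^ (l':ℕ) = 4 ^ (l:ℕ) * (2 ^ k i * 2 ^ k i) := by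
    intro i l l' h
    rw [← zpow_natCast, h, ← mul_zpow, zpow_add₀ (by norm_num), zpow_natCast]
    norm_num
  refine ⟨Σ l : Fin (L+1), Fin (4 ^ (l:ℕ)), inferInstance, fun x => (2 ^ (x.1:ℕ))⁻¹ / Real.sqrt (L+1), 
    fun i x y => if ((y.1:ℕ):ℤ) = (x.1:ℕ) + k i then c i * 2 ^ k i / 4 ^ (y.1:ℕ) else 0, ?_, ?_, ?_, ?_, ?_⟩
  · rw [sumP (fun l => ((2 ^ (l:ℕ))⁻¹ / Real.sqrt (L+1))^2)]
    have : ∀ l : Fin (L+1), (4:ℝ) ^ (l:ℕ) * ((2 ^ (l:ℕ))⁻¹ / Real.sqrt (L+1))^2 = 1 / (L+1) := by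
      intro l
      rw [div_pow, Real.sq_sqrt hL.le, inv_pow, ← pow_mul, mul_comm (l:ℕ) 2, pow_mul]
      norm_num
      field_simp
    simp only [this]
    simp
    rw [mul_inv_cancel₀ hL.ne']
  · intro i a b
    have := c0 i
    dsimp only
    split_ifs <;> positivity
  · intro i x
    rw [sumP (fun l' => if ((l':ℕ):ℤ) = (x.1:ℕ) + k i then c i * 2 ^ k i / 4 ^ (l':ℕ) else 0)]
    have h1 : ∀ l' : Fin (L+1), (4:ℝ) ^ (l':ℕ) * (if ((l':ℕ):ℤ) = (x.1:ℕ) + k i then c i * 2 ^ k i / 4 ^ (l':ℕ) else 0) = 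
        if ((l':ℕ):ℤ) = (x.1:ℕ) + k i then c i * 2 ^ k i else 0 := by
      intro l'; split_ifs
      · field_simp
      · simp
    simp only [h1]
    have h2 : ∑ l' : Fin (L+1), (if ((l':ℕ):ℤ) = (x.1:ℕ) + k i then c i * 2 ^ k i else 0) ≤ c i * 2 ^ k i := by
      rw [← Finset.sum_filter, Finset.sum_const, nsmul_eq_mul]
      have : (univ.filter fun l' : Fin (L+1) => ((l':ℕ):ℤ) = (x.1:ℕ) + k i).card ≤ 1 := by
        rw [Finset.card_le_one]
        intro a ha b hb
        simp at ha hb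
        ext; omega
      have h3 : (((univ.filter fun l' : Fin (L+1) => ((l':ℕ):ℤ) = (x.1:ℕ) + k i).card : ℕ) : ℝ) ≤ 1 := by exact_mod_cast this
      have := c0 i
      exact mul_le_of_le_one_left (by positivity) h3
    have h4 : c i * 2 ^ k i ≤ 1 * s i := mul_le_mul (by linarith [c1 i]) (hk1 i) (by positivity) zero_le_one
    linarith
  · intro i y
    rw [sumP (fun l => if ((y.1:ℕ):ℤ) = (l:ℕ) + k i then c i * 2 ^ k i / 4 ^ (y.1:ℕ) else 0)]
    have h1 : ∀ l : Fin (L+1), (4:ℝ) ^ (l:ℕ) * (if ((y.1:ℕ):ℤ) = (l:ℕ) + k i then c i * 2 ^ k i / 4 ^ (y.1:ℕ) else 0) = 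
        if ((y.1:ℕ):ℤ) = (l:ℕ) + k i then c i * (2 ^ k i)⁻¹ else 0 := by
      intro l; split_ifs with h
      · rw [keyr i l _ h]; field_simp
      · simp
    simp only [h1]
    have h2 : ∑ l : Fin (L+1), (if ((y.1:ℕ):ℤ) = (l:ℕ) + k i then c i * (2 ^ k i)⁻¹ else 0) ≤ c i * (2 ^ k i)⁻¹ := by
      rw [← Finset.sum_filter, Finset.sum_const, nsmul_eq_mul]
      have : (univ.filter fun l : Fin (L+1) => ((y.1:ℕ):ℤ) = (l:ℕ) + k i).card ≤ 1 := by
        rw [Finset.card_le_one]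
        intro a ha b hb
        simp at ha hb
        ext; omega
      have h3 : (((univ.filter fun l : Fin (L+1) => ((y.1:ℕ):ℤ) = (l:ℕ) + k i).card : ℕ) : ℝ) ≤ 1 := by exact_mod_cast this
      have := c0 i
      exact mul_le_of_le_one_left (by positivity) h3
    refine h2.trans ?_
    have h5 := hk2 i
    rw [zpow_add_one₀ (by norm_num)] at h5
    have h6 := hs i
    rw [← div_eq_mul_inv, div_le_iff₀ (by positivity), inv_mul_eq_div, le_div_iff₀ h6]
    have h7 : c i * s i ≤ 1/2 * (2 ^ k i * 2) := mul_le_mul (c1 i) h5.le h6.le (by norm_num)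
    linarith
  · intro i
    have h1 : ∀ l l' : Fin (L+1), (4:ℝ) ^ (l:ℕ) * (4 ^ (l':ℕ) * ((if ((l':ℕ):ℤ) = (l:ℕ) + k i then c i * 2 ^ k i / 4 ^ (l':ℕ) else 0) * 
       ((2 ^ (l:ℕ))⁻¹ / Real.sqrt (L+1) * ((2 ^ (l':ℕ))⁻¹ / Real.sqrt (L+1))))) = 
       c i / (L+1) * if ((l':ℕ):ℤ) = (l:ℕ) + k i then 1 else 0 := by
      intro l l'
      split_ifs with h
      · have e1 : (2:ℝ) ^ (l':ℕ) = 2 ^ (l:ℕ) * 2 ^ k i := by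
          rw [← zpow_natCast, h, zpow_add₀ (by norm_num), zpow_natCast]
        have e2 : (4:ℝ) ^ (l:ℕ) = 2 ^ (l:ℕ) * 2 ^ (l:ℕ) := by rw [← mul_pow]; norm_num
        have e3 : Real.sqrt (L+1) * Real.sqrt (L+1) = (L:ℝ)+1 := Real.mul_self_sqrt hL.le
        rw [e1, e2, div_mul_div_comm, e3]
        field_simp
      · simp
    rw [sumP (fun l => ∑ y : (Σ l : Fin (L+1), Fin (4 ^ (l:ℕ))), (if ((y.1:ℕ):ℤ) = (l:ℕ) + k i then c i * 2 ^ k i / 4 ^ (y.1:ℕ) else 0) * 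
       ((2 ^ (l:ℕ))⁻¹ / Real.sqrt (L+1) * ((2 ^ (y.1:ℕ))⁻¹ / Real.sqrt (L+1))))]
    have h2 : ∀ l : Fin (L+1), ∑ y : (Σ l : Fin (L+1), Fin (4 ^ (l:ℕ))), (if ((y.1:ℕ):ℤ) = (l:ℕ) + k i then c i * 2 ^ k i / 4 ^ (y.1:ℕ) else 0) * 
       ((2 ^ (l:ℕ))⁻¹ / Real.sqrt (L+1) * ((2 ^ (y.1:ℕ))⁻¹ / Real.sqrt (L+1))) = 
       ∑ l' : Fin (L+1), 4 ^ (l':ℕ) * ((if ((l':ℕ):ℤ) = (l:ℕ) + k i then c i * 2 ^ k i / 4 ^ (l':ℕ) else 0) * 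
       ((2 ^ (l:ℕ))⁻¹ / Real.sqrt (L+1) * ((2 ^ (l':ℕ))⁻¹ / Real.sqrt (L+1)))) := fun l =>
      sumP (fun l' => (if ((l':ℕ):ℤ) = (l:ℕ) + k i then c i * 2 ^ k i / 4 ^ (l':ℕ) else 0) * 
       ((2 ^ (l:ℕ))⁻¹ / Real.sqrt (L+1) * ((2 ^ (l':ℕ))⁻¹ / Real.sqrt (L+1))))
    simp only [h2, Finset.mul_sum, h1]
    simp only [← Finset.mul_sum]
    change c i / (L+1) * cnt i = _
    have := (hc0 i).ne'
    simp only [hcd]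
    field_simp
end emb


section nu
open Filter Topology
variable {𝒜 : Type*} [NonUnitalCStarAlgebra 𝒜] {ℬ : Type*} [NonUnitalCStarAlgebra ℬ]

/-- compression of the unitization to the algebra -/
def compr (e : 𝒜) : Unitization ℂ 𝒜 →ₗ[ℂ] 𝒜 where
  toFun x := x.fst • (e * e) + e * x.snd * e
  map_add' x y := by simp [add_smul, mul_add, add_mul]; abel
  map_smul' c x := by simp [smul_smul, smul_mul_assoc, mul_smul_comm]

lemma compr_inr_eq (e : 𝒜) (x : Unitization ℂ 𝒜) : ((compr e x : 𝒜) : Unitization ℂ 𝒜) = e * x * e := by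
  induction x with
  | inl_add_inr r a =>
    ext
    · simp [compr]
    · simp [compr, mul_add, add_mul, smul_mul_assoc]

lemma compr_norm (e : 𝒜) (he : ‖e‖ ≤ 1) (x : Unitization ℂ 𝒜) : ‖compr e x‖ ≤ ‖x‖ := by
  rw [← Unitization.norm_inr (𝕜 := ℂ), compr_inr_eq]
  have h : ‖(e : Unitization ℂ 𝒜)‖ ≤ 1 := by rwa [Unitization.norm_inr]
  calc _ ≤ ‖(e : Unitization ℂ 𝒜)‖ * ‖x‖ * ‖(e : Unitization ℂ 𝒜)‖ := norm_mul₃_le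
    _ ≤ 1 * ‖x‖ * 1 := by gcongr
    _ = _ := by ring

lemma compr_inr (e a : 𝒜) : compr e (a : Unitization ℂ 𝒜) = e * a * e := by simp [compr]

lemma uinr_sum {ι : Type*} [Fintype ι] (f : ι → 𝒜) :
    ((∑ i, f i : 𝒜) : Unitization ℂ 𝒜) = ∑ i, (f i : Unitization ℂ 𝒜) :=
  map_sum (Unitization.inrHom ℂ ℂ 𝒜) f Finset.univ

lemma exists_au (𝒜 : Type*) [NonUnitalCStarAlgebra 𝒜] : ∃ l : Filter 𝒜, l.NeBot ∧ (∀ᶠ e in l, ‖e‖ ≤ 1) ∧ 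
    ∀ a : 𝒜, Tendsto (fun e => e * a * e) l (𝓝 a) := by
  let _ := CStarAlgebra.spectralOrder 𝒜
  let _ := CStarAlgebra.spectralOrderedRing 𝒜
  have h := CStarAlgebra.increasingApproximateUnit 𝒜
  refine ⟨CStarAlgebra.approximateUnit 𝒜, inferInstance, h.eventually_norm, fun a => ?_⟩
  have h1 := h.tendsto_mul_left a
  have h2 := h.tendsto_mul_right a
  rw [tendsto_iff_norm_sub_tendsto_zero] at h1 h2 ⊢
  have h3 : Tendsto (fun e => ‖e * a - a‖ + ‖a * e - a‖) (CStarAlgebra.approximateUnit 𝒜) (𝓝 0) := by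
    simpa using h2.add h1
  refine tendsto_of_tendsto_of_tendsto_of_le_of_le' tendsto_const_nhds h3 (Eventually.of_forall fun _ => norm_nonneg _) ?_
  filter_upwards [h.eventually_norm] with e he
  have : e * a * e - a = (e * a - a) * e + (a * e - a) := by noncomm_ring
  rw [this]
  refine (norm_add_le _ _).trans ?_
  gcongr
  calc _ ≤ ‖e * a - a‖ * ‖e‖ := norm_mul_le _ _
    _ ≤ ‖e * a - a‖ * 1 := by gcongr
    _ = _ := mul_one _

theorem groth_nu (V : 𝒜 →ₗ[ℂ] ℬ →ₗ[ℂ] ℂ) (M : ℝ) (hM : 0 ≤ M)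
    (hV : ∀ x y, ‖V x y‖ ≤ M * ‖x‖ * ‖y‖) {ι : Type*} [Fintype ι] (a : ι → 𝒜) (b : ι → ℬ)
    (r : ℝ) (hr : 0 < r)
    (h1 : ‖∑ i, a i * star (a i)‖ ≤ r) (h2 : ‖∑ i, star (a i) * a i‖ ≤ r)
    (h3 : ‖∑ i, b i * star (b i)‖ ≤ r) (h4 : ‖∑ i, star (b i) * b i‖ ≤ r) :
    ‖∑ i, V (a i) (b i)‖ ≤ 20000 * M * r := by
  obtain ⟨l, _, le, lt⟩ := exists_au 𝒜
  obtain ⟨l', _, le', lt'⟩ := exists_au ℬ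
  have key : ∀ e : 𝒜, ‖e‖ ≤ 1 → ∀ f : ℬ, ‖f‖ ≤ 1 → ‖∑ i, V (e * a i * e) (f * b i * f)‖ ≤ 20000 * M * r := by
    intro e he f hf
    have := groth (V.compl₁₂ (compr e) (compr f)) M hM (fun x y => by
        refine (hV _ _).trans ?_
        gcongr
        · exact compr_norm e he x
        · exact compr_norm f hf y) 
      (fun i => (a i : Unitization ℂ 𝒜)) (fun i => (b i : Unitization ℂ ℬ)) r hr
      (by
        simp only [← Unitization.inr_star, ← Unitization.inr_mul]
        rw [← Unitization.norm_inr (𝕜 := ℂ)] at h1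
        rwa [uinr_sum] at h1)
      (by
        simp only [← Unitization.inr_star, ← Unitization.inr_mul]
        rw [← Unitization.norm_inr (𝕜 := ℂ)] at h2
        rwa [uinr_sum] at h2)
      (by
        simp only [← Unitization.inr_star, ← Unitization.inr_mul]
        rw [← Unitization.norm_inr (𝕜 := ℂ)] at h3
        rwa [uinr_sum] at h3)
      (by
        simp only [← Unitization.inr_star, ← Unitization.inr_mul]
        rw [← Unitization.norm_inr (𝕜 := ℂ)] at h4
        rwa [uinr_sum] at h4)
    simpa only [LinearMap.compl₁₂_apply, compr_inr] using this
  have ht : Tendsto (fun q : 𝒜 × ℬ => ∑ i, V (q.1 * a i * q.1) (q.2 * b i * q.2)) (l ×ˢ l') (𝓝 (∑ i, V (a i) (b i))) := by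
    refine tendsto_finsetSum _ fun i _ => ?_
    let Vc := V.mkContinuous₂ M hV
    have hc : Continuous (fun z : 𝒜 × ℬ => Vc z.1 z.2) := by fun_prop
    exact (hc.tendsto (a i, b i)).comp (((lt (a i)).comp tendsto_fst).prodMk_nhds ((lt' (b i)).comp tendsto_snd))
  refine le_of_tendsto ht.norm ?_
  have : ∀ᶠ q : 𝒜 × ℬ in l ×ˢ l', ‖q.1‖ ≤ 1 ∧ ‖q.2‖ ≤ 1 := 
    (tendsto_fst.eventually le).and (tendsto_snd.eventually le')
  filter_upwards [this] with q hq
  exact key q.1 hq.1 q.2 hq.2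
end nu


section t2
variable {A : Type*} [NonUnitalCStarAlgebra A]

lemma smul_mul_star_eq (t : ℝ) (ht : 0 ≤ t) (x : A) :
    ((Real.sqrt t : ℂ) • x) * star ((Real.sqrt t : ℂ) • x) = (t:ℂ) • (x * star x) := by
  rw [star_smul, smul_mul_smul_comm]
  congr 1
  rw [Complex.star_def, Complex.conj_ofReal, ← Complex.ofReal_mul, Real.mul_self_sqrt ht]

lemma smul_star_mul_eq (t : ℝ) (ht : 0 ≤ t) (x : A) :
    star ((Real.sqrt t : ℂ) • x) * ((Real.sqrt t : ℂ) • x) = (t:ℂ) • (star x * x) := by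
  rw [star_smul, smul_mul_smul_comm]
  congr 1
  rw [Complex.star_def, Complex.conj_ofReal, ← Complex.ofReal_mul, Real.mul_self_sqrt ht]

lemma pos_sum_norm {κ : Type*} [Fintype κ] (x : κ → A) (c s : κ → ℝ) (hc : ∀ i, 0 ≤ c i) (hs : ∀ i, c i ≤ s i) :
    ‖∑ i, (c i : ℂ) • (x i * star (x i))‖ ≤ ‖∑ i, (s i : ℂ) • (x i * star (x i))‖ := by
  let _ := CStarAlgebra.spectralOrder A
  let _ := CStarAlgebra.spectralOrderedRing A
  have pos : ∀ t : ℝ, 0 ≤ t → ∀ x : A, 0 ≤ (t:ℂ) • (x * star x) := by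
    intro t ht x
    rw [← smul_mul_star_eq t ht]
    exact mul_star_self_nonneg _
  refine CStarAlgebra.norm_le_norm_of_nonneg_of_le (Finset.sum_nonneg fun i _ => pos _ (hc i) _) ?_
  refine Finset.sum_le_sum fun i _ => ?_
  rw [← sub_nonneg, ← sub_smul, ← Complex.ofReal_sub]
  exact pos _ (sub_nonneg.2 (hs i)) _

lemma pos_sum_norm' {κ : Type*} [Fintype κ] (x : κ → A) (c s : κ → ℝ) (hc : ∀ i, 0 ≤ c i) (hs : ∀ i, c i ≤ s i) :
    ‖∑ i, (c i : ℂ) • (star (x i) * x i)‖ ≤ ‖∑ i, (s i : ℂ) • (star (x i) * x i)‖ := by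
  simpa only [star_star] using pos_sum_norm (fun i => star (x i)) c s hc hs

/-- a C-star algebra structure on the matrix algebra -/
@[reducible] def matCS (p : ℕ) (A : Type*) [NonUnitalCStarAlgebra A] : NonUnitalCStarAlgebra (CStarMatrix (Fin p) (Fin p) A) :=
  letI := CStarAlgebra.spectralOrder A
  letI := CStarAlgebra.spectralOrderedRing A
  inferInstance

attribute [local instance] matCS

def diagHom (p : ℕ) (A : Type*) [NonUnitalCStarAlgebra A] : (Fin p → A) →⋆ₙₐ[ℂ] CStarMatrix (Fin p) (Fin p) A where
  toFun d := CStarMatrix.ofMatrix (Matrix.diagonal d)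
  map_smul' c d := congrArg CStarMatrix.ofMatrix (Matrix.diagonal_smul c d)
  map_zero' := congrArg CStarMatrix.ofMatrix Matrix.diagonal_zero
  map_add' c d := congrArg CStarMatrix.ofMatrix (Matrix.diagonal_add c d).symm
  map_mul' c d := congrArg CStarMatrix.ofMatrix (Matrix.diagonal_mul_diagonal c d).symm
  map_star' c := congrArg CStarMatrix.ofMatrix (Matrix.diagonal_conjTranspose c).symm

lemma diag_norm {p : ℕ} (d : Fin p → A) (r : ℝ) (hr : 0 ≤ r) (h : ∀ i, ‖d i‖ ≤ r) :
    ‖(CStarMatrix.ofMatrix (Matrix.diagonal d) : CStarMatrix (Fin p) (Fin p) A)‖ ≤ r := by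
  have := NonUnitalStarAlgHom.norm_apply_le (diagHom p A) d
  exact this.trans ((pi_norm_le_iff_of_nonneg hr).2 h)

lemma mat_norm {p : ℕ} {N : Matrix (Fin p) (Fin p) A → ℝ} (h : IsCStarNorm N) (v : CStarMatrix (Fin p) (Fin p) A) : 
    N (CStarMatrix.ofMatrix.symm v) = ‖v‖ := by
  refine cn_unique (𝒞 := CStarMatrix (Fin p) (Fin p) A) (N := fun v => N (CStarMatrix.ofMatrix.symm v)) ?_ v
  exact ⟨h.add_le, h.smul_eq, h.eq_zero_of, h.mul_le, h.star_mul_self⟩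

def msingle {p : ℕ} (i j : Fin p) (a : A) : CStarMatrix (Fin p) (Fin p) A := CStarMatrix.ofMatrix (Matrix.single i j a)

lemma msingle_mul_star {p : ℕ} (i j : Fin p) (a : A) : 
    msingle i j a * star (msingle i j a) = msingle i i (a * star a) := by
  change Matrix.single i j a * star (Matrix.single i j a) = _
  rw [Matrix.star_eq_conjTranspose, Matrix.conjTranspose_single, Matrix.single_mul_single_same]
  rfl

lemma star_mul_msingle {p : ℕ} (i j : Fin p) (a : A) : 
    star (msingle i j a) * msingle i j a = msingle j j (star a * a) := by
  change star (Matrix.single i j a) * (Matrix.single i j a) = _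
  rw [Matrix.star_eq_conjTranspose, Matrix.conjTranspose_single, Matrix.single_mul_single_same]
  rfl

lemma sum_msingle {p : ℕ} (d : Fin p → A) : ∑ i, msingle i i (d i) = CStarMatrix.ofMatrix (Matrix.diagonal d) := by
  change ∑ i, Matrix.single i i (d i) = Matrix.diagonal d
  exact Matrix.sum_single_eq_diagonal d

end t2


section t3
attribute [local instance] matCS

lemma msingle_sum {A : Type*} [NonUnitalCStarAlgebra A] {p : ℕ} {κ : Type*} (s : Finset κ) (i j : Fin p) (f : κ → A) :
    msingle i j (∑ k ∈ s, f k) = ∑ k ∈ s, msingle i j (f k) := by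
  change Matrix.single i j (∑ k ∈ s, f k) = ∑ k ∈ s, Matrix.single i j (f k)
  exact map_sum (Matrix.singleAddMonoidHom i j) f s

lemma fam_bd {A : Type*} [NonUnitalCStarAlgebra A] {κ : Type*} [Fintype κ] {p : ℕ} (x : κ → A) (s : κ → ℝ)
    (G : κ → Fin p → Fin p → ℝ) (hG : ∀ i a b, 0 ≤ G i a b) (hs : ∀ i a, ∑ b, G i a b ≤ s i) (ε : ℝ) (hε : 0 ≤ ε)
    (h : ‖∑ i, (s i : ℂ) • (x i * star (x i))‖ ≤ ε) :
    ‖∑ k : κ × Fin p × Fin p, msingle k.2.1 k.2.2 ((Real.sqrt (G k.1 k.2.1 k.2.2) : ℂ) • x k.1) *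
      star (msingle k.2.1 k.2.2 ((Real.sqrt (G k.1 k.2.1 k.2.2) : ℂ) • x k.1))‖ ≤ ε := by
  have : ∑ k : κ × Fin p × Fin p, msingle k.2.1 k.2.2 ((Real.sqrt (G k.1 k.2.1 k.2.2) : ℂ) • x k.1) *
      star (msingle k.2.1 k.2.2 ((Real.sqrt (G k.1 k.2.1 k.2.2) : ℂ) • x k.1)) =
      CStarMatrix.ofMatrix (Matrix.diagonal fun a => ∑ i, ((∑ b, G i a b : ℝ) : ℂ) • (x i * star (x i))) := by
    rw [← sum_msingle]
    simp only [msingle_mul_star, msingle_sum, Fintype.sum_prod_type]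
    rw [Finset.sum_comm]
    refine Finset.sum_congr rfl fun a _ => Finset.sum_congr rfl fun i _ => ?_
    rw [← msingle_sum]
    congr 1
    rw [Complex.ofReal_sum, Finset.sum_smul]
    exact Finset.sum_congr rfl fun b _ => smul_mul_star_eq _ (hG _ _ _) _
  rw [this]
  refine diag_norm _ _ hε fun a => le_trans ?_ h
  exact pos_sum_norm _ _ _ (fun i => Finset.sum_nonneg fun b _ => hG _ _ _) fun i => hs i a

lemma fam_bd' {A : Type*} [NonUnitalCStarAlgebra A] {κ : Type*} [Fintype κ] {p : ℕ} (x : κ → A) (s : κ → ℝ)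
    (G : κ → Fin p → Fin p → ℝ) (hG : ∀ i a b, 0 ≤ G i a b) (hs : ∀ i b, ∑ a, G i a b ≤ s i) (ε : ℝ) (hε : 0 ≤ ε)
    (h : ‖∑ i, (s i : ℂ) • (star (x i) * x i)‖ ≤ ε) :
    ‖∑ k : κ × Fin p × Fin p, star (msingle k.2.1 k.2.2 ((Real.sqrt (G k.1 k.2.1 k.2.2) : ℂ) • x k.1)) *
      (msingle k.2.1 k.2.2 ((Real.sqrt (G k.1 k.2.1 k.2.2) : ℂ) • x k.1))‖ ≤ ε := by
  have : ∑ k : κ × Fin p × Fin p, star (msingle k.2.1 k.2.2 ((Real.sqrt (G k.1 k.2.1 k.2.2) : ℂ) • x k.1)) *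
      (msingle k.2.1 k.2.2 ((Real.sqrt (G k.1 k.2.1 k.2.2) : ℂ) • x k.1)) =
      CStarMatrix.ofMatrix (Matrix.diagonal fun b => ∑ i, ((∑ a, G i a b : ℝ) : ℂ) • (star (x i) * (x i))) := by
    rw [← sum_msingle]
    simp only [star_mul_msingle, msingle_sum, Fintype.sum_prod_type]
    rw [Finset.sum_congr rfl fun i _ => Finset.sum_comm]
    rw [Finset.sum_comm]
    refine Finset.sum_congr rfl fun a _ => Finset.sum_congr rfl fun i _ => ?_
    rw [← msingle_sum]
    congr 1
    rw [Complex.ofReal_sum, Finset.sum_smul]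
    exact Finset.sum_congr rfl fun b _ => smul_star_mul_eq _ (hG _ _ _) _
  rw [this]
  refine diag_norm _ _ hε fun a => le_trans ?_ h
  exact pos_sum_norm' _ _ _ (fun i => Finset.sum_nonneg fun b _ => hG _ _ _) fun i => hs i a

variable {A B : Type u} [NonUnitalCStarAlgebra A] [NonUnitalCStarAlgebra B]

def schurForm (U : A →ₗ[ℂ] B →ₗ[ℂ] ℂ) {p : ℕ} (ψ : Fin p → ℝ) :
    CStarMatrix (Fin p) (Fin p) A →ₗ[ℂ] CStarMatrix (Fin p) (Fin p) B →ₗ[ℂ] ℂ :=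
  LinearMap.mk₂ ℂ (fun X Y => ∑ a, ∑ b, ((ψ a * ψ b : ℝ) : ℂ) * U (X a b) (Y a b))
    (fun X X' Y => by
      simp only [CStarMatrix.add_apply, map_add, LinearMap.add_apply, mul_add, Finset.sum_add_distrib])
    (fun c X Y => by
      simp only [CStarMatrix.smul_apply, map_smul, LinearMap.smul_apply, smul_eq_mul, Finset.mul_sum, mul_left_comm])
    (fun X Y Y' => by
      simp only [CStarMatrix.add_apply, map_add, mul_add, Finset.sum_add_distrib])
    (fun c X Y => by
      simp only [CStarMatrix.smul_apply, map_smul, smul_eq_mul, Finset.mul_sum, mul_left_comm])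

lemma schurForm_apply (U : A →ₗ[ℂ] B →ₗ[ℂ] ℂ) {p : ℕ} (ψ : Fin p → ℝ) (X : CStarMatrix (Fin p) (Fin p) A)
    (Y : CStarMatrix (Fin p) (Fin p) B) :
    schurForm U ψ X Y = ∑ a, ∑ b, ((ψ a * ψ b : ℝ) : ℂ) * U (X a b) (Y a b) := rfl

lemma schurForm_single (U : A →ₗ[ℂ] B →ₗ[ℂ] ℂ) {p : ℕ} (ψ : Fin p → ℝ) (a b : Fin p) (x : A) (y : B) :
    schurForm U ψ (msingle a b x) (msingle a b y) = ((ψ a * ψ b : ℝ) : ℂ) * U x y := by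
  rw [schurForm_apply, Finset.sum_eq_single a, Finset.sum_eq_single b]
  · congr 2
    · congr 1; exact Matrix.single_apply_same a b x
    · exact Matrix.single_apply_same a b y
  · intro b' _ hb
    have : (msingle a b x) a b' = 0 := Matrix.single_apply_of_col_ne a a hb.symm x
    rw [this]; simp
  · simp
  · intro a' _ ha
    refine Finset.sum_eq_zero fun b' _ => ?_
    have : (msingle a b x) a' b' = 0 := Matrix.single_apply_of_row_ne ha.symm b b' x
    rw [this]; simp
  · simp

theorem thmII {NA : ∀ p : ℕ, Matrix (Fin p) (Fin p) A → ℝ} {NB : ∀ q : ℕ, Matrix (Fin q) (Fin q) B → ℝ}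
    (hNA : ∀ p, IsCStarNorm (NA p)) (hNB : ∀ q, IsCStarNorm (NB q)) (U : A →ₗ[ℂ] B →ₗ[ℂ] ℂ) (M : ℝ) (hM : 0 ≤ M)
    (hU : ∀ (p : ℕ) (v : Matrix (Fin p) (Fin p) A) (w : Matrix (Fin p) (Fin p) B) (ψ : Fin p → ℝ), ∑ a, ψ a ^ 2 ≤ 1 →
      ‖∑ a, ∑ b, ((ψ a * ψ b : ℝ) : ℂ) * U (v a b) (w a b)‖ ≤ M * NA p v * NB p w)
    {κ : Type*} [Fintype κ] (x : κ → A) (y : κ → B) (s : κ → ℝ) (hs : ∀ i, 0 < s i) (ε : ℝ) (hε : 0 < ε)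
    (h1 : ‖∑ i, (s i : ℂ) • (x i * star (x i))‖ ≤ ε)
    (h2 : ‖∑ i, (((s i)⁻¹ : ℝ) : ℂ) • (star (x i) * x i)‖ ≤ ε)
    (h3 : ‖∑ i, (s i : ℂ) • (y i * star (y i))‖ ≤ ε)
    (h4 : ‖∑ i, (((s i)⁻¹ : ℝ) : ℂ) • (star (y i) * y i)‖ ≤ ε) :
    ‖∑ i, U (x i) (y i)‖ ≤ 80000 * M * ε := by
  obtain ⟨p, ψ, G, e1, e2, e3, e4, e5⟩ := emb s hs
  have key := groth_nu (schurForm U ψ) M hM (fun X Y => by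
      have h0 := hU p (CStarMatrix.ofMatrix.symm X) (CStarMatrix.ofMatrix.symm Y) ψ e1
      rw [mat_norm (hNA p), mat_norm (hNB p)] at h0
      exact h0)
    (fun k : κ × Fin p × Fin p => msingle k.2.1 k.2.2 ((Real.sqrt (G k.1 k.2.1 k.2.2) : ℂ) • x k.1))
    (fun k : κ × Fin p × Fin p => msingle k.2.1 k.2.2 ((Real.sqrt (G k.1 k.2.1 k.2.2) : ℂ) • y k.1))
    ε hε (fam_bd x s G e2 e3 ε hε.le h1) (fam_bd' x _ G e2 e4 ε hε.le h2)
    (fam_bd y s G e2 e3 ε hε.le h3) (fam_bd' y _ G e2 e4 ε hε.le h4)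
  have : ∑ k : κ × Fin p × Fin p, schurForm U ψ (msingle k.2.1 k.2.2 ((Real.sqrt (G k.1 k.2.1 k.2.2) : ℂ) • x k.1))
      (msingle k.2.1 k.2.2 ((Real.sqrt (G k.1 k.2.1 k.2.2) : ℂ) • y k.1)) = (1/4 : ℂ) * ∑ i, U (x i) (y i) := by
    rw [Fintype.sum_prod_type, Finset.mul_sum]
    refine Finset.sum_congr rfl fun i _ => ?_
    rw [Fintype.sum_prod_type]
    have h5 : (1/4 : ℂ) = ∑ a, ∑ b, (((G i a b * (ψ a * ψ b) : ℝ)) : ℂ) := by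
      simp only [← Complex.ofReal_sum]
      rw [e5]; norm_num
    rw [h5, Finset.sum_mul]
    refine Finset.sum_congr rfl fun a _ => ?_
    rw [Finset.sum_mul]
    refine Finset.sum_congr rfl fun b _ => ?_
    rw [schurForm_single]
    simp only [map_smul, LinearMap.smul_apply, smul_eq_mul]
    have h6 : ((Real.sqrt (G i a b) : ℝ):ℂ) * ((Real.sqrt (G i a b) : ℝ):ℂ) = (G i a b : ℝ) := by
      rw [← Complex.ofReal_mul, Real.mul_self_sqrt (e2 _ _ _)]
    rw [Complex.ofReal_mul (G i a b), ← h6]; ring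
  replace key := (congrArg norm this).symm.le.trans key
  rw [norm_mul] at key
  norm_num at key
  linarith

end t3


section s1
open Matrix
open scoped ComplexOrder MatrixOrder Matrix.Norms.L2Operator

/-- action of a scalar matrix on a family of vectors -/
def act {E : Type*} [AddCommGroup E] [Module ℂ E] {m n : Type*} [Fintype n] (W : Matrix m n ℂ) (a : n → E) (i : m) : E :=
  ∑ k, W i k • a k

lemma act_act {E : Type*} [AddCommGroup E] [Module ℂ E] {m n l : Type*} [Fintype n] [Fintype l] (W : Matrix m n ℂ)
    (V : Matrix n l ℂ) (a : l → E) : act W (act V a) = act (W * V) a := by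
  funext i
  simp only [act, Finset.smul_sum, smul_smul, Matrix.mul_apply, Finset.sum_smul]
  rw [Finset.sum_comm]

lemma act_one {E : Type*} [AddCommGroup E] [Module ℂ E] {n : Type*} [Fintype n] [DecidableEq n] (a : n → E) :
    act (1 : Matrix n n ℂ) a = a := by
  funext i
  simp [act, Matrix.one_apply]

variable {A : Type*} [NonUnitalCStarAlgebra A]
variable {m n l : Type*} [Fintype m] [Fintype n] [Fintype l] [DecidableEq n]

lemma quad (W : Matrix m n ℂ) (a : n → A) :
    ∑ i, act W a i * star (act W a i) = ∑ k, ∑ l, (Wᴴ * W) l k • (a k * star (a l)) := by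
  simp only [act, star_sum, Finset.sum_mul_sum, star_smul, smul_mul_smul_comm, Matrix.mul_apply, Finset.sum_smul,
    Matrix.conjTranspose_apply]
  rw [Finset.sum_comm]
  refine Finset.sum_congr rfl fun k _ => ?_
  rw [Finset.sum_comm]
  refine Finset.sum_congr rfl fun l _ => Finset.sum_congr rfl fun i _ => ?_
  rw [mul_comm]

lemma quad' (W : Matrix m n ℂ) (a : n → A) :
    ∑ i, star (act W a i) * act W a i = ∑ k, ∑ l, (Wᴴ * W) k l • (star (a k) * a l) := by
  simp only [act, star_sum, Finset.sum_mul_sum, star_smul, smul_mul_smul_comm, Matrix.mul_apply, Finset.sum_smul,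
    Matrix.conjTranspose_apply]
  rw [Finset.sum_comm]
  refine Finset.sum_congr rfl fun k _ => ?_
  rw [Finset.sum_comm]

lemma quad_iso (W : Matrix m n ℂ) (h : Wᴴ * W = 1) (a : n → A) :
    ∑ i, act W a i * star (act W a i) = ∑ k, a k * star (a k) := by
  rw [quad, h]; simp [Matrix.one_apply]

lemma quad_iso' (W : Matrix m n ℂ) (h : Wᴴ * W = 1) (a : n → A) :
    ∑ i, star (act W a i) * act W a i = ∑ k, star (a k) * a k := by
  rw [quad', h]; simp [Matrix.one_apply]

lemma act_contr (T : Matrix m n ℂ) (hT : (1 - Tᴴ * T).PosSemidef) (a : n → A) :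
    ‖∑ i, act T a i * star (act T a i)‖ ≤ ‖∑ k, a k * star (a k)‖ := by
  let _ := CStarAlgebra.spectralOrder A
  let _ := CStarAlgebra.spectralOrderedRing A
  obtain ⟨R, hR⟩ := CStarAlgebra.nonneg_iff_eq_star_mul_self.mp hT.nonneg
  rw [Matrix.star_eq_conjTranspose] at hR
  refine CStarAlgebra.norm_le_norm_of_nonneg_of_le (Finset.sum_nonneg fun i _ => mul_star_self_nonneg _) ?_
  have : ∑ k, a k * star (a k) = ∑ i, act T a i * star (act T a i) + ∑ i, act R a i * star (act R a i) := by
    rw [quad, quad, ← hR, ← Finset.sum_add_distrib]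
    simp only [← Finset.sum_add_distrib, ← add_smul, ← Matrix.add_apply]
    simp [Matrix.one_apply]
  rw [this]
  exact le_add_of_nonneg_right (Finset.sum_nonneg fun i _ => mul_star_self_nonneg _)

lemma act_contr' (T : Matrix m n ℂ) (hT : (1 - Tᴴ * T).PosSemidef) (a : n → A) :
    ‖∑ i, star (act T a i) * act T a i‖ ≤ ‖∑ k, star (a k) * a k‖ := by
  let _ := CStarAlgebra.spectralOrder A
  let _ := CStarAlgebra.spectralOrderedRing A
  obtain ⟨R, hR⟩ := CStarAlgebra.nonneg_iff_eq_star_mul_self.mp hT.nonneg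
  rw [Matrix.star_eq_conjTranspose] at hR
  refine CStarAlgebra.norm_le_norm_of_nonneg_of_le (Finset.sum_nonneg fun i _ => star_mul_self_nonneg _) ?_
  have : ∑ k, star (a k) * (a k) = ∑ i, star (act T a i) * (act T a i) + ∑ i, star (act R a i) * (act R a i) := by
    rw [quad', quad', ← hR, ← Finset.sum_add_distrib]
    simp only [← Finset.sum_add_distrib, ← add_smul, ← Matrix.add_apply]
    simp [Matrix.one_apply]
  rw [this]
  exact le_add_of_nonneg_right (Finset.sum_nonneg fun i _ => star_mul_self_nonneg _)

lemma drop_norm {n : ℕ} (a : Fin (n+1) → A) :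
    ‖∑ i : Fin n, a i.succ * star (a i.succ)‖ ≤ ‖∑ k, a k * star (a k)‖ := by
  let _ := CStarAlgebra.spectralOrder A
  let _ := CStarAlgebra.spectralOrderedRing A
  refine CStarAlgebra.norm_le_norm_of_nonneg_of_le (Finset.sum_nonneg fun i _ => mul_star_self_nonneg _) ?_
  rw [Fin.sum_univ_succ]
  exact le_add_of_nonneg_left (mul_star_self_nonneg _)

lemma drop_norm' {n : ℕ} (a : Fin (n+1) → A) :
    ‖∑ i : Fin n, star (a i.succ) * (a i.succ)‖ ≤ ‖∑ k, star (a k) * a k‖ := by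
  simpa using drop_norm fun i => star (a i)

variable {B : Type*} [NonUnitalCStarAlgebra B]

lemma act_tmul (W : Matrix m n ℂ) (V : Matrix m l ℂ) (a : n → A) (b : l → B) :
    ∑ i, act W a i ⊗ₜ[ℂ] act V b i = ∑ k, ∑ l, (Wᵀ * V) k l • (a k ⊗ₜ[ℂ] b l) := by
  simp only [act, TensorProduct.sum_tmul, TensorProduct.tmul_sum, TensorProduct.smul_tmul_smul, Matrix.mul_apply,
    Finset.sum_smul, Matrix.transpose_apply]
  refine Eq.trans (Finset.sum_congr rfl fun i _ => Finset.sum_comm) ?_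
  rw [Finset.sum_comm]
  refine Finset.sum_congr rfl fun k _ => ?_
  rw [Finset.sum_comm]

lemma act_tmul_one (W V : Matrix m n ℂ) (h : Wᵀ * V = 1) (a : n → A) (b : n → B) :
    ∑ i, act W a i ⊗ₜ[ℂ] act V b i = ∑ k, a k ⊗ₜ[ℂ] b k := by
  rw [act_tmul, h]; simp [Matrix.one_apply]

lemma exists_unitary_row {n : ℕ} (c : Fin (n+1) → ℂ) (hc : c ≠ 0) : ∃ (W : Matrix (Fin (n+1)) (Fin (n+1)) ℂ) (t : ℂ),
    Wᴴ * W = 1 ∧ W 0 = t • c := by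
  let E := EuclideanSpace ℂ (Fin (n+1))
  let c' : E := WithLp.toLp 2 c
  have hc' : c' ≠ 0 := by
    intro h; apply hc
    exact congrArg WithLp.ofLp h
  let v : Fin (n+1) → E := fun _ => ((‖c'‖⁻¹ : ℝ) : ℂ) • c'
  have ho : Orthonormal ℂ (({0} : Set (Fin (n+1))).domRestrict v) := by
    constructor
    · intro i
      simp only [Set.domRestrict_apply, v, norm_smul]
      rw [Complex.norm_real, norm_inv, Real.norm_of_nonneg (norm_nonneg _)]
      exact inv_mul_cancel₀ (norm_ne_zero_iff.2 hc')
    · intro i j hij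
      exact absurd (Subsingleton.elim i j) hij
  obtain ⟨b, hb⟩ := ho.exists_orthonormalBasis_extension_of_card_eq (by simp [E])
  refine ⟨fun i k => b i k, ((‖c'‖⁻¹ : ℝ) : ℂ), ?_, ?_⟩
  · have h1 : (Matrix.of fun i k => b i k) * (Matrix.of fun i k => b i k)ᴴ = 1 := by
      ext i j
      rw [Matrix.mul_apply]
      have := orthonormal_iff_ite.1 b.orthonormal j i
      rw [PiLp.inner_apply] at this
      simp only [Matrix.conjTranspose_apply, Matrix.one_apply, Matrix.of_apply]
      rw [if_congr (eq_comm (a := j) (b := i)) rfl rfl] at this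
      rw [← this]
      refine Finset.sum_congr rfl fun k _ => ?_
      simp [inner]
    exact mul_eq_one_comm.1 h1
  · funext k
    change b 0 k = _
    rw [hb 0 (by simp)]
    rfl

lemma drop_a {n : ℕ} (a : Fin (n+1) → A) (b : Fin (n+1) → B) (h : ¬ LinearIndependent ℂ a) :
    ∃ (a' : Fin n → A) (b' : Fin n → B), ∑ i, a' i ⊗ₜ[ℂ] b' i = ∑ i, a i ⊗ₜ[ℂ] b i ∧
      ‖∑ i, a' i * star (a' i)‖ ≤ ‖∑ i, a i * star (a i)‖ ∧
      ‖∑ i, star (a' i) * a' i‖ ≤ ‖∑ i, star (a i) * a i‖ ∧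
      ‖∑ i, b' i * star (b' i)‖ ≤ ‖∑ i, b i * star (b i)‖ ∧
      ‖∑ i, star (b' i) * b' i‖ ≤ ‖∑ i, star (b i) * b i‖ := by
  rw [Fintype.not_linearIndependent_iff] at h
  obtain ⟨c, hc, i, hi⟩ := h
  obtain ⟨W, t, hW, h0⟩ := exists_unitary_row c (fun h => hi (congrFun h i))
  have hV : (W.map star)ᴴ * W.map star = 1 := by
    have := congrArg (fun M => Matrix.map M star) hW
    ext i j
    have := congrFun (congrFun this i) j
    simp only [Matrix.map_apply, Matrix.mul_apply, star_sum, Matrix.conjTranspose_apply, star_mul', star_star, Matrix.one_apply] at this ⊢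
    rw [this]
    split_ifs <;> simp
  have hWV : Wᵀ * W.map star = 1 := by
    rw [← hV]
    congr 1
    ext i j
    simp
  have a0 : act W a 0 = 0 := by
    have : act W a 0 = t • ∑ k, c k • a k := by
      simp only [act, h0, Finset.smul_sum, smul_smul, Pi.smul_apply, smul_eq_mul]
    rw [this, hc, smul_zero]
  refine ⟨fun i => act W a i.succ, fun i => act (W.map star) b i.succ, ?_, ?_, ?_, ?_, ?_⟩
  · rw [← act_tmul_one W _ hWV a b, Fin.sum_univ_succ, a0]; simp
  · rw [← quad_iso W hW a]; exact drop_norm _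
  · rw [← quad_iso' W hW a]; exact drop_norm' _
  · rw [← quad_iso _ hV b]; exact drop_norm _
  · rw [← quad_iso' _ hV b]; exact drop_norm' _

lemma drop_b {n : ℕ} (a : Fin (n+1) → A) (b : Fin (n+1) → B) (h : ¬ LinearIndependent ℂ b) :
    ∃ (a' : Fin n → A) (b' : Fin n → B), ∑ i, a' i ⊗ₜ[ℂ] b' i = ∑ i, a i ⊗ₜ[ℂ] b i ∧
      ‖∑ i, a' i * star (a' i)‖ ≤ ‖∑ i, a i * star (a i)‖ ∧
      ‖∑ i, star (a' i) * a' i‖ ≤ ‖∑ i, star (a i) * a i‖ ∧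
      ‖∑ i, b' i * star (b' i)‖ ≤ ‖∑ i, b i * star (b i)‖ ∧
      ‖∑ i, star (b' i) * b' i‖ ≤ ‖∑ i, star (b i) * b i‖ := by
  obtain ⟨b', a', h0, h1, h2, h3, h4⟩ := drop_a b a h
  refine ⟨a', b', ?_, h3, h4, h1, h2⟩
  simpa using congrArg (TensorProduct.comm ℂ B A) h0

lemma reduce (n : ℕ) (a : Fin n → A) (b : Fin n → B) :
    ∃ (n' : ℕ) (a' : Fin n' → A) (b' : Fin n' → B), LinearIndependent ℂ a' ∧ LinearIndependent ℂ b' ∧ 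
      ∑ i, a' i ⊗ₜ[ℂ] b' i = ∑ i, a i ⊗ₜ[ℂ] b i ∧
      ‖∑ i, a' i * star (a' i)‖ ≤ ‖∑ i, a i * star (a i)‖ ∧
      ‖∑ i, star (a' i) * a' i‖ ≤ ‖∑ i, star (a i) * a i‖ ∧
      ‖∑ i, b' i * star (b' i)‖ ≤ ‖∑ i, b i * star (b i)‖ ∧
      ‖∑ i, star (b' i) * b' i‖ ≤ ‖∑ i, star (b i) * b i‖ := by
  induction n with
  | zero => exact ⟨0, a, b, linearIndependent_empty_type, linearIndependent_empty_type, rfl, le_rfl, le_rfl, le_rfl, le_rfl⟩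
  | succ n ih =>
    by_cases ha : LinearIndependent ℂ a
    · by_cases hb : LinearIndependent ℂ b
      · exact ⟨n+1, a, b, ha, hb, rfl, le_rfl, le_rfl, le_rfl, le_rfl⟩
      · obtain ⟨a', b', e, h1, h2, h3, h4⟩ := drop_b a b hb
        obtain ⟨n', a'', b'', i1, i2, e', k1, k2, k3, k4⟩ := ih a' b'
        exact ⟨n', a'', b'', i1, i2, e'.trans e, k1.trans h1, k2.trans h2, k3.trans h3, k4.trans h4⟩
    · obtain ⟨a', b', e, h1, h2, h3, h4⟩ := drop_a a b ha
      obtain ⟨n', a'', b'', i1, i2, e', k1, k2, k3, k4⟩ := ih a' b'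
      exact ⟨n', a'', b'', i1, i2, e'.trans e, k1.trans h1, k2.trans h2, k3.trans h3, k4.trans h4⟩

end s1


section s2
open Matrix
open scoped ComplexOrder MatrixOrder Matrix.Norms.L2Operator
variable {A B : Type u} [NonUnitalCStarAlgebra A] [NonUnitalCStarAlgebra B]

lemma li_left_inv {E : Type*} [AddCommGroup E] [Module ℂ E] {n : ℕ} {a : Fin n → E} (h : LinearIndependent ℂ a) :
    ∃ g : Fin n → E →ₗ[ℂ] ℂ, ∀ i j, g i (a j) = if i = j then 1 else 0 := by
  obtain ⟨f, hf⟩ := LinearMap.exists_leftInverse_of_injective (Fintype.linearCombination ℂ a)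
    (LinearMap.ker_eq_bot.2 (linearIndependent_iff_injective_fintypeLinearCombination.1 h))
  refine ⟨fun i => (LinearMap.proj i).comp f, fun i j => ?_⟩
  have := congrFun (LinearMap.congr_fun hf (Pi.single j 1)) i
  simp only [LinearMap.comp_apply, Fintype.linearCombination_apply_single, one_smul, LinearMap.id_apply, Pi.single_apply] at this
  exact this

def lslice (f : A →ₗ[ℂ] ℂ) : A ⊗[ℂ] B →ₗ[ℂ] B := TensorProduct.lift ((LinearMap.lsmul ℂ B).comp f)
def rslice (f : B →ₗ[ℂ] ℂ) : A ⊗[ℂ] B →ₗ[ℂ] A := TensorProduct.lift ((LinearMap.lsmul ℂ A).comp f).flip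

lemma lslice_tmul (f : A →ₗ[ℂ] ℂ) (a : A) (b : B) : lslice f (a ⊗ₜ[ℂ] b) = f a • b := rfl
lemma rslice_tmul (f : B →ₗ[ℂ] ℂ) (a : A) (b : B) : rslice f (a ⊗ₜ[ℂ] b) = f b • a := rfl

lemma exists_S {n n' : ℕ} (a : Fin n → A) (b : Fin n → B) (a' : Fin n' → A) (b' : Fin n' → B)
    (ha : LinearIndependent ℂ a) (hb' : LinearIndependent ℂ b')
    (h : ∑ i, a i ⊗ₜ[ℂ] b i = ∑ i, a' i ⊗ₜ[ℂ] b' i) :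
    ∃ S : Matrix (Fin n') (Fin n) ℂ, a' = act S a ∧ b = act Sᵀ b' := by
  obtain ⟨g, hg⟩ := li_left_inv hb'
  obtain ⟨f, hf⟩ := li_left_inv ha
  have h1 : ∀ j, ∑ i, g j (b i) • a i = a' j := by
    intro j
    have := congrArg (rslice (g j)) h
    simp only [map_sum, rslice_tmul, hg] at this
    simpa using this
  have h2 : ∀ j, b j = ∑ i, f j (a' i) • b' i := by
    intro j
    have := congrArg (lslice (f j)) h
    simp only [map_sum, lslice_tmul, hf] at this
    simpa using this
  refine ⟨Matrix.of fun j i => g j (b i), ?_, ?_⟩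
  · funext j; exact (h1 j).symm
  · funext i
    rw [h2 i]
    refine Finset.sum_congr rfl fun j _ => ?_
    simp [← h1, hf]

lemma coiso_psd {n n' : ℕ} (T : Matrix (Fin n) (Fin n') ℂ) (hT : T * Tᴴ = 1) : (1 - Tᴴ * T).PosSemidef := by
  have : 1 - Tᴴ * T = (1 - Tᴴ * T)ᴴ * (1 - Tᴴ * T) := by
    have h2 : Tᴴ * T * (Tᴴ * T) = Tᴴ * T := by
      rw [Matrix.mul_assoc, ← Matrix.mul_assoc T, hT, Matrix.one_mul]
    rw [Matrix.conjTranspose_sub, Matrix.conjTranspose_one, Matrix.conjTranspose_mul, Matrix.conjTranspose_conjTranspose,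
      Matrix.sub_mul, Matrix.mul_sub, Matrix.mul_sub, h2]
    simp
  rw [this]
  exact Matrix.posSemidef_conjTranspose_mul_self _

theorem svd (z : A ⊗[ℂ] B) (ε : ℝ) (h : HRep z ε) (h' : HTRep z ε) : ∃ (n : ℕ) (x : Fin n → A) (y : Fin n → B) (s : Fin n → ℝ),
    (∀ i, 0 < s i) ∧ z = ∑ i, x i ⊗ₜ[ℂ] y i ∧
    ‖∑ i, (s i : ℂ) • (x i * star (x i))‖ ≤ ε ∧
    ‖∑ i, (((s i)⁻¹ : ℝ) : ℂ) • (star (x i) * x i)‖ ≤ ε ∧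
    ‖∑ i, (s i : ℂ) • (y i * star (y i))‖ ≤ ε ∧
    ‖∑ i, (((s i)⁻¹ : ℝ) : ℂ) • (star (y i) * y i)‖ ≤ ε := by
  obtain ⟨n₀, a₀, b₀, hz, k1, k2⟩ := h
  obtain ⟨n, a, b, ha, hb, e, q1, -, -, q2⟩ := reduce n₀ a₀ b₀
  replace q1 := q1.trans k1
  replace q2 := q2.trans k2
  rw [← e] at hz
  obtain ⟨n₁, a₁, b₁, hz', k1', k2'⟩ := h'
  obtain ⟨n', a', b', ha', hb', e', -, q3, q4, -⟩ := reduce n₁ a₁ b₁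
  replace q3 := q3.trans k1'
  replace q4 := q4.trans k2'
  rw [← e'] at hz'
  clear e e' k1 k2 k1' k2'
  obtain ⟨S, hS, hS'⟩ := exists_S a b a' b' ha hb' (hz.symm.trans hz')
  have hinj : Function.Injective S.mulVec := by
    rw [← Matrix.coe_mulVecLin, ← LinearMap.ker_eq_bot, LinearMap.ker_eq_bot']
    intro c hc
    have hc : S *ᵥ c = 0 := hc
    funext i
    refine Fintype.linearIndependent_iff.1 hb c ?_ i
    have : ∑ i, c i • b i = ∑ j, (S *ᵥ c) j • b' j := by
      rw [hS']
      simp only [act, Finset.smul_sum, Matrix.mulVec, dotProduct, Finset.sum_smul, smul_smul, Matrix.transpose_apply]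
      rw [Finset.sum_comm]
      refine Finset.sum_congr rfl fun j _ => Finset.sum_congr rfl fun i _ => ?_
      rw [mul_comm]
    rw [this, hc]; simp
  have hpd : (Sᴴ * S).PosDef := Matrix.PosDef.conjTranspose_mul_self S hinj
  obtain ⟨W, d, hd, hW, hW', hD⟩ : ∃ (W : Matrix (Fin n) (Fin n) ℂ) (d : Fin n → ℝ), (∀ i, 0 < d i) ∧ Wᴴ * W = 1 ∧ W * Wᴴ = 1 ∧
      (S * W)ᴴ * (S * W) = Matrix.diagonal (fun i => (d i : ℂ)) := by
    refine ⟨hpd.1.eigenvectorUnitary, hpd.1.eigenvalues, hpd.eigenvalues_pos, ?_, ?_, ?_⟩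
    · exact Unitary.coe_star_mul_self _
    · exact Unitary.coe_mul_star_self _
    · have h1 := hpd.1.conjStarAlgAut_star_eigenvectorUnitary
      rw [Unitary.conjStarAlgAut_star_apply] at h1
      rw [Matrix.conjTranspose_mul]
      rw [Matrix.mul_assoc, ← Matrix.mul_assoc Sᴴ, ← Matrix.mul_assoc]
      exact h1
  let t : Fin n → ℝ := fun i => Real.sqrt (d i)
  have ht : ∀ i, 0 < t i := fun i => Real.sqrt_pos.2 (hd i)
  have htt : ∀ i, t i * t i = d i := fun i => Real.mul_self_sqrt (hd i).le
  clear_value t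
  let ã := act Wᴴ a
  let b2 := act Wᵀ b
  have e1 : a = act W ã := by simp only [ã]; rw [act_act, hW', act_one]
  have e2 : a' = act (S * W) ã := by rw [← act_act, ← e1, hS]
  have e3 : b2 = act (S * W)ᵀ b' := by
    simp only [b2]; rw [hS', act_act, Matrix.transpose_mul]
  have r1 : ∑ i, ã i * star (ã i) = ∑ i, a i * star (a i) := quad_iso _ (by simpa using hW') a
  have r2 : ∑ i, star (b2 i) * b2 i = ∑ i, star (b i) * b i := by
    refine quad_iso' _ ?_ b
    have := congrArg Matrix.transpose hW'
    rw [Matrix.transpose_mul, Matrix.transpose_one] at this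
    rw [← this]
    congr 1
  have r3 : ∑ i, star (a' i) * a' i = ∑ i, (d i : ℂ) • (star (ã i) * ã i) := by
    rw [e2, quad', hD]
    simp [Matrix.diagonal_apply]
  have r4 : ‖∑ i, (((d i)⁻¹ : ℝ) : ℂ) • (b2 i * star (b2 i))‖ ≤ ‖∑ i, b' i * star (b' i)‖ := by
    let T : Matrix (Fin n) (Fin n') ℂ := Matrix.diagonal (fun i => (((t i)⁻¹ : ℝ) : ℂ)) * (S * W)ᵀ
    have hT : T * Tᴴ = 1 := by
      have h1 : (S * W)ᵀ * ((S * W)ᵀ)ᴴ = Matrix.diagonal (fun i => (d i : ℂ)) := by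
        have := congrArg Matrix.transpose hD
        rw [Matrix.transpose_mul, Matrix.diagonal_transpose] at this
        exact this
      simp only [T]
      rw [Matrix.conjTranspose_mul, Matrix.mul_assoc, ← Matrix.mul_assoc (S * W)ᵀ, h1, Matrix.diagonal_conjTranspose,
        Matrix.diagonal_mul_diagonal, Matrix.diagonal_mul_diagonal, ← Matrix.diagonal_one]
      congr 1
      funext i
      rw [Pi.star_apply, Complex.star_def, Complex.conj_ofReal, ← htt]
      have := (ht i).ne'
      norm_cast
      field_simp
    have hP := coiso_psd T hT
    refine le_trans (le_of_eq ?_) (act_contr T hP b')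
    congr 1
    refine Finset.sum_congr rfl fun i _ => ?_
    have h3 : act T b' i = (((t i)⁻¹ : ℝ) : ℂ) • b2 i := by
      simp only [T]
      rw [← act_act, ← e3]
      simp [act, Matrix.diagonal_apply]
    rw [h3, star_smul, smul_mul_smul_comm]
    congr 1
    rw [Complex.star_def, Complex.conj_ofReal, ← Complex.ofReal_mul, ← htt, mul_inv]
  have r5 : z = ∑ i, ã i ⊗ₜ[ℂ] b2 i := by
    rw [hz]
    refine (act_tmul_one _ _ ?_ a b).symm
    rw [← Matrix.transpose_mul, hW', Matrix.transpose_one]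
  clear_value ã b2
  let x : Fin n → A := fun i => ((Real.sqrt (t i) : ℝ) : ℂ) • ã i
  let y : Fin n → B := fun i => (((Real.sqrt (t i))⁻¹ : ℝ) : ℂ) • b2 i
  have hx1 : ∀ i, x i * star (x i) = (t i : ℂ) • (ã i * star (ã i)) := fun i => smul_mul_star_eq _ (ht i).le _
  have hx2 : ∀ i, star (x i) * (x i) = (t i : ℂ) • (star (ã i) * (ã i)) := fun i => smul_star_mul_eq _ (ht i).le _
  have hy1 : ∀ i, y i * star (y i) = (((t i)⁻¹ : ℝ) : ℂ) • (b2 i * star (b2 i)) := fun i => by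
    have := smul_mul_star_eq _ (inv_nonneg.2 (ht i).le) (b2 i)
    rwa [Real.sqrt_inv] at this
  have hy2 : ∀ i, star (y i) * (y i) = (((t i)⁻¹ : ℝ) : ℂ) • (star (b2 i) * (b2 i)) := fun i => by
    have := smul_star_mul_eq _ (inv_nonneg.2 (ht i).le) (b2 i)
    rwa [Real.sqrt_inv] at this
  refine ⟨n, x, y, fun i => (t i)⁻¹, fun i => inv_pos.2 (ht i), ?_, ?_, ?_, ?_, ?_⟩
  · rw [r5]
    exact Finset.sum_congr rfl fun i _ => (tmul_scale _ _ _ (Real.sqrt_pos.2 (ht i))).symm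
  · refine le_trans (le_of_eq ?_) q1
    rw [← r1]; congr 1
    refine Finset.sum_congr rfl fun i _ => ?_
    rw [hx1, smul_smul, ← Complex.ofReal_mul, inv_mul_cancel₀ (ht i).ne', Complex.ofReal_one, one_smul]
  · refine le_trans (le_of_eq ?_) q3
    rw [r3]; congr 1
    refine Finset.sum_congr rfl fun i _ => ?_
    rw [hx2, smul_smul, ← Complex.ofReal_mul, inv_inv, htt]
  · refine le_trans (le_of_eq ?_) (r4.trans q4)
    congr 1
    refine Finset.sum_congr rfl fun i _ => ?_
    rw [hy1, smul_smul, ← Complex.ofReal_mul, ← mul_inv, htt]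
  · refine le_trans (le_of_eq ?_) q2
    rw [← r2]; congr 1
    refine Finset.sum_congr rfl fun i _ => ?_
    rw [hy2, smul_smul, ← Complex.ofReal_mul, inv_inv, mul_inv_cancel₀ (ht i).ne', Complex.ofReal_one, one_smul]

end s2


section w1
variable {A B X : Type u} [NonUnitalCStarAlgebra A] [NonUnitalCStarAlgebra B]

lemma osProj_le {NA : ∀ p : ℕ, Matrix (Fin p) (Fin p) A → ℝ} {NB : ∀ q : ℕ, Matrix (Fin q) (Fin q) B → ℝ}
    (hNA : ∀ p, IsCStarNorm (NA p)) (hNB : ∀ q, IsCStarNorm (NB q)) (p : ℕ) (v : Matrix (Fin p) (Fin p) A)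
    (w : Matrix (Fin p) (Fin p) B) (ψ : Fin p → ℝ) (hψ : ∑ a, ψ a ^ 2 ≤ 1) :
    osProjNorm NA NB (∑ a, ∑ b, ((ψ a * ψ b : ℝ) : ℂ) • (v a b ⊗ₜ[ℂ] w a b)) ≤ NA p v * NB p w := by
  have hv := gcn_nonneg (hNA p) v
  have hw := gcn_nonneg (hNB p) w
  let α : Fin p × Fin p → ℂ := fun k => if k.1 = k.2 then (ψ k.1 : ℂ) else 0
  have hα : ∑ k, ‖α k‖ ^ 2 ≤ 1 := by
    refine le_trans (le_of_eq ?_) hψ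
    rw [Fintype.sum_prod_type]
    refine Finset.sum_congr rfl fun a _ => ?_
    rw [Finset.sum_eq_single a]
    · simp [α]
    · intro b _ hb; simp [α, hb.symm]
    · simp
  have h1 : Real.sqrt (∑ k, ‖α k‖ ^ 2) ≤ 1 := Real.sqrt_le_one.2 hα
  refine le_trans (csInf_le ?_ ⟨p, p, α, v, w, α, ?_, rfl⟩) ?_
  · refine ⟨0, ?_⟩
    rintro r ⟨p, q, α, v, w, β, -, rfl⟩
    have := gcn_nonneg (hNA p) v
    have := gcn_nonneg (hNB q) w
    positivity
  · have h2 : ∀ (f : Fin p × Fin p → A ⊗[ℂ] B) (c : ℂ), ∑ k, (c * α k) • f k = ∑ a, (c * (ψ a : ℂ)) • f (a, a) := by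
      intro f c
      rw [Fintype.sum_prod_type]
      refine Finset.sum_congr rfl fun a _ => ?_
      rw [Finset.sum_eq_single a]
      · simp [α]
      · intro b _ hb; simp [α, hb.symm]
      · simp
    simp only [h2]
    have h3 : ∀ (f : Fin p × Fin p → A ⊗[ℂ] B), ∑ k, (α k) • f k = ∑ a, ((ψ a : ℂ)) • f (a, a) := by
      intro f
      simpa using h2 f 1
    simp only [mul_smul, ← Finset.smul_sum]
    rw [h3]
    simp only [Complex.ofReal_mul, mul_smul, ← Finset.smul_sum]
  · calc _ ≤ 1 * NA p v * NB p w * 1 := by gcongr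
      _ = _ := by ring

variable [NonUnitalNormedRing X] [StarRing X] [NormedSpace ℂ X] [CompleteSpace X]

theorem functional_bd (NA : ∀ p : ℕ, Matrix (Fin p) (Fin p) A → ℝ)
    (NB : ∀ q : ℕ, Matrix (Fin q) (Fin q) B → ℝ)
    (hNA : ∀ p, IsCStarNorm (NA p)) (hNB : ∀ q, IsCStarNorm (NB q))
    (ι : A ⊗[ℂ] B →ₗ[ℂ] X) (hX : IsTensorCompletion (osProjNorm NA NB) X ι) (u : X →L[ℂ] ℂ)
    (z : A ⊗[ℂ] B) (ε : ℝ) (hε : 0 < ε) (h : HRep z ε) (h' : HTRep z ε) : ‖u (ι z)‖ ≤ 80000 * ‖u‖ * ε := by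
  obtain ⟨n, x, y, s, hs, rfl, h1, h2, h3, h4⟩ := svd z ε h h'
  have := thmII hNA hNB ((TensorProduct.mk ℂ A B).compr₂ (u.toLinearMap.comp ι)) ‖u‖ (norm_nonneg _) (by
    intro p v w ψ hψ
    have e : ∑ a, ∑ b, ((ψ a * ψ b : ℝ) : ℂ) * ((TensorProduct.mk ℂ A B).compr₂ (u.toLinearMap.comp ι)) (v a b) (w a b) =
        u (ι (∑ a, ∑ b, ((ψ a * ψ b : ℝ) : ℂ) • (v a b ⊗ₜ[ℂ] w a b))) := by
      simp only [map_sum, map_smul]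
      rfl
    rw [e]
    refine (u.le_opNorm _).trans ?_
    rw [hX.norm_eq, mul_assoc]
    exact mul_le_mul_of_nonneg_left (osProj_le hNA hNB p v w ψ hψ) (norm_nonneg _))
    x y s hs ε hε h1 h2 h3 h4
  simp only [map_sum]
  exact this
end w1


section h1
open Matrix
open scoped ComplexOrder
variable {A B : Type*} [NonUnitalCStarAlgebra A] [NonUnitalCStarAlgebra B]

lemma psd_of_contr {m n : Type*} [Fintype m] [Fintype n] [DecidableEq n] (T : Matrix m n ℂ)
    (hT : ∀ x : n → ℂ, ∑ j, ‖∑ i, T j i * x i‖ ^ 2 ≤ ∑ i, ‖x i‖ ^ 2) : (1 - Tᴴ * T).PosSemidef := by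
  refine Matrix.PosSemidef.of_dotProduct_mulVec_nonneg ?_ ?_
  · exact Matrix.isHermitian_one.sub (Matrix.isHermitian_conjTranspose_mul_self T)
  · intro x
    rw [Matrix.sub_mulVec, Matrix.one_mulVec, dotProduct_sub, ← Matrix.mulVec_mulVec, Matrix.dotProduct_mulVec,
      ← Matrix.star_mulVec]
    have k1 : star x ⬝ᵥ x = ((∑ i, ‖x i‖ ^ 2 : ℝ) : ℂ) := by
      rw [dotProduct, Complex.ofReal_sum]
      refine Finset.sum_congr rfl fun i _ => ?_
      rw [Pi.star_apply, Complex.star_def, Complex.conj_mul']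
      norm_cast
    have k2 : star (T *ᵥ x) ⬝ᵥ (T *ᵥ x) = ((∑ i, ‖(T *ᵥ x) i‖ ^ 2 : ℝ) : ℂ) := by
      rw [dotProduct, Complex.ofReal_sum]
      refine Finset.sum_congr rfl fun i _ => ?_
      rw [Pi.star_apply, Complex.star_def, Complex.conj_mul']
      norm_cast
    rw [k1, k2, ← Complex.ofReal_sub, Complex.zero_le_real, sub_nonneg]
    exact hT x

lemma fcontr_aux {I J : Type*} (T : J → I → ℂ) (G : Finset J) (F : Finset I)
    (hT : ∀ x : I → ℂ, ∑ j ∈ G, ‖∑ i ∈ F, T j i * x i‖ ^ 2 ≤ ∑ i ∈ F, ‖x i‖ ^ 2) [DecidableEq F] :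
    (1 - (Matrix.of fun (j : G) (i : F) => T j i)ᴴ * (Matrix.of fun (j : G) (i : F) => T j i)).PosSemidef := by
  refine psd_of_contr _ fun x => ?_
  classical
  let y : I → ℂ := fun i => if h : i ∈ F then x ⟨i, h⟩ else 0
  have hy : ∀ i : F, y i = x i := fun i => by simp [y]
  have := hT y
  rw [← Finset.sum_coe_sort G, ← Finset.sum_coe_sort F (fun i => ‖y i‖ ^ 2)] at this
  simp only [← Finset.sum_coe_sort F, hy] at this
  exact this

lemma fcontr {I J : Type*} (T : J → I → ℂ) (G : Finset J) (F : Finset I)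
    (hT : ∀ x : I → ℂ, ∑ j ∈ G, ‖∑ i ∈ F, T j i * x i‖ ^ 2 ≤ ∑ i ∈ F, ‖x i‖ ^ 2) (a : I → A) :
    ‖∑ j ∈ G, (∑ i ∈ F, T j i • a i) * star (∑ i ∈ F, T j i • a i)‖ ≤ ‖∑ i ∈ F, a i * star (a i)‖ := by
  classical
  have := act_contr _ (fcontr_aux T G F hT) (fun i : F => a i)
  rw [← Finset.sum_coe_sort G, ← Finset.sum_coe_sort F (fun i => a i * star (a i))]
  simp only [← Finset.sum_coe_sort F (fun i => T _ i • a i)]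
  exact this

lemma fcontr' {I J : Type*} (T : J → I → ℂ) (G : Finset J) (F : Finset I)
    (hT : ∀ x : I → ℂ, ∑ j ∈ G, ‖∑ i ∈ F, T j i * x i‖ ^ 2 ≤ ∑ i ∈ F, ‖x i‖ ^ 2) (a : I → A) :
    ‖∑ j ∈ G, star (∑ i ∈ F, T j i • a i) * (∑ i ∈ F, T j i • a i)‖ ≤ ‖∑ i ∈ F, star (a i) * (a i)‖ := by
  classical
  have := act_contr' _ (fcontr_aux T G F hT) (fun i : F => a i)
  rw [← Finset.sum_coe_sort G, ← Finset.sum_coe_sort F (fun i => star (a i) * (a i))]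
  simp only [← Finset.sum_coe_sort F (fun i => T _ i • a i)]
  exact this

lemma row_contr {I : Type*} (c : I → ℂ) (F : Finset I) (hc : ∑ i ∈ F, ‖c i‖ ^ 2 ≤ 1) (x : I → ℂ) :
    ∑ j ∈ ({()} : Finset Unit), ‖∑ i ∈ F, c i * x i‖ ^ 2 ≤ ∑ i ∈ F, ‖x i‖ ^ 2 := by
  rw [Finset.sum_singleton]
  have h1 : ‖∑ i ∈ F, c i * x i‖ ≤ ∑ i ∈ F, ‖c i‖ * ‖x i‖ := by
    refine (norm_sum_le _ _).trans (le_of_eq ?_)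
    simp
  have h2 := Finset.sum_mul_sq_le_sq_mul_sq F (fun i => ‖c i‖) (fun i => ‖x i‖)
  calc _ ≤ (∑ i ∈ F, ‖c i‖ * ‖x i‖) ^ 2 := by gcongr
    _ ≤ _ := h2
    _ ≤ 1 * ∑ i ∈ F, ‖x i‖ ^ 2 := by gcongr
    _ = _ := one_mul _

lemma lin_bd_aux {E : Type*} [NormedAddCommGroup E] [NormedSpace ℂ E] {I : Type*} (F : Finset I) (b : I → E) (D : ℝ) (hD : 0 ≤ D)
    (h : ∀ c : I → ℂ, ∑ i ∈ F, ‖c i‖ ^ 2 ≤ 1 → ‖∑ i ∈ F, c i • b i‖ ^ 2 ≤ D) (c : I → ℂ) :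
    ‖∑ i ∈ F, c i • b i‖ ^ 2 ≤ (∑ i ∈ F, ‖c i‖ ^ 2) * D := by
  have S0 : 0 ≤ ∑ i ∈ F, ‖c i‖ ^ 2 := Finset.sum_nonneg fun i _ => by positivity
  rcases S0.eq_or_lt with h0 | h0
  · have : ∀ i ∈ F, c i = 0 := by
      intro i hi
      have := (Finset.sum_eq_zero_iff_of_nonneg (fun i _ => by positivity)).1 h0.symm i hi
      simpa using this
    rw [Finset.sum_eq_zero fun i hi => by rw [this i hi, zero_smul]]
    rw [norm_zero, zero_pow two_ne_zero]
    exact mul_nonneg S0 hD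
  · set S := ∑ i ∈ F, ‖c i‖ ^ 2 with hS
    have h1 := h (fun i => ((Real.sqrt S)⁻¹ : ℝ) * c i) (by
      simp only [norm_mul, mul_pow, Complex.norm_real, norm_inv, inv_pow, Real.norm_eq_abs, sq_abs, Real.sq_sqrt h0.le]
      rw [← Finset.mul_sum, ← hS, inv_mul_cancel₀ h0.ne'])
    simp only [mul_smul, ← Finset.smul_sum] at h1
    rw [norm_smul, mul_pow] at h1
    simp only [Complex.norm_real, norm_inv, inv_pow, Real.norm_eq_abs, sq_abs, Real.sq_sqrt h0.le] at h1
    rwa [inv_mul_le_iff₀ h0] at h1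

lemma lin_bd {I : Type*} (F : Finset I) (a : I → A) (c : I → ℂ) :
    ‖∑ i ∈ F, c i • a i‖ ^ 2 ≤ (∑ i ∈ F, ‖c i‖ ^ 2) * ‖∑ i ∈ F, a i * star (a i)‖ := by
  refine lin_bd_aux F a _ (norm_nonneg _) (fun c hc => ?_) c
  have := fcontr (fun (_ : Unit) i => c i) {()} F (row_contr c F hc) a
  rw [Finset.sum_singleton, CStarRing.norm_self_mul_star] at this
  rwa [sq]

lemma lin_bd' {I : Type*} (F : Finset I) (a : I → A) (c : I → ℂ) :
    ‖∑ i ∈ F, c i • a i‖ ^ 2 ≤ (∑ i ∈ F, ‖c i‖ ^ 2) * ‖∑ i ∈ F, star (a i) * (a i)‖ := by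
  refine lin_bd_aux F a _ (norm_nonneg _) (fun c hc => ?_) c
  have := fcontr' (fun (_ : Unit) i => c i) {()} F (row_contr c F hc) a
  rw [Finset.sum_singleton, CStarRing.norm_star_mul_self] at this
  rwa [sq]

/-- coordinates of a bounded functional along a row-bounded family are square summable -/
lemma coord_bd {I : Type*} (a : I → A) (C : ℝ) (hC : 0 ≤ C) (F : Finset I)
    (h : ‖∑ i ∈ F, a i * star (a i)‖ ≤ C ^ 2) (φ : A →L[ℂ] ℂ) : ∑ i ∈ F, ‖φ (a i)‖ ^ 2 ≤ (‖φ‖ * C) ^ 2 := by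
  set S := ∑ i ∈ F, ‖φ (a i)‖ ^ 2 with hS
  have S0 : 0 ≤ S := Finset.sum_nonneg fun i _ => by positivity
  have h1 : φ (∑ i ∈ F, star (φ (a i)) • a i) = (S : ℂ) := by
    rw [map_sum, hS, Complex.ofReal_sum]
    refine Finset.sum_congr rfl fun i _ => ?_
    rw [map_smul, smul_eq_mul, Complex.star_def, Complex.conj_mul']
    norm_cast
  have h2 := φ.le_opNorm (∑ i ∈ F, star (φ (a i)) • a i)
  have h3 := lin_bd F a (fun i => star (φ (a i)))
  simp only [norm_star] at h3
  rw [h1, Complex.norm_real, Real.norm_of_nonneg S0] at h2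
  rw [← hS] at h3
  rcases S0.eq_or_lt with h0 | h0
  · rw [← h0]; positivity
  · have : S * S ≤ S * (‖φ‖ * C) ^ 2 := by
      calc S * S ≤ (‖φ‖ * ‖∑ i ∈ F, star (φ (a i)) • a i‖) * (‖φ‖ * ‖∑ i ∈ F, star (φ (a i)) • a i‖) :=
            mul_le_mul h2 h2 S0 (by positivity)
        _ = ‖φ‖ ^ 2 * ‖∑ i ∈ F, star (φ (a i)) • a i‖ ^ 2 := by ring
        _ ≤ ‖φ‖ ^ 2 * (S * C ^ 2) := by
            refine mul_le_mul_of_nonneg_left (h3.trans ?_) (by positivity)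
            gcongr
        _ = _ := by ring
    exact le_of_mul_le_mul_left this h0

end h1



section h2
variable {B : Type*} [NonUnitalCStarAlgebra B] {I : Type*}

abbrev l2 (I : Type*) := lp (fun _ : I => ℂ) 2

lemma l2_sum_le (c : l2 I) (F : Finset I) : ∑ i ∈ F, ‖c i‖ ^ 2 ≤ ‖c‖ ^ 2 := by
  have := lp.sum_rpow_le_norm_rpow (p := 2) (by norm_num) c F
  simpa using this

lemma l2_summable (c : l2 I) : Summable fun i => ‖c i‖ ^ 2 := by
  have := (memℓp_gen_iff (p := 2) (by norm_num)).1 (lp.memℓp c)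
  simpa using this

lemma l2_smul_summable (b : I → B) (C : ℝ) (hC : 0 < C) (hb : ∀ F : Finset I, ‖∑ i ∈ F, star (b i) * b i‖ ≤ C ^ 2)
    (c : l2 I) : Summable fun i => c i • b i := by
  rw [summable_iff_vanishing_norm]
  intro ε hε
  obtain ⟨s, hs⟩ := (summable_iff_vanishing_norm.1 (l2_summable c)) ((ε / C) ^ 2) (by positivity)
  refine ⟨s, fun t ht => ?_⟩
  have h1 := hs t ht
  rw [Real.norm_of_nonneg (Finset.sum_nonneg fun i _ => by positivity)] at h1
  have h2 := lin_bd' t b (fun i => c i)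
  refine lt_of_pow_lt_pow_left₀ 2 hε.le (h2.trans_lt ?_)
  calc _ ≤ (∑ i ∈ t, ‖c i‖ ^ 2) * C ^ 2 := by gcongr; exact hb t
    _ < (ε / C) ^ 2 * C ^ 2 := by gcongr
    _ = ε ^ 2 := by field_simp

lemma exists_T (b : I → B) (C : ℝ) (hC : 0 < C) (hb : ∀ F : Finset I, ‖∑ i ∈ F, star (b i) * b i‖ ≤ C ^ 2) :
    ∃ T : l2 I →L[ℂ] B, ∀ c, HasSum (fun i => c i • b i) (T c) := by
  have hs := l2_smul_summable b C hC hb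
  let T0 : l2 I →ₗ[ℂ] B :=
    { toFun := fun c => ∑' i, c i • b i
      map_add' := fun c d => by
        rw [← (hs c).tsum_add (hs d)]
        simp [add_smul]
      map_smul' := fun t c => by
        rw [RingHom.id_apply, ← (hs c).tsum_const_smul]
        simp [mul_smul] }
  refine ⟨T0.mkContinuous C fun c => ?_, fun c => (hs c).hasSum⟩
  refine le_of_tendsto (hs c).hasSum.norm (Filter.Eventually.of_forall fun F => ?_)
  refine le_of_pow_le_pow_left₀ two_ne_zero (by positivity) ?_
  refine (lin_bd' F b (fun i => c i)).trans ?_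
  calc _ ≤ ‖c‖ ^ 2 * C ^ 2 := by
        gcongr
        · exact l2_sum_le c F
        · exact hb F
    _ = _ := by ring

lemma exists_q (b : I → B) (C : ℝ) (hC : 0 < C) (hb : ∀ F : Finset I, ‖∑ i ∈ F, star (b i) * b i‖ ≤ C ^ 2) :
    ∃ q : I → I → ℂ,
      (∀ (G F : Finset I) (x : I → ℂ), ∑ j ∈ G, ‖∑ i ∈ F, q j i * x i‖ ^ 2 ≤ ∑ i ∈ F, ‖x i‖ ^ 2) ∧
      (∀ i, HasSum (fun j => q j i • b j) (b i)) ∧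
      (∀ (v : I → ℂ) (M : ℝ), (∀ F : Finset I, ∑ i ∈ F, ‖v i‖ ^ 2 ≤ M) →
        (∀ y, HasSum (fun i => v i • b i) y → y = 0) → ∀ j, HasSum (fun i => q j i * v i) 0) := by
  classical
  obtain ⟨T, hT⟩ := exists_T b C hC hb
  let K : Submodule ℂ (l2 I) := LinearMap.ker T.toLinearMap
  have hK : IsClosed (K : Set (l2 I)) := T.isClosed_ker
  have : CompleteSpace K := hK.completeSpace_coe
  let Q : l2 I →L[ℂ] l2 I := Kᗮ.starProjection
  have hQ : ∀ v, ‖Q v‖ ≤ ‖v‖ := fun v => by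
    refine (Q.le_opNorm v).trans ?_
    have := Submodule.starProjection_norm_le Kᗮ
    calc _ ≤ 1 * ‖v‖ := by gcongr
      _ = _ := one_mul _
  have hQ' : ∀ v, Q v = v - K.starProjection v := fun v => by
    show Kᗮ.starProjection v = _
    rw [Submodule.starProjection_orthogonal']
    simp
  have hTQ : ∀ v, T (Q v) = T v := fun v => by
    rw [hQ', map_sub]
    have : K.starProjection v ∈ K := Submodule.starProjection_apply_mem K v
    have : T (K.starProjection v) = 0 := this
    rw [this, sub_zero]
  have hQ0 : ∀ v, T v = 0 → Q v = 0 := fun v hv => by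
    rw [hQ', Submodule.starProjection_eq_self_iff.2 (show v ∈ K from hv), sub_self]
  let δ : I → l2 I := fun i => lp.single 2 i (1 : ℂ)
  have hδ : ∀ i (c : ℂ), lp.single 2 i c = c • δ i := fun i c => by
    ext j
    simp [δ, lp.single_apply, Pi.single_apply]
  have hTδ : ∀ i, T (δ i) = b i := fun i => by
    refine (hT (δ i)).unique ?_
    have := hasSum_single (f := fun j => (δ i) j • b j) i (fun j hj => by
      refine smul_eq_zero.2 ?_
      left; exact lp.single_apply_ne _ _ _ hj)
    simpa [δ, lp.single_apply] using this
  refine ⟨fun j i => Q (δ i) j, ?_, ?_, ?_⟩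
  · intro G F x
    have e : ∀ j, ∑ i ∈ F, Q (δ i) j * x i = Q (∑ i ∈ F, lp.single 2 i (x i)) j := by
      intro j
      simp only [hδ, map_sum, map_smul]
      rw [lp.coeFn_sum, Finset.sum_apply]
      refine Finset.sum_congr rfl fun i _ => ?_
      simp [mul_comm]
    simp only [e]
    refine (l2_sum_le _ G).trans ?_
    have := lp.norm_sum_single (p := 2) (E := fun _ : I => ℂ) (by norm_num) x F
    have h2 : ‖∑ i ∈ F, lp.single 2 i (x i)‖ ^ 2 = ∑ i ∈ F, ‖x i‖ ^ 2 := by simpa using this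
    rw [← h2]
    gcongr
    exact hQ _
  · intro i
    have := hT (Q (δ i))
    rwa [hTQ, hTδ] at this
  · intro v M hv h0 j
    have hmem : Memℓp v 2 := memℓp_gen' (C := M) (by simpa using hv)
    let w : l2 I := ⟨v, hmem⟩
    have hw : ∀ i, w i = v i := fun i => rfl
    have hTw : T w = 0 := h0 _ (hT w)
    have h1 := lp.hasSum_single (p := 2) (by norm_num) w
    have h2 := h1.mapL Q
    rw [hQ0 w hTw] at h2
    have h3 := h2.mapL (lp.evalCLM ℂ (fun _ : I => ℂ) 2 j)
    rw [map_zero] at h3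
    refine h3.congr_fun ?_
    intro i
    rw [hw, hδ, map_smul, map_smul, smul_eq_mul, mul_comm]
    rfl
end h2



section h3
open Filter Topology
variable {A B : Type u} [NonUnitalCStarAlgebra A] [NonUnitalCStarAlgebra B] {I : Type*}

lemma HRep.add {z z' : A ⊗[ℂ] B} {r r' : ℝ} (hr : 0 < r) (hr' : 0 < r') (h : HRep z r) (h' : HRep z' r') :
    HRep (z + z') (r + r') := by
  obtain ⟨n, a, b, rfl, h1, h2⟩ := h
  obtain ⟨m, c, d, rfl, h3, h4⟩ := h'
  have hs : Real.sqrt (r + r') ^ 2 = r + r' := Real.sq_sqrt (by positivity)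
  have := HRep.of (κ := Fin n ⊕ Fin m) (Sum.elim a c) (Sum.elim b d) (Real.sqrt (r + r')) (Real.sqrt (r + r')) (r + r')
    (by positivity) (by positivity) (by positivity) (by rw [← sq, hs])
    (by
      rw [hs, Fintype.sum_sum_type]
      simpa using norm_add_le_of_le h1 h3)
    (by
      rw [hs, Fintype.sum_sum_type]
      simpa using norm_add_le_of_le h2 h4)
  rw [Fintype.sum_sum_type] at this
  simpa using this

lemma HRep.of_finset {κ : Type*} (F : Finset κ) (a : κ → A) (b : κ → B) (P Q r : ℝ) (hr : 0 < r) (hP : 0 ≤ P) (hQ : 0 ≤ Q)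
    (h : P * Q ≤ r)
    (h1 : ‖∑ i ∈ F, a i * star (a i)‖ ≤ P ^ 2) (h2 : ‖∑ i ∈ F, star (b i) * b i‖ ≤ Q ^ 2) :
    HRep (∑ i ∈ F, a i ⊗ₜ[ℂ] b i) r := by
  rw [← Finset.sum_coe_sort F] at h1 h2 ⊢
  exact HRep.of (fun i : F => a i) (fun i : F => b i) P Q r hr hP hQ h h1 h2

lemma dual_zero {E : Type*} [NormedAddCommGroup E] [NormedSpace ℂ E] (y : E) (h : ∀ φ : E →L[ℂ] ℂ, φ y = 0) : y = 0 := by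
  by_contra hy
  obtain ⟨φ, -, h2⟩ := exists_dual_vector ℂ y (norm_ne_zero_iff.2 hy)
  rw [h φ] at h2
  have : ‖y‖ = 0 := by
    have h3 : ((‖y‖ : ℝ) : ℂ) = 0 := h2.symm
    exact Complex.ofReal_eq_zero.1 h3
  exact hy (norm_eq_zero.1 this)

theorem h_lemma (a : I → A) (b : I → B) (C : ℝ) (hC : 0 < C)
    (ha : ∀ F : Finset I, ‖∑ i ∈ F, a i * star (a i)‖ ≤ C ^ 2)
    (hb : ∀ F : Finset I, ‖∑ i ∈ F, star (b i) * b i‖ ≤ C ^ 2)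
    (htail : ∀ ε > 0, ∃ F0 : Finset I, ∀ F : Finset I, Disjoint F F0 → ‖∑ i ∈ F, a i * star (a i)‖ ≤ ε)
    (Fs : ℕ → Finset I) (hFs : Tendsto Fs atTop atTop)
    (h0 : ∀ (φ : A →L[ℂ] ℂ) (ψ : B →L[ℂ] ℂ), Tendsto (fun m => ∑ i ∈ Fs m, φ (a i) * ψ (b i)) atTop (𝓝 0))
    (r : ℝ) (hr : 0 < r) : ∃ F0 : Finset I, ∀ F : Finset I, F0 ⊆ F → HRep (∑ i ∈ F, a i ⊗ₜ[ℂ] b i) r := by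
  classical
  obtain ⟨q, hq, hqb, hq0⟩ := exists_q b C hC hb
  have S1 : ∀ j, HasSum (fun i => q j i • a i) 0 := by
    intro j
    have hsum : Summable (fun i => q j i • a i) := by
      rw [summable_iff_vanishing_norm]
      intro ε hε
      obtain ⟨s, hs⟩ := htail ((ε / 2) ^ 2) (by positivity)
      refine ⟨s, fun t ht => ?_⟩
      have h1 := fcontr q {j} t (hq {j} t) a
      rw [Finset.sum_singleton, CStarRing.norm_self_mul_star, ← sq] at h1
      have h2 := h1.trans (hs t ht)
      have h3 := le_of_pow_le_pow_left₀ two_ne_zero (by positivity) h2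
      linarith
    have hz : ∑' i, q j i • a i = 0 := by
      refine dual_zero _ fun φ => ?_
      have h1 := hsum.hasSum.mapL φ
      have h2 := hq0 (fun i => φ (a i)) ((‖φ‖ * C) ^ 2) (fun F => coord_bd a C hC.le F (ha F) φ) (by
        intro y hy
        refine dual_zero _ fun ψ => ?_
        have h3 : Tendsto (fun s : Finset I => ∑ i ∈ s, ψ (φ (a i) • b i)) atTop (𝓝 (ψ y)) := hy.mapL ψ
        have h4 : Tendsto (fun m => ∑ i ∈ Fs m, ψ (φ (a i) • b i)) atTop (𝓝 (ψ y)) := h3.comp hFs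
        simp only [map_smul, smul_eq_mul] at h4
        exact tendsto_nhds_unique h4 (h0 φ ψ)) j
      simp only [map_smul, smul_eq_mul] at h1
      exact h1.unique h2
    exact hz ▸ hsum.hasSum
  obtain ⟨F0, hF0⟩ := htail ((r / (2 * C)) ^ 2) (by positivity)
  refine ⟨F0, fun F hF => ?_⟩
  have S2 : ∀ G : Finset I, ‖∑ j ∈ G, (∑ i ∈ F, q j i • a i) * star (∑ i ∈ F, q j i • a i)‖ ≤ (r / (2 * C)) ^ 2 := by
    intro G
    have h1 : ∀ j, Tendsto (fun F' : Finset I => ∑ i ∈ F' \ F, q j i • a i) atTop (𝓝 (- ∑ i ∈ F, q j i • a i)) := by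
      intro j
      have h2 : Tendsto (fun F' : Finset I => ∑ i ∈ F', q j i • a i - ∑ i ∈ F, q j i • a i) atTop (𝓝 (0 - ∑ i ∈ F, q j i • a i)) :=
        Tendsto.sub_const (S1 j) _
      rw [zero_sub] at h2
      refine h2.congr' ?_
      filter_upwards [eventually_ge_atTop F] with F' hF'
      rw [← Finset.sum_sdiff hF', add_sub_cancel_right]
    have h2 : Tendsto (fun F' : Finset I => ‖∑ j ∈ G, (∑ i ∈ F' \ F, q j i • a i) * star (∑ i ∈ F' \ F, q j i • a i)‖) atTop
        (𝓝 ‖∑ j ∈ G, (- ∑ i ∈ F, q j i • a i) * star (- ∑ i ∈ F, q j i • a i)‖) := by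
      refine Tendsto.norm (tendsto_finsetSum _ fun j _ => ?_)
      exact (h1 j).mul (h1 j).star
    simp only [star_neg, neg_mul_neg] at h2
    refine le_of_tendsto h2 (Eventually.of_forall fun F' => ?_)
    refine (fcontr q G (F' \ F) (hq G _) a).trans (hF0 _ ?_)
    exact Disjoint.mono_right hF Finset.sdiff_disjoint
  have S3 : ∃ G : Finset I, ‖∑ i ∈ F, star (b i - ∑ j ∈ G, q j i • b j) * (b i - ∑ j ∈ G, q j i • b j)‖ ≤ (r / (2 * C)) ^ 2 := by
    have h1 : ∀ i, Tendsto (fun G : Finset I => b i - ∑ j ∈ G, q j i • b j) atTop (𝓝 0) := by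
      intro i
      have : Tendsto (fun G : Finset I => b i - ∑ j ∈ G, q j i • b j) atTop (𝓝 (b i - b i)) := Tendsto.const_sub _ (hqb i)
      rwa [sub_self] at this
    have h2 : Tendsto (fun G : Finset I => ‖∑ i ∈ F, star (b i - ∑ j ∈ G, q j i • b j) * (b i - ∑ j ∈ G, q j i • b j)‖) atTop
        (𝓝 ‖∑ i ∈ F, star (0 : B) * 0‖) :=
      Tendsto.norm (tendsto_finsetSum _ fun i _ => (h1 i).star.mul (h1 i))
    simp only [mul_zero, Finset.sum_const_zero, norm_zero] at h2
    exact ((h2.eventually (gt_mem_nhds (show 0 < (r / (2 * C)) ^ 2 by positivity))).exists).imp fun _ h => le_of_lt h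
  obtain ⟨G, hG⟩ := S3
  have e : ∑ i ∈ F, a i ⊗ₜ[ℂ] b i = ∑ j ∈ G, (∑ i ∈ F, q j i • a i) ⊗ₜ[ℂ] b j +
      ∑ i ∈ F, a i ⊗ₜ[ℂ] (b i - ∑ j ∈ G, q j i • b j) := by
    simp only [TensorProduct.tmul_sub, Finset.sum_sub_distrib, TensorProduct.tmul_sum, TensorProduct.sum_tmul,
      TensorProduct.tmul_smul, TensorProduct.smul_tmul']
    rw [Finset.sum_comm]
    simp
  rw [e, ← add_halves r]
  refine HRep.add (half_pos hr) (half_pos hr) ?_ ?_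
  · exact HRep.of_finset G _ _ (r / (2 * C)) C _ (half_pos hr) (by positivity) hC.le (by field_simp; rfl) (S2 G) (hb G)
  · exact HRep.of_finset F _ _ C (r / (2 * C)) _ (half_pos hr) hC.le (by positivity) (by field_simp; rfl) (ha F) hG

lemma HTRep.of_comm {z : A ⊗[ℂ] B} {r : ℝ} (h : HRep (TensorProduct.comm ℂ A B z) r) : HTRep z r := by
  obtain ⟨n, b, a, h1, h2, h3⟩ := h
  refine ⟨n, a, b, ?_, h3, h2⟩
  have := congrArg (TensorProduct.comm ℂ A B).symm h1
  simpa using this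

theorem ht_lemma (a : I → A) (b : I → B) (C : ℝ) (hC : 0 < C)
    (ha : ∀ F : Finset I, ‖∑ i ∈ F, star (a i) * (a i)‖ ≤ C ^ 2)
    (hb : ∀ F : Finset I, ‖∑ i ∈ F, (b i) * star (b i)‖ ≤ C ^ 2)
    (htail : ∀ ε > 0, ∃ F0 : Finset I, ∀ F : Finset I, Disjoint F F0 → ‖∑ i ∈ F, b i * star (b i)‖ ≤ ε)
    (Fs : ℕ → Finset I) (hFs : Tendsto Fs atTop atTop)
    (h0 : ∀ (φ : A →L[ℂ] ℂ) (ψ : B →L[ℂ] ℂ), Tendsto (fun m => ∑ i ∈ Fs m, φ (a i) * ψ (b i)) atTop (𝓝 0))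
    (r : ℝ) (hr : 0 < r) : ∃ F0 : Finset I, ∀ F : Finset I, F0 ⊆ F → HTRep (∑ i ∈ F, a i ⊗ₜ[ℂ] b i) r := by
  obtain ⟨F0, h⟩ := h_lemma b a C hC hb ha htail Fs hFs (fun φ ψ => by simpa only [mul_comm] using h0 ψ φ) r hr
  refine ⟨F0, fun F hF => HTRep.of_comm ?_⟩
  simpa using h F hF
end h3



section z1
open Filter Topology
variable {A : Type*} [NonUnitalCStarAlgebra A]

lemma blk {n : ℕ → ℕ} (a : (Σ m, Fin (n m)) → A) (ρ : ℕ → ℝ) (hρ : ∀ m, ‖∑ k, a ⟨m, k⟩ * star (a ⟨m, k⟩)‖ ≤ ρ m)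
    (F : Finset (Σ m, Fin (n m))) : ‖∑ i ∈ F, a i * star (a i)‖ ≤ ∑ m ∈ F.image Sigma.fst, ρ m := by
  let _ := CStarAlgebra.spectralOrder A
  have _ := CStarAlgebra.spectralOrderedRing A
  have h1 : ∑ i ∈ F, a i * star (a i) ≤ ∑ i ∈ (F.image Sigma.fst).sigma (fun _ => Finset.univ), a i * star (a i) := by
    refine Finset.sum_le_sum_of_subset_of_nonneg ?_ fun i _ _ => mul_star_self_nonneg _
    intro i hi
    simp only [Finset.mem_sigma, Finset.mem_univ, and_true]
    exact Finset.mem_image_of_mem _ hi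
  refine (CStarAlgebra.norm_le_norm_of_nonneg_of_le (Finset.sum_nonneg fun i _ => mul_star_self_nonneg _) h1).trans ?_
  rw [Finset.sum_sigma]
  exact norm_sum_le_of_le _ fun m _ => hρ m

lemma blk' {n : ℕ → ℕ} (a : (Σ m, Fin (n m)) → A) (ρ : ℕ → ℝ) (hρ : ∀ m, ‖∑ k, star (a ⟨m, k⟩) * (a ⟨m, k⟩)‖ ≤ ρ m)
    (F : Finset (Σ m, Fin (n m))) : ‖∑ i ∈ F, star (a i) * (a i)‖ ≤ ∑ m ∈ F.image Sigma.fst, ρ m := by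
  have := blk (fun i => star (a i)) ρ (by simpa only [star_star] using hρ) F
  simpa only [star_star] using this

lemma blk_bd {n : ℕ → ℕ} (ρ : ℕ → ℝ) (hρ : Summable ρ) (hρ0 : ∀ m, 0 ≤ ρ m) (F : Finset (Σ m, Fin (n m))) :
    ∑ m ∈ F.image Sigma.fst, ρ m ≤ (∑' m, ρ m + 1) ^ 2 := by
  have h1 := hρ.sum_le_tsum (F.image Sigma.fst) fun i _ => hρ0 i
  have h2 : 0 ≤ ∑' m, ρ m := tsum_nonneg hρ0
  nlinarith

lemma blk_tail {n : ℕ → ℕ} (ρ : ℕ → ℝ) (hρ : Summable ρ) (hρ0 : ∀ m, 0 ≤ ρ m) (ε : ℝ) (hε : 0 < ε) :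
    ∃ F0 : Finset (Σ m, Fin (n m)), ∀ F : Finset (Σ m, Fin (n m)), Disjoint F F0 → ∑ m ∈ F.image Sigma.fst, ρ m ≤ ε := by
  obtain ⟨s, hs⟩ := summable_iff_vanishing_norm.1 hρ ε hε
  refine ⟨s.sigma fun _ => Finset.univ, fun F hF => ?_⟩
  refine (le_abs_self _).trans (hs _ ?_).le
  rw [Finset.disjoint_left]
  intro m hm hm'
  obtain ⟨i, hi, rfl⟩ := Finset.mem_image.1 hm
  exact Finset.disjoint_left.1 hF hi (by simpa using hm')

def Fseq (n : ℕ → ℕ) (m : ℕ) : Finset (Σ m, Fin (n m)) := (Finset.range m).sigma fun _ => Finset.univ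

lemma Fseq_tendsto (n : ℕ → ℕ) : Tendsto (Fseq n) atTop atTop := by
  refine tendsto_atTop_finset_of_monotone ?_ ?_
  · intro m m' h
    exact Finset.sigma_mono (Finset.range_mono h) fun _ => le_rfl
  · intro i
    exact ⟨i.1 + 1, by simp [Fseq]⟩
end z1

section z2
open Filter Topology
variable {A B : Type u} [NonUnitalCStarAlgebra A] [NonUnitalCStarAlgebra B]

lemma blocks_H (w : ℕ → A ⊗[ℂ] B) (ρ : ℕ → ℝ) (hρ : Summable ρ) (hρ0 : ∀ m, 0 ≤ ρ m) (hw : ∀ m, HRep (w m) (ρ m))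
    (h0 : ∀ (φ : A →L[ℂ] ℂ) (ψ : B →L[ℂ] ℂ), ∃ L : A ⊗[ℂ] B →ₗ[ℂ] ℂ, (∀ a b, L (a ⊗ₜ b) = φ a * ψ b) ∧
      Tendsto (fun m => L (∑ k ∈ Finset.range m, w k)) atTop (𝓝 0)) (r : ℝ) (hr : 0 < r) :
    ∀ᶠ m in atTop, HRep (∑ k ∈ Finset.range m, w k) r := by
  choose n a b e h1 h2 using hw
  have es : ∀ m, ∑ i ∈ Fseq n m, a i.1 i.2 ⊗ₜ[ℂ] b i.1 i.2 = ∑ k ∈ Finset.range m, w k := by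
    intro m
    rw [Fseq, Finset.sum_sigma]
    exact Finset.sum_congr rfl fun k _ => (e k).symm
  have hC : 0 < ∑' m, ρ m + 1 := by
    have h2 : 0 ≤ ∑' m, ρ m := tsum_nonneg hρ0
    linarith
  obtain ⟨F0, hF0⟩ := h_lemma (fun i : Σ m, Fin (n m) => a i.1 i.2) (fun i => b i.1 i.2) (∑' m, ρ m + 1) hC
    (fun F => (blk _ ρ h1 F).trans (blk_bd ρ hρ hρ0 F)) (fun F => (blk' _ ρ h2 F).trans (blk_bd ρ hρ hρ0 F))
    (fun ε hε => (blk_tail ρ hρ hρ0 ε hε).imp fun F0 h F hF => (blk _ ρ h1 F).trans (h F hF))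
    (Fseq n) (Fseq_tendsto n) (fun φ ψ => by
      obtain ⟨L, hL, hL0⟩ := h0 φ ψ
      refine hL0.congr fun m => ?_
      rw [← es, map_sum]
      simp only [hL]) r hr
  filter_upwards [(Fseq_tendsto n).eventually (eventually_ge_atTop F0)] with m hm
  rw [← es]
  exact hF0 _ hm

lemma blocks_HT (w : ℕ → A ⊗[ℂ] B) (ρ : ℕ → ℝ) (hρ : Summable ρ) (hρ0 : ∀ m, 0 ≤ ρ m) (hw : ∀ m, HTRep (w m) (ρ m))
    (h0 : ∀ (φ : A →L[ℂ] ℂ) (ψ : B →L[ℂ] ℂ), ∃ L : A ⊗[ℂ] B →ₗ[ℂ] ℂ, (∀ a b, L (a ⊗ₜ b) = φ a * ψ b) ∧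
      Tendsto (fun m => L (∑ k ∈ Finset.range m, w k)) atTop (𝓝 0)) (r : ℝ) (hr : 0 < r) :
    ∀ᶠ m in atTop, HTRep (∑ k ∈ Finset.range m, w k) r := by
  choose n a b e h1 h2 using hw
  have es : ∀ m, ∑ i ∈ Fseq n m, a i.1 i.2 ⊗ₜ[ℂ] b i.1 i.2 = ∑ k ∈ Finset.range m, w k := by
    intro m
    rw [Fseq, Finset.sum_sigma]
    exact Finset.sum_congr rfl fun k _ => (e k).symm
  have hC : 0 < ∑' m, ρ m + 1 := by
    have h2 : 0 ≤ ∑' m, ρ m := tsum_nonneg hρ0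
    linarith
  obtain ⟨F0, hF0⟩ := ht_lemma (fun i : Σ m, Fin (n m) => a i.1 i.2) (fun i => b i.1 i.2) (∑' m, ρ m + 1) hC
    (fun F => (blk' _ ρ h1 F).trans (blk_bd ρ hρ hρ0 F)) (fun F => (blk _ ρ h2 F).trans (blk_bd ρ hρ hρ0 F))
    (fun ε hε => (blk_tail ρ hρ hρ0 ε hε).imp fun F0 h F hF => (blk _ ρ h2 F).trans (h F hF))
    (Fseq n) (Fseq_tendsto n) (fun φ ψ => by
      obtain ⟨L, hL, hL0⟩ := h0 φ ψ
      refine hL0.congr fun m => ?_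
      rw [← es, map_sum]
      simp only [hL]) r hr
  filter_upwards [(Fseq_tendsto n).eventually (eventually_ge_atTop F0)] with m hm
  rw [← es]
  exact hF0 _ hm
end z2

theorem final {A B X : Type u} [NonUnitalCStarAlgebra A] [NonUnitalCStarAlgebra B]
    [NonUnitalNormedRing X] [StarRing X] [NormedSpace ℂ X] [CompleteSpace X]
    (NA : ∀ p : ℕ, Matrix (Fin p) (Fin p) A → ℝ)
    (NB : ∀ q : ℕ, Matrix (Fin q) (Fin q) B → ℝ)
    (hNA : ∀ p, IsCStarNorm (NA p)) (hNB : ∀ q, IsCStarNorm (NB q))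
    (ι : A ⊗[ℂ] B →ₗ[ℂ] X) (hX : IsTensorCompletion (osProjNorm NA NB) X ι)
    (R : (A →L[ℂ] ℂ) → X →L[ℂ] B)
    (hR : ∀ (φ : A →L[ℂ] ℂ) (a : A) (b : B), R φ (ι (a ⊗ₜ[ℂ] b)) = φ a • b)
    (x : X) (hx : ∀ φ : A →L[ℂ] ℂ, R φ x = 0) : x = 0 := by
  open Filter Topology in
  have hp : ∀ m : ℕ, ∃ y, dist x (ι y) < (1 / 2 : ℝ) ^ m := fun m => hX.dense.exists_dist_lt x (by positivity)
  choose y hy using hp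
  let y' : ℕ → A ⊗[ℂ] B := fun m => Nat.casesOn m 0 y
  have hy' : ∀ m, y' (m + 1) = y m := fun m => rfl
  let w : ℕ → A ⊗[ℂ] B := fun k => y' (k + 1) - y' k
  have hw : ∀ m, ∑ k ∈ Finset.range m, w k = y' m := fun m => by
    rw [Finset.sum_range_sub]
    exact sub_zero _
  have hlim : Tendsto (fun m => ι (y' m)) atTop (𝓝 x) := by
    rw [← tendsto_add_atTop_iff_nat 1, tendsto_iff_dist_tendsto_zero]
    refine squeeze_zero (fun _ => dist_nonneg) (fun m => ?_)
      (tendsto_pow_atTop_nhds_zero_of_lt_one (r := (1 / 2 : ℝ)) (by norm_num) (by norm_num))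
    rw [dist_comm]
    exact (hy m).le
  have hgeo : Summable fun k : ℕ => (1 / 2 : ℝ) ^ k := summable_geometric_two
  have hsw : Summable fun k => ‖ι (w k)‖ := by
    rw [← summable_nat_add_iff 1]
    refine Summable.of_nonneg_of_le (fun _ => norm_nonneg _) (fun k => ?_) (hgeo.mul_left 2)
    show ‖ι (y (k + 1) - y k)‖ ≤ _
    rw [map_sub, ← dist_eq_norm]
    have h1 := dist_triangle_left (ι (y (k + 1))) (ι (y k)) x
    have h2 := hy (k + 1)
    have h3 := hy k
    rw [pow_succ] at h2
    have : (0 : ℝ) < (1 / 2) ^ k := by positivity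
    linarith
  let ρ : ℕ → ℝ := fun k => ‖ι (w k)‖ + (1 / 2) ^ k
  have hρ : Summable ρ := hsw.add hgeo
  have hρ0 : ∀ k, 0 < ρ k := fun k => by positivity
  have hreps : ∀ k, HRep (w k) (ρ k) ∧ HTRep (w k) (ρ k) := fun k => by
    refine osProj_reps hNA hNB (w k) (ρ k) (hρ0 k) ?_
    rw [← hX.norm_eq]
    have : (0 : ℝ) < (1 / 2) ^ k := by positivity
    exact lt_add_of_pos_right _ this
  have h0 : ∀ (φ : A →L[ℂ] ℂ) (ψ : B →L[ℂ] ℂ), ∃ L : A ⊗[ℂ] B →ₗ[ℂ] ℂ, (∀ a b, L (a ⊗ₜ b) = φ a * ψ b) ∧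
      Tendsto (fun m => L (∑ k ∈ Finset.range m, w k)) atTop (𝓝 0) := by
    intro φ ψ
    refine ⟨(ψ.comp (R φ)).toLinearMap.comp ι, fun a b => ?_, ?_⟩
    · show ψ (R φ (ι (a ⊗ₜ b))) = _
      rw [hR, map_smul, smul_eq_mul]
    · simp only [hw]
      have := ((ψ.comp (R φ)).continuous.tendsto x).comp hlim
      have e : (ψ.comp (R φ)) x = 0 := by
        show ψ (R φ x) = 0
        rw [hx, map_zero]
      rw [e] at this
      exact this
  refine dual_zero x fun v => ?_
  have hv : Tendsto (fun m => ‖v (ι (y' m))‖) atTop (𝓝 ‖v x‖) := ((v.continuous.tendsto x).comp hlim).norm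
  have hr : ∀ r : ℝ, 0 < r → ‖v x‖ ≤ 80000 * ‖v‖ * r := by
    intro r hr
    refine le_of_tendsto hv ?_
    filter_upwards [blocks_H w ρ hρ (fun k => (hρ0 k).le) (fun k => (hreps k).1) h0 r hr,
      blocks_HT w ρ hρ (fun k => (hρ0 k).le) (fun k => (hreps k).2) h0 r hr] with m h1 h2
    rw [hw] at h1 h2
    exact functional_bd NA NB hNA hNB ι hX v (y' m) r hr h1 h2
  have hlim0 : Tendsto (fun r : ℝ => 80000 * ‖v‖ * r) (𝓝[>] 0) (𝓝 (80000 * ‖v‖ * 0)) :=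
    (tendsto_id.const_mul _).mono_left nhdsWithin_le_nhds
  rw [mul_zero] at hlim0
  have := ge_of_tendsto hlim0 (eventually_nhdsWithin_of_forall fun r hr' => hr r hr')
  exact norm_le_zero_iff.1 this

end SliceProof

/-- For C⋆-algebras `A`, `B`: if `x ∈ A ⊗̂ B` satisfies `R_φ x = 0` for
every `φ ∈ A*`, then `x = 0`; i.e. the right slice maps `{R_φ : φ ∈ A*}` are total on the
operator space projective tensor product `A ⊗̂ B`.  Here `X`, together with the dense
isometric embedding `ι` of the algebraic tensor product equipped with the `∧`-norm
(relative to the canonical matrix C⋆-norms `NA`, `NB`), realizes `A ⊗̂ B`, and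
`R φ` is the right slice map determined by `R_φ(a ⊗ b) = φ(a) b`. -/
theorem sliceMaps_total {A B X : Type u} [NonUnitalCStarAlgebra A] [NonUnitalCStarAlgebra B]
    [NonUnitalNormedRing X] [StarRing X] [NormedSpace ℂ X] [CompleteSpace X]
    [IsScalarTower ℂ X X] [SMulCommClass ℂ X X]
    (NA : ∀ p : ℕ, Matrix (Fin p) (Fin p) A → ℝ)
    (NB : ∀ q : ℕ, Matrix (Fin q) (Fin q) B → ℝ)
    (hNA : ∀ p, IsCStarNorm (NA p)) (hNB : ∀ q, IsCStarNorm (NB q))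
    (ι : A ⊗[ℂ] B →ₗ[ℂ] X) (hX : IsTensorCompletion (osProjNorm NA NB) X ι)
    (R : (A →L[ℂ] ℂ) → X →L[ℂ] B)
    (hR : ∀ (φ : A →L[ℂ] ℂ) (a : A) (b : B), R φ (ι (a ⊗ₜ[ℂ] b)) = φ a • b)
    (x : X) (hx : ∀ φ : A →L[ℂ] ℂ, R φ x = 0) : x = 0 := by
  exact SliceProof.final NA NB hNA hNB ι hX R hR x hx

end
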